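/- Let $N\ge 2$, let $\Omega\subset\mathbb{R}^N$ be a bounded domain (nonempty, open, connected) with smooth boundary, let $1<p<\infty$ and $1\le q<p_*$, where $p_*=p(N-1)/(N-p)$ if $p<N$ and $p_*=\infty$ if $p\ge N$. Let $\mathcal H^{N-1}$ be the $(N-1)$-dimensional Hausdorff measure. For an $\mathcal H^{N-1}$-measurable set $\Gamma\subset\partial\Omega$ let $\mathcal X_\Gamma$ be the set of all $u\in W^{1,p}(\Omega)\setminus W^{1,p}_0(\Omega)$ whose trace on $\partial\Omega$ vanishes $\mathcal H^{N-1}$-a.e. on $\Gamma$, and let $$S(\Gamma):=\inf_{u\in\mathcal X_\Gamma}\frac{\int_\Omega|\nabla u|^p+|u|^p\,dx}{\left(\int_{\partial\Omega}|u|^q\,d\mathcal H^{N-1}\right)^{p/q}}\in[0,\infty]\qquad(\inf\emptyset:=+\infty),$$ where the boundary integral is that of the trace of $u$. For $0<\alpha<1$ let $$\mathcal S(\alpha):=\inf\{S(\Gamma):\Gamma\subset\partial\Omega\ \mathcal H^{N-1}\text{-measurable},\ \mathcal H^{N-1}(\Gamma)=\alpha\,\mathcal H^{N-1}(\partial\Omega)\}.$$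 Assume that $\Omega$ satisfies the interior ball condition: for every $x\in\partial\Omega$ there is an open ball $B\subset\Omega$ with $x\in\partial B$. Then $\mathcal S$ is strictly increasing on $(0,1)$: if $0<\alpha<\beta<1$, then $\mathcal S(\alpha)<\mathcal S(\beta)$. -/

import Mathlib

open MeasureTheory Set Filter Metric Bornology
open scoped ENNReal Topology RealInnerProductSpace ContDiff

noncomputable section

/-- The surface measure `ℋ^{N-1}` on `∂Ω` (normalized as usual, so that `ℋ^{N-1}` is
Lebesgue measure on `ℝ^{N-1}`). -/
def bdryMeasure {N : ℕ} (Ω : Set (EuclideanSpace ℝ (Fin N))) :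
    Measure (EuclideanSpace ℝ (Fin N)) :=
  (μHE[N - 1]).restrict (frontier Ω)

/-- `g` is the weak gradient of `u` in `Ω`. -/
def IsWeakGradient {N : ℕ} (Ω : Set (EuclideanSpace ℝ (Fin N)))
    (u : EuclideanSpace ℝ (Fin N) → ℝ)
    (g : EuclideanSpace ℝ (Fin N) → EuclideanSpace ℝ (Fin N)) : Prop :=
  ∀ φ : EuclideanSpace ℝ (Fin N) → ℝ, ContDiff ℝ ∞ φ → HasCompactSupport φ → tsupport φ ⊆ Ω →
    ∀ v : EuclideanSpace ℝ (Fin N),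
      ∫ x in Ω, u x * fderiv ℝ φ x v = - ∫ x in Ω, φ x * ⟪g x, v⟫

/-- `u ∈ W^{1,p}(Ω)`, with weak gradient `g`. -/
structure MemW1p {N : ℕ} (Ω : Set (EuclideanSpace ℝ (Fin N))) (p : ℝ)
    (u : EuclideanSpace ℝ (Fin N) → ℝ)
    (g : EuclideanSpace ℝ (Fin N) → EuclideanSpace ℝ (Fin N)) : Prop where
  memLp : MemLp u (ENNReal.ofReal p) (volume.restrict Ω)
  memLp_grad : MemLp g (ENNReal.ofReal p) (volume.restrict Ω)
  isWeakGradient : IsWeakGradient Ω u g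

/-- The smooth functions `φ n` converge in `W^{1,p}(Ω)` to `u`, where `g` is the weak gradient
of `u`. -/
def TendstoW1p {N : ℕ} (Ω : Set (EuclideanSpace ℝ (Fin N))) (p : ℝ)
    (φ : ℕ → EuclideanSpace ℝ (Fin N) → ℝ) (u : EuclideanSpace ℝ (Fin N) → ℝ)
    (g : EuclideanSpace ℝ (Fin N) → EuclideanSpace ℝ (Fin N)) : Prop :=
  Tendsto (fun n => eLpNorm (fun x => φ n x - u x) (ENNReal.ofReal p) (volume.restrict Ω))
      atTop (𝓝 0) ∧
    Tendsto (fun n => eLpNorm (fun x => gradient (φ n) x - g x) (ENNReal.ofReal p)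
      (volume.restrict Ω)) atTop (𝓝 0)

/-- `u ∈ W^{1,p}_0(Ω)`, with weak gradient `g`: the closure of `C_c^∞(Ω)` in `W^{1,p}(Ω)`. -/
def MemW1p0 {N : ℕ} (Ω : Set (EuclideanSpace ℝ (Fin N))) (p : ℝ)
    (u : EuclideanSpace ℝ (Fin N) → ℝ)
    (g : EuclideanSpace ℝ (Fin N) → EuclideanSpace ℝ (Fin N)) : Prop :=
  MemW1p Ω p u g ∧ ∃ φ : ℕ → EuclideanSpace ℝ (Fin N) → ℝ,
    (∀ n, ContDiff ℝ ∞ (φ n) ∧ HasCompactSupport (φ n) ∧ tsupport (φ n) ⊆ Ω) ∧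
    TendstoW1p Ω p φ u g

/-- `τ` is the trace on `∂Ω` of `u ∈ W^{1,p}(Ω)`: the `L^p(∂Ω)`-limit of the restrictions to
`∂Ω` of functions smooth up to the boundary that converge to `u` in `W^{1,p}(Ω)`. -/
def IsTrace {N : ℕ} (Ω : Set (EuclideanSpace ℝ (Fin N))) (p : ℝ)
    (u : EuclideanSpace ℝ (Fin N) → ℝ)
    (g : EuclideanSpace ℝ (Fin N) → EuclideanSpace ℝ (Fin N))
    (τ : EuclideanSpace ℝ (Fin N) → ℝ) : Prop :=
  MemLp τ (ENNReal.ofReal p) (bdryMeasure Ω) ∧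
  ∃ φ : ℕ → EuclideanSpace ℝ (Fin N) → ℝ, (∀ n, ContDiff ℝ ∞ (φ n)) ∧ TendstoW1p Ω p φ u g ∧
    Tendsto (fun n => eLpNorm (fun x => φ n x - τ x) (ENNReal.ofReal p) (bdryMeasure Ω))
      atTop (𝓝 0)

/-- `(∫_Ω |∇u|^p + |u|^p dx) / (∫_{∂Ω} |u|^q dℋ^{N-1})^{p/q}`, where `g` is the weak gradient
and `τ` the trace of `u`. -/
def rayleighQuot {N : ℕ} (Ω : Set (EuclideanSpace ℝ (Fin N))) (p q : ℝ)
    (u : EuclideanSpace ℝ (Fin N) → ℝ)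
    (g : EuclideanSpace ℝ (Fin N) → EuclideanSpace ℝ (Fin N))
    (τ : EuclideanSpace ℝ (Fin N) → ℝ) : ℝ≥0∞ :=
  (∫⁻ x in Ω, (‖g x‖ₑ ^ p + ‖u x‖ₑ ^ p)) / (∫⁻ x, ‖τ x‖ₑ ^ q ∂(bdryMeasure Ω)) ^ (p / q)

/-- `u ∈ X_Γ`, with weak gradient `g` and trace `τ`. -/
structure MemAdmissible {N : ℕ} (Ω : Set (EuclideanSpace ℝ (Fin N))) (p : ℝ)
    (Γ : Set (EuclideanSpace ℝ (Fin N))) (u : EuclideanSpace ℝ (Fin N) → ℝ)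
    (g : EuclideanSpace ℝ (Fin N) → EuclideanSpace ℝ (Fin N))
    (τ : EuclideanSpace ℝ (Fin N) → ℝ) : Prop where
  memW1p : MemW1p Ω p u g
  notMemW1p0 : ¬ MemW1p0 Ω p u g
  isTrace : IsTrace Ω p u g τ
  trace_eq_zero : ∀ᵐ x ∂(bdryMeasure Ω), x ∈ Γ → τ x = 0

/-- `S(Γ)`, with values in `[0, ∞]`; it is `∞` if no admissible function vanishes on `Γ`. -/
def traceConst {N : ℕ} (Ω : Set (EuclideanSpace ℝ (Fin N))) (p q : ℝ)
    (Γ : Set (EuclideanSpace ℝ (Fin N))) : ℝ≥0∞ :=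
  sInf {r | ∃ u g τ, MemAdmissible Ω p Γ u g τ ∧ r = rayleighQuot Ω p q u g τ}

/-- `𝒮(α)`: the infimum of `S(Γ)` over the `ℋ^{N-1}`-measurable `Γ ⊆ ∂Ω` with
`ℋ^{N-1}(Γ) = α ℋ^{N-1}(∂Ω)`. -/
def optTraceConst {N : ℕ} (Ω : Set (EuclideanSpace ℝ (Fin N))) (p q α : ℝ) : ℝ≥0∞ :=
  sInf {r | ∃ Γ : Set (EuclideanSpace ℝ (Fin N)), Γ ⊆ frontier Ω ∧
    NullMeasurableSet Γ (bdryMeasure Ω) ∧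
    bdryMeasure Ω Γ = ENNReal.ofReal α * bdryMeasure Ω (frontier Ω) ∧ r = traceConst Ω p q Γ}

/-- `Ω` has smooth boundary: near each of its boundary points, `Ω` is a sublevel set `{f < 0}`
of a smooth function `f` with nonvanishing differential. -/
def HasSmoothBoundary {N : ℕ} (Ω : Set (EuclideanSpace ℝ (Fin N))) : Prop :=
  ∀ x ∈ frontier Ω, ∃ (U : Set (EuclideanSpace ℝ (Fin N))) (f : EuclideanSpace ℝ (Fin N) → ℝ),
    IsOpen U ∧ x ∈ U ∧ ContDiff ℝ ∞ f ∧ fderiv ℝ f x ≠ 0 ∧ ∀ y ∈ U, (y ∈ Ω ↔ f y < 0)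

/-- The interior ball condition. -/
def InteriorBallCond {N : ℕ} (Ω : Set (EuclideanSpace ℝ (Fin N))) : Prop :=
  ∀ x ∈ frontier Ω, ∃ (c : EuclideanSpace ℝ (Fin N)) (r : ℝ),
    0 < r ∧ ball c r ⊆ Ω ∧ x ∈ sphere c r

/-- `q < p_*`, where `p_* = p(N-1)/(N-p)` if `p < N` and `p_* = ∞` otherwise. -/
def SubcriticalTrace (N : ℕ) (p q : ℝ) : Prop :=
  p < N → q < p * (N - 1) / (N - p)

end

/-!
Suppose that `𝒮(β) ≤ 𝒮(α)` for some `α < β`. Let `u ≥ 0` almost minimize `𝒮(β)`, with trace `τ`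
vanishing on a set `Γ` of relative measure `β` and `∫ τ ^ q` close to `1`. Since `Γ` may lose the
relative measure `β - α`, the function `u + t * η * (u + ε) ^ (1 - p)` still competes for `𝒮(α)` if
the cutoff `η` lives near a boundary piece of small measure. Comparing energies bounds
`∫ |∇ log (u + ε)| ^ p` uniformly in `ε`. As `log (1 + τ / ε)` vanishes on `Γ`, a Poincaré
inequality bounds its `L¹` norm on the boundary, again uniformly in `ε`, so `τ` tends to `0` in
measure as `ε → 0`. Being bounded in `L^s` for some `s > q`, it tends to `0` in `L^q`, against the
normalization.
-/

open scoped NNReal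

section Segments

variable {E F : Type*} [NormedAddCommGroup E] [NormedSpace ℝ E] [NormedAddCommGroup F]
  [NormedSpace ℝ F] {φ : E → F}

lemma enorm_sub_le_lintegral_fderiv_segment (hφ : ContDiff ℝ 1 φ) (y w : E) {s : ℝ}
    (hs : 0 ≤ s) :
    ‖φ (y + s • w) - φ y‖ₑ ≤ ‖w‖ₑ * ∫⁻ t in Ioc 0 s, ‖fderiv ℝ φ (y + t • w)‖ₑ := by
  have hderiv (t : ℝ) :
      HasDerivAt (fun t : ℝ => φ (y + t • w)) (fderiv ℝ φ (y + t • w) w) t := by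
    have hline : HasDerivAt (fun t : ℝ => y + t • w) w t := by
      simpa using ((hasDerivAt_id t).smul_const w).const_add y
    exact (hφ.differentiable one_ne_zero _).hasFDerivAt.comp_hasDerivAt t hline
  have hcont : Continuous fun t : ℝ => fderiv ℝ φ (y + t • w) :=
    (hφ.continuous_fderiv one_ne_zero).comp (by fun_prop)
  have hline : ContDiff ℝ 1 fun t : ℝ => φ (y + t • w) := hφ.comp (by fun_prop)
  calc ‖φ (y + s • w) - φ y‖ₑ
      ≤ ∫⁻ t in Icc 0 s, ‖deriv (fun t : ℝ => φ (y + t • w)) t‖ₑ := by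
        simpa using enorm_sub_le_lintegral_deriv_of_contDiffOn_Icc hline.contDiffOn hs
    _ = ∫⁻ t in Ioc 0 s, ‖fderiv ℝ φ (y + t • w) w‖ₑ := by
        simp_rw [(hderiv _).deriv, setLIntegral_congr (Ioc_ae_eq_Icc (μ := volume))]
    _ ≤ ∫⁻ t in Ioc 0 s, ‖w‖ₑ * ‖fderiv ℝ φ (y + t • w)‖ₑ := by
        gcongr with t
        rw [mul_comm]
        exact ContinuousLinearMap.le_opENorm _ _
    _ = _ := lintegral_const_mul _ hcont.enorm.measurable

variable [MeasurableSpace E] [BorelSpace E] {μ : Measure E} [SFinite μ] [μ.IsAddRightInvariant]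

lemma lintegral_enorm_sub_translate_le (hφ : ContDiff ℝ 1 φ) {A Ω : Set E} {w : E}
    (hA : MeasurableSet A) (hΩ : MeasurableSet Ω)
    (h : ∀ y ∈ A, ∀ t ∈ Ioc (0 : ℝ) 1, y + t • w ∈ Ω) :
    ∫⁻ y in A, ‖φ (y + w) - φ y‖ₑ ∂μ ≤ ‖w‖ₑ * ∫⁻ x in Ω, ‖fderiv ℝ φ x‖ₑ ∂μ := by
  have := hφ.continuous_fderiv one_ne_zero
  calc ∫⁻ y in A, ‖φ (y + w) - φ y‖ₑ ∂μ
      ≤ ∫⁻ y in A, (‖w‖ₑ * ∫⁻ t in Ioc (0 : ℝ) 1, ‖fderiv ℝ φ (y + t • w)‖ₑ) ∂μ := by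
        gcongr with y
        simpa using enorm_sub_le_lintegral_fderiv_segment hφ y w zero_le_one
    _ = ‖w‖ₑ * ∫⁻ t in Ioc (0 : ℝ) 1, ∫⁻ y in A, ‖fderiv ℝ φ (y + t • w)‖ₑ ∂μ := by
        rw [lintegral_const_mul' _ _ enorm_ne_top, lintegral_lintegral_swap]
        exact Continuous.aemeasurable (by unfold Function.uncurry; fun_prop)
    _ ≤ ‖w‖ₑ * ∫⁻ _ in Ioc (0 : ℝ) 1, ∫⁻ x in Ω, ‖fderiv ℝ φ x‖ₑ ∂μ := by
        gcongr 1
        refine setLIntegral_mono' measurableSet_Ioc fun t ht => ?_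
        rw [← lintegral_indicator hA, ← lintegral_indicator hΩ,
          ← lintegral_add_right_eq_self (Ω.indicator _) (t • w)]
        gcongr with y
        by_cases hy : y ∈ A
        · simp only [hy, h y hy t ht, indicator_of_mem, le_refl]
        · simp only [hy, not_false_eq_true, indicator_of_notMem, zero_le]
    _ = _ := by simp

end Segments

lemma measure_univ_mul_lintegral_lintegral_le_of_triangle {X : Type*} [MeasurableSpace X]
    {a b c : Measure X} [SFinite b] [SFinite c] {d : X → X → ℝ≥0∞}
    (hd : Measurable (Function.uncurry d)) (htri : ∀ y w z, d y z ≤ d y w + d w z) :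
    b univ * ∫⁻ y, ∫⁻ z, d y z ∂c ∂a ≤
      c univ * (∫⁻ y, ∫⁻ w, d y w ∂b ∂a) + a univ * ∫⁻ w, ∫⁻ z, d w z ∂c ∂b := by
  have hac : Measurable fun y => ∫⁻ z, d y z ∂c := hd.lintegral_prod_right'
  have hab : Measurable fun y => ∫⁻ w, d y w ∂b := hd.lintegral_prod_right'
  calc b univ * ∫⁻ y, ∫⁻ z, d y z ∂c ∂a
      = ∫⁻ y, ∫⁻ z, ∫⁻ _, d y z ∂b ∂c ∂a := by
        simp_rw [lintegral_const, mul_comm _ (b univ),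
          lintegral_const_mul _ hd.of_uncurry_left]
        rw [lintegral_const_mul _ hac]
    _ ≤ ∫⁻ y, ∫⁻ z, (∫⁻ w, d y w ∂b + ∫⁻ w, d w z ∂b) ∂c ∂a := by
        gcongr with y z
        rw [← lintegral_add_left hd.of_uncurry_left]
        exact lintegral_mono fun w => htri y w z
    _ = ∫⁻ y, (c univ * ∫⁻ w, d y w ∂b + ∫⁻ w, ∫⁻ z, d w z ∂c ∂b) ∂a := by
        congr with y
        rw [lintegral_add_left measurable_const, lintegral_const, mul_comm,
          lintegral_lintegral_swap (f := d) hd.aemeasurable]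
    _ = _ := by
        rw [lintegral_add_right _ measurable_const, lintegral_const, mul_comm (a univ),
          lintegral_const_mul _ hab]

section Poincare

variable {E : Type*} [NormedAddCommGroup E] [NormedSpace ℝ E] [MeasurableSpace E]

/-- A Poincaré inequality in `L¹`: the mean oscillation of `C¹` functions between the measures `a`
and `b` is controlled by the `L¹(m)` norm of their derivative. With `m` Lebesgue measure on `Ω` and
`a`, `b` measures on balls or on `∂Ω`, this is how gradient bounds are carried between the interior
and the boundary. -/
def OscBound (m a b : Measure E) : Prop :=
  ∃ C : ℝ≥0, ∀ φ : E → ℝ, ContDiff ℝ 1 φ →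
    ∫⁻ y, ∫⁻ z, ‖φ y - φ z‖ₑ ∂b ∂a ≤ C * ∫⁻ x, ‖fderiv ℝ φ x‖ₑ ∂m

namespace OscBound

variable {m a b c : Measure E}

lemma mono (h : OscBound m a b) {m' a' b' : Measure E} (hm : m ≤ m') (ha : a' ≤ a) (hb : b' ≤ b) :
    OscBound m' a' b' := by
  obtain ⟨C, hC⟩ := h
  refine ⟨C, fun φ hφ => ?_⟩
  calc ∫⁻ y, ∫⁻ z, ‖φ y - φ z‖ₑ ∂b' ∂a' ≤ ∫⁻ y, ∫⁻ z, ‖φ y - φ z‖ₑ ∂b ∂a :=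
        lintegral_mono' ha fun _ => lintegral_mono' hb le_rfl
    _ ≤ C * ∫⁻ x, ‖fderiv ℝ φ x‖ₑ ∂m := hC φ hφ
    _ ≤ _ := by gcongr

lemma finset_sum {ι : Type*} {t : Finset ι} {a : ι → Measure E}
    (h : ∀ j ∈ t, OscBound m (a j) b) : OscBound m (∑ j ∈ t, a j) b := by
  choose! C hC using h
  refine ⟨∑ j ∈ t, C j, fun φ hφ => ?_⟩
  rw [lintegral_finsetSum_measure, ENNReal.ofNNReal_finsetSum, Finset.sum_mul]
  exact Finset.sum_le_sum fun j hj => hC j hj φ hφ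

variable [BorelSpace E] [FiniteDimensional ℝ E]

lemma measurable_uncurry_enorm_sub {φ : E → ℝ} (hφ : Continuous φ) :
    Measurable (Function.uncurry fun y z => ‖φ y - φ z‖ₑ) :=
  Continuous.measurable (by unfold Function.uncurry; fun_prop)

lemma symm [SFinite a] [SFinite b] (h : OscBound m a b) : OscBound m b a := by
  obtain ⟨C, hC⟩ := h
  refine ⟨C, fun φ hφ => ?_⟩
  rw [lintegral_lintegral_swap (measurable_uncurry_enorm_sub hφ.continuous).aemeasurable]
  simpa only [enorm_sub_rev] using hC φ hφ

lemma trans [IsFiniteMeasure a] [IsFiniteMeasure b] [NeZero b] [IsFiniteMeasure c]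
    (hab : OscBound m a b) (hbc : OscBound m b c) : OscBound m a c := by
  obtain ⟨C, hC⟩ := hab
  obtain ⟨D, hD⟩ := hbc
  have hb_ne_zero : b univ ≠ 0 := NeZero.ne _
  have hb_ne_top : b univ ≠ ⊤ := measure_ne_top _ _
  refine ⟨(c univ * C / b univ).toNNReal + (a univ * D / b univ).toNNReal, fun φ hφ => ?_⟩
  set G := ∫⁻ x, ‖fderiv ℝ φ x‖ₑ ∂m
  have key : b univ * ∫⁻ y, ∫⁻ z, ‖φ y - φ z‖ₑ ∂c ∂a ≤ c univ * (C * G) + a univ * (D * G) := by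
    refine (measure_univ_mul_lintegral_lintegral_le_of_triangle
      (measurable_uncurry_enorm_sub hφ.continuous) fun y w z => ?_).trans
      (add_le_add (mul_le_mul_right (hC φ hφ) _) (mul_le_mul_right (hD φ hφ) _))
    simpa only [sub_add_sub_cancel] using enorm_add_le (φ y - φ w) (φ w - φ z)
  push_cast
  rw [ENNReal.coe_toNNReal (ENNReal.div_ne_top (by finiteness) hb_ne_zero),
    ENNReal.coe_toNNReal (ENNReal.div_ne_top (by finiteness) hb_ne_zero)]
  rw [mul_comm, ← ENNReal.le_div_iff_mul_le (.inl hb_ne_zero) (.inl hb_ne_top)] at key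
  refine key.trans_eq ?_
  simp only [div_eq_mul_inv]
  ring

variable {μ : Measure E} [μ.IsAddHaarMeasure]

lemma setLIntegral_translate_le_of_convex {D : Set E} (hD : Convex ℝ D) (hDm : MeasurableSet D)
    {φ : E → ℝ} (hφ : ContDiff ℝ 1 φ) (w : E) :
    ∫⁻ y in D, D.indicator (fun z => ‖φ y - φ z‖ₑ) (y + w) ∂μ ≤
      ‖w‖ₑ * ∫⁻ x in D, ‖fderiv ℝ φ x‖ₑ ∂μ := by
  have hDw : MeasurableSet {y | y + w ∈ D} := measurable_add_const w hDm
  calc ∫⁻ y in D, D.indicator (fun z => ‖φ y - φ z‖ₑ) (y + w) ∂μ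
      = ∫⁻ y in {y | y + w ∈ D} ∩ D, ‖φ (y + w) - φ y‖ₑ ∂μ := by
        rw [← Measure.restrict_restrict hDw, ← lintegral_indicator hDw]
        refine lintegral_congr fun y => ?_
        by_cases hy : y + w ∈ D <;> simp [indicator, hy, enorm_sub_rev (φ y)]
    _ ≤ _ := by
        refine lintegral_enorm_sub_translate_le hφ (hDw.inter hDm) hDm ?_
        rintro y ⟨hyw, hy⟩ t ht
        convert hD hy hyw (sub_nonneg.2 ht.2) ht.1.le (sub_add_cancel 1 t) using 1
        module

-- Substitute `z = y + w` and integrate over `y` first, for fixed `w`.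
lemma of_convex {D : Set E} (hD : Convex ℝ D) (hDb : IsBounded D) (hDm : MeasurableSet D) :
    OscBound (μ.restrict D) (μ.restrict D) (μ.restrict D) := by
  set B := closedBall (0 : E) (diam D)
  have hB : μ B ≠ ⊤ := measure_closedBall_lt_top.ne
  refine ⟨(μ B * ENNReal.ofReal (diam D)).toNNReal, fun φ hφ => ?_⟩
  rw [ENNReal.coe_toNNReal (by finiteness)]
  set G := ∫⁻ x in D, ‖fderiv ℝ φ x‖ₑ ∂μ
  have hφc := hφ.continuous
  have hslice (w : E) : ∫⁻ y in D, D.indicator (fun z => ‖φ y - φ z‖ₑ) (y + w) ∂μ ≤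
      B.indicator (fun _ => ENNReal.ofReal (diam D) * G) w := by
    by_cases hw : w ∈ B
    · rw [indicator_of_mem hw]
      refine (setLIntegral_translate_le_of_convex hD hDm hφ w).trans ?_
      gcongr
      rw [← ofReal_norm]
      exact ENNReal.ofReal_le_ofReal (mem_closedBall_zero_iff.1 hw)
    · have hempty (y : E) (hy : y ∈ D) : y + w ∉ D := fun hyw => hw <| by
        simpa [B] using dist_le_diam_of_mem hDb hyw hy
      rw [setLIntegral_congr_fun hDm fun y hy => indicator_of_notMem (hempty y hy) _]
      simp
  calc ∫⁻ y in D, ∫⁻ z in D, ‖φ y - φ z‖ₑ ∂μ ∂μ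
      = ∫⁻ y in D, ∫⁻ w, D.indicator (fun z => ‖φ y - φ z‖ₑ) (y + w) ∂μ ∂μ := by
        simp_rw [← lintegral_indicator hDm, lintegral_add_left_eq_self (D.indicator _)]
    _ = ∫⁻ w, ∫⁻ y in D, D.indicator (fun z => ‖φ y - φ z‖ₑ) (y + w) ∂μ ∂μ := by
        rw [lintegral_lintegral_swap]
        have hset : MeasurableSet {q : E × E | q.1 + q.2 ∈ D} :=
          (measurable_fst.add measurable_snd) hDm
        have hfun : Measurable fun q : E × E => ‖φ q.1 - φ (q.1 + q.2)‖ₑ :=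
          Continuous.measurable (by fun_prop)
        exact (hfun.indicator hset).aemeasurable
    _ ≤ ∫⁻ w, B.indicator (fun _ => ENNReal.ofReal (diam D) * G) w ∂μ := lintegral_mono hslice
    _ = _ := by
        rw [lintegral_indicator_const measurableSet_closedBall]
        ring

variable {Ω : Set E} {x y : E} {r s : ℝ}

lemma of_concentric_balls (hr : ball x r ⊆ Ω) (hs : ball x s ⊆ Ω) :
    OscBound (μ.restrict Ω) (μ.restrict (ball x r)) (μ.restrict (ball x s)) := by
  have hmax : ball x (max r s) ⊆ Ω := by
    rcases le_total r s with h | h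
    · rwa [max_eq_right h]
    · rwa [max_eq_left h]
  exact (of_convex (convex_ball x (max r s)) isBounded_ball measurableSet_ball).mono
    (Measure.restrict_mono hmax le_rfl)
    (Measure.restrict_mono (ball_subset_ball (le_max_left _ _)) le_rfl)
    (Measure.restrict_mono (ball_subset_ball (le_max_right _ _)) le_rfl)

lemma trans_ball (hr : 0 < r) [IsFiniteMeasure a] [IsFiniteMeasure c]
    (hab : OscBound m a (μ.restrict (ball x r))) (hbc : OscBound m (μ.restrict (ball x r)) c) :
    OscBound m a c := by
  have : IsFiniteMeasure (μ.restrict (ball x r)) :=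
    isFiniteMeasure_restrict.2 measure_ball_lt_top.ne
  have : NeZero (μ.restrict (ball x r)) :=
    ⟨by simpa only [ne_eq, Measure.restrict_eq_zero] using (measure_ball_pos μ x hr).ne'⟩
  exact hab.trans hbc

lemma of_balls (hΩo : IsOpen Ω) (hΩc : IsPreconnected Ω) (hr : 0 < r) (hs : 0 < s)
    (hx : ball x r ⊆ Ω) (hy : ball y s ⊆ Ω) :
    OscBound (μ.restrict Ω) (μ.restrict (ball x r)) (μ.restrict (ball y s)) := by
  have hfin (x : E) (r : ℝ) : IsFiniteMeasure (μ.restrict (ball x r)) :=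
    isFiniteMeasure_restrict.2 measure_ball_lt_top.ne
  have hchain := hΩc.induction₂ (fun x y => ∃ r > 0, ∃ s > 0, ball x r ⊆ Ω ∧ ball y s ⊆ Ω ∧
      OscBound (μ.restrict Ω) (μ.restrict (ball x r)) (μ.restrict (ball y s)))
    (by
      intro x hx
      obtain ⟨r, hr, hrx⟩ := Metric.isOpen_iff.1 hΩo x hx
      filter_upwards [mem_nhdsWithin_of_mem_nhds (ball_mem_nhds x hr)] with y hy
      obtain ⟨s, hs, hsy⟩ := Metric.isOpen_iff.1 isOpen_ball y hy
      exact ⟨r, hr, s, hs, hrx, hsy.trans hrx, (of_concentric_balls hrx hrx).mono le_rfl le_rfl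
        (Measure.restrict_mono hsy le_rfl)⟩)
    (by
      rintro x y z - - - ⟨r, hr, s, hs, hxr, hys, h⟩ ⟨s', hs', t, ht, hys', hzt, h'⟩
      exact ⟨r, hr, t, ht, hxr, hzt,
        h.trans_ball hs ((of_concentric_balls hys hys').trans_ball hs' h')⟩)
    (by
      rintro x y - - ⟨r, hr, s, hs, hxr, hys, h⟩
      exact ⟨s, hs, r, hr, hys, hxr, h.symm⟩)
    (hx (mem_ball_self hr)) (hy (mem_ball_self hs))
  obtain ⟨r', hr', s', hs', hxr', hys', h⟩ := hchain
  exact (of_concentric_balls hx hxr').trans_ball hr'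
    (h.trans_ball hs' (of_concentric_balls hys' hy))

end OscBound

end Poincare


section Sweep

variable {E : Type*} [NormedAddCommGroup E] [NormedSpace ℝ E] [MeasurableSpace E]

/-- The measure `a`, moved in the direction `v` for the times in `S`, sweeps out at most `L` times
the measure `m`. Bounds of this kind transfer the values of a function on `∂Ω`, or on a thin layer
along `∂Ω`, to its values further inside. -/
def SweepBound (a : Measure E) (v : E) (S : Set ℝ) (m : Measure E) (L : ℝ≥0∞) : Prop :=
  ∀ Ψ : E → ℝ≥0∞, Measurable Ψ → ∫⁻ y, (∫⁻ s in S, Ψ (y + s • v)) ∂a ≤ L * ∫⁻ z, Ψ z ∂m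

variable {a b m : Measure E} {v : E} {S : Set ℝ} {L L' : ℝ≥0∞} {h H : ℝ}

lemma SweepBound.measure_univ_lt_top [IsFiniteMeasure m] (hm : SweepBound a v S m L) (hL : L ≠ ⊤)
    (hS : volume S ≠ 0) : a univ < ⊤ := by
  have hle : volume S * a univ ≤ L * m univ := by
    simpa using hm (fun _ => 1) measurable_const
  exact ENNReal.lt_top_of_mul_ne_top_right (hle.trans_lt (by finiteness)).ne hS

lemma SweepBound.restrict (hm : SweepBound a v univ m L) {A : Set E} (hA : MeasurableSet A)
    (hS : MeasurableSet S) (hAS : ∀ᵐ y ∂a, ∀ s ∈ S, y + s • v ∈ A) :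
    SweepBound a v S (m.restrict A) L := by
  intro Ψ hΨ
  calc ∫⁻ y, (∫⁻ s in S, Ψ (y + s • v)) ∂a
      ≤ ∫⁻ y, (∫⁻ s in univ, A.indicator Ψ (y + s • v)) ∂a := by
        refine lintegral_mono_ae (hAS.mono fun y hy => ?_)
        rw [setLIntegral_univ, ← lintegral_indicator hS]
        gcongr with s
        by_cases hs : s ∈ S
        · simp only [hs, hy s hs, indicator_of_mem, le_refl]
        · simp only [hs, not_false_eq_true, indicator_of_notMem, zero_le]
    _ ≤ L * ∫⁻ z, A.indicator Ψ z ∂m := hm _ (hΨ.indicator hA)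
    _ = _ := by rw [lintegral_indicator hA]

variable [BorelSpace E]

lemma SweepBound.of_volume_le {μ : Measure E} [SFinite μ] [μ.IsAddRightInvariant] {A : Set E}
    (hA : MeasurableSet A) (hL : ∀ w, volume {s : ℝ | w - s • v ∈ A} ≤ L) :
    SweepBound (μ.restrict A) v univ μ L := by
  intro Ψ hΨ
  have hslice (w : E) : MeasurableSet {s : ℝ | w - s • v ∈ A} :=
    hA.preimage (Continuous.measurable (by fun_prop))
  calc ∫⁻ y in A, (∫⁻ s in univ, Ψ (y + s • v)) ∂μ
      = ∫⁻ s, (∫⁻ y in A, Ψ (y + s • v) ∂μ) := by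
        simp only [setLIntegral_univ]
        exact lintegral_lintegral_swap (hΨ.comp (Continuous.measurable (by fun_prop))).aemeasurable
    _ = ∫⁻ s, (∫⁻ w, A.indicator 1 (w - s • v) * Ψ w ∂μ) := by
        refine lintegral_congr fun s => ?_
        rw [← lintegral_indicator hA,
          ← lintegral_add_right_eq_self (fun w => A.indicator 1 (w - s • v) * Ψ w) (s • v)]
        congr with y
        by_cases hy : y ∈ A <;> simp [hy]
    _ = ∫⁻ w, (∫⁻ s, A.indicator 1 (w - s • v) * Ψ w) ∂μ :=
        lintegral_lintegral_swap (((measurable_one.indicator hA).comp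
          (Continuous.measurable (by fun_prop))).mul (hΨ.comp measurable_snd)).aemeasurable
    _ = ∫⁻ w, volume {s : ℝ | w - s • v ∈ A} * Ψ w ∂μ := by
        refine lintegral_congr fun w => ?_
        rw [← lintegral_indicator_one (hslice w), ← lintegral_mul_const _
          (measurable_one.indicator (hslice w))]
        rfl
    _ ≤ _ := by
        rw [← lintegral_const_mul _ hΨ]
        gcongr with w
        exact hL w

lemma SweepBound.mul_lintegral_enorm_le (hb : SweepBound a v (Ioc h H) b L')
    (hm : SweepBound a v (Ioc 0 H) m L) (h0 : 0 ≤ h) {φ : E → ℝ} (hφ : ContDiff ℝ 1 φ) :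
    ENNReal.ofReal (H - h) * ∫⁻ y, ‖φ y‖ₑ ∂a ≤ L' * ∫⁻ z, ‖φ z‖ₑ ∂b +
      ENNReal.ofReal (H - h) * (‖v‖ₑ * (L * ∫⁻ z, ‖fderiv ℝ φ z‖ₑ ∂m)) := by
  have hφc := hφ.continuous
  have hφm : Measurable fun y => ∫⁻ s in Ioc h H, ‖φ (y + s • v)‖ₑ :=
    Measurable.lintegral_prod_right' (f := fun q : E × ℝ => ‖φ (q.1 + q.2 • v)‖ₑ)
      (Continuous.measurable (by fun_prop))
  have hpoint (y : E) : ENNReal.ofReal (H - h) * ‖φ y‖ₑ ≤ (∫⁻ s in Ioc h H, ‖φ (y + s • v)‖ₑ) +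
      ENNReal.ofReal (H - h) * (‖v‖ₑ * ∫⁻ t in Ioc 0 H, ‖fderiv ℝ φ (y + t • v)‖ₑ) := by
    rw [← Real.volume_Ioc, mul_comm, ← setLIntegral_const, mul_comm, ← setLIntegral_const,
      ← lintegral_add_right _ measurable_const]
    refine setLIntegral_mono' measurableSet_Ioc fun s hs => ?_
    calc ‖φ y‖ₑ = ‖φ (y + s • v) - (φ (y + s • v) - φ y)‖ₑ := by rw [sub_sub_cancel]
      _ ≤ ‖φ (y + s • v)‖ₑ + ‖φ (y + s • v) - φ y‖ₑ := enorm_sub_le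
      _ ≤ _ := by
        gcongr
        refine (enorm_sub_le_lintegral_fderiv_segment hφ y v (h0.trans hs.1.le)).trans ?_
        gcongr
        exact hs.2
  calc ENNReal.ofReal (H - h) * ∫⁻ y, ‖φ y‖ₑ ∂a
      ≤ ∫⁻ y, ((∫⁻ s in Ioc h H, ‖φ (y + s • v)‖ₑ) + ENNReal.ofReal (H - h) *
          (‖v‖ₑ * ∫⁻ t in Ioc 0 H, ‖fderiv ℝ φ (y + t • v)‖ₑ)) ∂a := by
        rw [← lintegral_const_mul' _ _ ENNReal.ofReal_ne_top]
        exact lintegral_mono hpoint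
    _ = (∫⁻ y, (∫⁻ s in Ioc h H, ‖φ (y + s • v)‖ₑ) ∂a) + ENNReal.ofReal (H - h) *
          (‖v‖ₑ * ∫⁻ y, (∫⁻ t in Ioc 0 H, ‖fderiv ℝ φ (y + t • v)‖ₑ) ∂a) := by
        rw [lintegral_add_left hφm, lintegral_const_mul' _ _ ENNReal.ofReal_ne_top,
          lintegral_const_mul' _ _ enorm_ne_top]
    _ ≤ _ := by
        gcongr
        · exact hb _ hφc.enorm.measurable
        · exact hm _ (hφ.continuous_fderiv one_ne_zero).enorm.measurable

lemma OscBound.of_sweepBound [FiniteDimensional ℝ E] [IsFiniteMeasure b] (hbb : OscBound m b b)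
    (hb : SweepBound a v (Ioc h H) b L') (hm : SweepBound a v (Ioc 0 H) m L) (hL' : L' ≠ ⊤)
    (hL : L ≠ ⊤) (h0 : 0 ≤ h) (hH : h < H) : OscBound m a b := by
  have hlen : ENNReal.ofReal (H - h) ≠ 0 := by simpa using hH
  have : IsFiniteMeasure a :=
    ⟨hb.measure_univ_lt_top hL' (by rwa [Real.volume_Ioc])⟩
  refine OscBound.symm ?_
  obtain ⟨C, hC⟩ := hbb
  refine ⟨((L' * C + ENNReal.ofReal (H - h) * (‖v‖ₑ * L) * b univ) /
    ENNReal.ofReal (H - h)).toNNReal, fun φ hφ => ?_⟩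
  rw [ENNReal.coe_toNNReal (ENNReal.div_ne_top (by finiteness) hlen)]
  set G := ∫⁻ x, ‖fderiv ℝ φ x‖ₑ ∂m
  have hshift (z : E) : ENNReal.ofReal (H - h) * ∫⁻ y, ‖φ z - φ y‖ₑ ∂a ≤
      L' * ∫⁻ y, ‖φ z - φ y‖ₑ ∂b + ENNReal.ofReal (H - h) * (‖v‖ₑ * (L * G)) := by
    simpa only [enorm_sub_rev (φ z), fderiv_sub_const] using
      hb.mul_lintegral_enorm_le hm h0 (hφ.sub (contDiff_const (c := φ z)))
  have key : ENNReal.ofReal (H - h) * ∫⁻ z, ∫⁻ y, ‖φ z - φ y‖ₑ ∂a ∂b ≤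
      L' * (C * G) + ENNReal.ofReal (H - h) * (‖v‖ₑ * (L * G)) * b univ := by
    rw [← lintegral_const_mul' _ _ ENNReal.ofReal_ne_top]
    refine (lintegral_mono hshift).trans ?_
    rw [lintegral_add_right _ measurable_const, lintegral_const, lintegral_const_mul' _ _ hL']
    gcongr
    exact hC φ hφ
  rw [mul_comm, ← ENNReal.le_div_iff_mul_le (.inl hlen) (.inl ENNReal.ofReal_ne_top)] at key
  refine key.trans_eq ?_
  simp only [div_eq_mul_inv]
  ring

end Sweep

section Chart

variable {N : ℕ} {Ω : Set (EuclideanSpace ℝ (Fin N))}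

/-- `Ω` has `C¹` boundary: near each of its boundary points, `Ω` is a sublevel set `{f < 0}` of a
`C¹` function `f` with nonvanishing differential. -/
def HasC1Boundary (Ω : Set (EuclideanSpace ℝ (Fin N))) : Prop :=
  ∀ x ∈ frontier Ω, ∃ (U : Set (EuclideanSpace ℝ (Fin N))) (f : EuclideanSpace ℝ (Fin N) → ℝ),
    IsOpen U ∧ x ∈ U ∧ ContDiff ℝ 1 f ∧ fderiv ℝ f x ≠ 0 ∧ ∀ y ∈ U, (y ∈ Ω ↔ f y < 0)

lemma HasSmoothBoundary.hasC1Boundary (h : HasSmoothBoundary Ω) : HasC1Boundary Ω := by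
  intro x hx
  obtain ⟨U, f, hU, hxU, hf, hdf, hmem⟩ := h x hx
  exact ⟨U, f, hU, hxU, hf.of_le (by simp), hdf, hmem⟩

/-- A boundary chart: in the ball of radius `R` about `x`, the set `Ω` is the sublevel set
`{f < 0}`, and `f` decreases at rate at least `c` in the coordinate direction `σ eᵢ`, `σ = ±1`,
which therefore points into `Ω`. Using a coordinate direction makes Fubini's theorem directly
applicable along the lines in this direction. -/
structure IsBdryChart (Ω : Set (EuclideanSpace ℝ (Fin N))) (x : EuclideanSpace ℝ (Fin N))
    (R : ℝ) (f : EuclideanSpace ℝ (Fin N) → ℝ) (i : Fin N) (σ c M : ℝ) : Prop where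
  R_pos : 0 < R
  c_pos : 0 < c
  abs_sigma : |σ| = 1
  contDiff : ContDiff ℝ 1 f
  mem_iff : ∀ y ∈ ball x R, (y ∈ Ω ↔ f y < 0)
  fderiv_le : ∀ y ∈ ball x R, fderiv ℝ f y (EuclideanSpace.single i σ) ≤ -c
  norm_fderiv_le : ∀ y ∈ ball x R, ‖fderiv ℝ f y‖ ≤ M

lemma exists_single_apply_neg {ℓ : EuclideanSpace ℝ (Fin N) →L[ℝ] ℝ} (hℓ : ℓ ≠ 0) :
    ∃ (i : Fin N) (σ : ℝ), |σ| = 1 ∧ ℓ (EuclideanSpace.single i σ) < 0 := by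
  obtain ⟨i, hi⟩ : ∃ i, ℓ (EuclideanSpace.single i 1) ≠ 0 := by
    by_contra! h
    refine hℓ (ContinuousLinearMap.coe_injective ?_)
    exact (EuclideanSpace.basisFun (Fin N) ℝ).toBasis.ext fun i => by simpa using h i
  rcases lt_or_gt_of_ne hi with h | h
  · exact ⟨i, 1, abs_one, h⟩
  · refine ⟨i, -1, by simp, ?_⟩
    have hneg : EuclideanSpace.single i (-1 : ℝ) = -EuclideanSpace.single i 1 := by
      ext j
      by_cases hj : j = i <;> simp [hj]
    rwa [hneg, map_neg, neg_lt_zero]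

lemma HasC1Boundary.exists_isBdryChart (hΩ : HasC1Boundary Ω) {x : EuclideanSpace ℝ (Fin N)}
    (hx : x ∈ frontier Ω) : ∃ R f i σ c M, IsBdryChart Ω x R f i σ c M := by
  obtain ⟨U, f, hU, hxU, hf, hdf, hmem⟩ := hΩ x hx
  obtain ⟨i, σ, hσ, hneg⟩ := exists_single_apply_neg hdf
  have hcont : Continuous (fderiv ℝ f) := hf.continuous_fderiv one_ne_zero
  have hle : ∀ᶠ y in 𝓝 x, fderiv ℝ f y (EuclideanSpace.single i σ) <
      fderiv ℝ f x (EuclideanSpace.single i σ) / 2 :=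
    (show Continuous fun y => fderiv ℝ f y (EuclideanSpace.single i σ) by fun_prop)
      |>.continuousAt.eventually (gt_mem_nhds (by linarith))
  have hnorm : ∀ᶠ y in 𝓝 x, ‖fderiv ℝ f y‖ < ‖fderiv ℝ f x‖ + 1 :=
    hcont.norm.continuousAt.eventually (gt_mem_nhds (lt_add_one _))
  obtain ⟨R, hR, hball⟩ :=
    Metric.eventually_nhds_iff_ball.1 (hle.and (hnorm.and (hU.mem_nhds hxU)))
  refine ⟨R, f, i, σ, -(fderiv ℝ f x (EuclideanSpace.single i σ) / 2), ‖fderiv ℝ f x‖ + 1, hR,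
    by linarith, hσ, hf, fun y hy => hmem y (hball y hy).2.2, fun y hy => ?_,
    fun y hy => (hball y hy).2.1.le⟩
  rw [neg_neg]
  exact (hball y hy).1.le

namespace IsBdryChart

variable {x y : EuclideanSpace ℝ (Fin N)} {R : ℝ} {f : EuclideanSpace ℝ (Fin N) → ℝ} {i : Fin N}
  {σ c M : ℝ}

lemma exists_sub_eq_fderiv (h : IsBdryChart Ω x R f i σ c M) {z : EuclideanSpace ℝ (Fin N)}
    (hy : y ∈ ball x R) (hz : z ∈ ball x R) :
    ∃ w ∈ ball x R, f z - f y = fderiv ℝ f w (z - y) := by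
  obtain ⟨w, hw, hmvt⟩ := domain_mvt (s := ball x R) (f := f) (f' := fderiv ℝ f)
    (fun w _ => (h.contDiff.differentiable one_ne_zero w).hasFDerivAt.hasFDerivWithinAt)
    (convex_ball x R) hy hz
  exact ⟨w, (convex_ball x R).segment_subset hy hz hw, hmvt⟩

lemma apply_add_le (h : IsBdryChart Ω x R f i σ c M) {s : ℝ} (hy : y ∈ ball x R) (hs : 0 ≤ s)
    (hys : y + s • EuclideanSpace.single i σ ∈ ball x R) :
    f (y + s • EuclideanSpace.single i σ) ≤ f y - c * s := by
  obtain ⟨w, hw, hmvt⟩ := h.exists_sub_eq_fderiv hy hys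
  rw [add_sub_cancel_left, map_smul, smul_eq_mul] at hmvt
  nlinarith [h.fderiv_le w hw]

lemma nonpos_of_mem_closure (h : IsBdryChart Ω x R f i σ c M) (hy : y ∈ ball x R)
    (hyΩ : y ∈ closure Ω) : f y ≤ 0 := by
  have hsub : closure (ball x R ∩ Ω) ⊆ {z | f z ≤ 0} :=
    closure_minimal (fun z hz => ((h.mem_iff z hz.1).1 hz.2).le)
      (isClosed_le h.contDiff.continuous continuous_const)
  exact hsub (isOpen_ball.inter_closure ⟨hy, hyΩ⟩)

lemma eq_zero_of_mem_frontier (h : IsBdryChart Ω x R f i σ c M) (hΩ : IsOpen Ω)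
    (hy : y ∈ ball x R) (hyΩ : y ∈ frontier Ω) : f y = 0 := by
  refine le_antisymm (h.nonpos_of_mem_closure hy hyΩ.1) (not_lt.1 fun hlt => ?_)
  rw [hΩ.frontier_eq] at hyΩ
  exact hyΩ.2 ((h.mem_iff y hy).2 hlt)

lemma add_mem (h : IsBdryChart Ω x R f i σ c M) {s : ℝ} (hy : y ∈ ball x R)
    (hyΩ : y ∈ closure Ω) (hs : 0 < s) (hys : y + s • EuclideanSpace.single i σ ∈ ball x R) :
    y + s • EuclideanSpace.single i σ ∈ Ω := by
  rw [h.mem_iff _ hys]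
  have := h.apply_add_le hy hs.le hys
  have := h.nonpos_of_mem_closure hy hyΩ
  nlinarith [h.c_pos]

lemma norm_single (h : IsBdryChart Ω x R f i σ c M) :
    ‖(EuclideanSpace.single i σ : EuclideanSpace ℝ (Fin N))‖ = 1 := by
  rw [PiLp.norm_single, Real.norm_eq_abs, h.abs_sigma]

lemma add_mem_of_mem_ball (h : IsBdryChart Ω x R f i σ c M) {r s : ℝ} (hy : y ∈ ball x r)
    (hyΩ : y ∈ closure Ω) (hs : 0 < s) (hrs : r + s ≤ R) :
    y + s • EuclideanSpace.single i σ ∈ Ω := by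
  refine h.add_mem (ball_subset_ball (by linarith) hy) hyΩ hs ?_
  have hshift := norm_smul_le s (EuclideanSpace.single i σ : EuclideanSpace ℝ (Fin N))
  rw [h.norm_single, mul_one, Real.norm_of_nonneg hs.le] at hshift
  rw [mem_ball_iff_norm] at hy ⊢
  calc ‖y + s • EuclideanSpace.single i σ - x‖ = ‖(y - x) + s • EuclideanSpace.single i σ‖ := by
        rw [add_sub_right_comm]
    _ ≤ ‖y - x‖ + ‖s • EuclideanSpace.single i σ‖ := norm_add_le _ _
    _ < R := by linarith

end IsBdryChart

end Chart

section Coordinates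

variable {n : ℕ}

/-- The projection of `ℝ^{n+1}` to `ℝ^n` that drops the `i`-th coordinate. -/
noncomputable def dropCoord (i : Fin (n + 1)) :
    EuclideanSpace ℝ (Fin (n + 1)) →L[ℝ] EuclideanSpace ℝ (Fin n) :=
  LinearMap.toContinuousLinearMap
    { toFun := fun x => WithLp.toLp 2 fun j => x (i.succAbove j)
      map_add' := fun _ _ => rfl
      map_smul' := fun _ _ => rfl }

/-- The point of `ℝ^{n+1}` with `i`-th coordinate `t` that projects to `x'` under `dropCoord i`. -/
def insertCoord (i : Fin (n + 1)) (t : ℝ) (x' : EuclideanSpace ℝ (Fin n)) :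
    EuclideanSpace ℝ (Fin (n + 1)) :=
  WithLp.toLp 2 (i.insertNth t (WithLp.ofLp x'))

@[simp]
lemma dropCoord_apply (i : Fin (n + 1)) (x : EuclideanSpace ℝ (Fin (n + 1))) (j : Fin n) :
    dropCoord i x j = x (i.succAbove j) := rfl

lemma norm_sq_eq_dropCoord (i : Fin (n + 1)) (x : EuclideanSpace ℝ (Fin (n + 1))) :
    ‖x‖ ^ 2 = x i ^ 2 + ‖dropCoord i x‖ ^ 2 := by
  simp [EuclideanSpace.norm_sq_eq, Fin.sum_univ_succAbove _ i]

lemma lipschitzWith_dropCoord (i : Fin (n + 1)) : LipschitzWith 1 (dropCoord i) := by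
  refine AddMonoidHomClass.lipschitz_of_bound_nnnorm (dropCoord i) 1 fun x => ?_
  rw [one_mul, ← NNReal.coe_le_coe, coe_nnnorm, coe_nnnorm,
    ← sq_le_sq₀ (norm_nonneg _) (norm_nonneg _), norm_sq_eq_dropCoord i x]
  exact le_add_of_nonneg_left (sq_nonneg _)

lemma exists_eq_add_smul_single {i : Fin (n + 1)} {σ : ℝ} (hσ : |σ| = 1)
    (v : EuclideanSpace ℝ (Fin (n + 1))) :
    ∃ (u : EuclideanSpace ℝ (Fin (n + 1))) (d : ℝ),
      v = u + d • EuclideanSpace.single i σ ∧ ‖u‖ = ‖dropCoord i v‖ := by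
  have hσσ : σ * σ = 1 := by rw [← abs_mul_abs_self, hσ, one_mul]
  set u := v - (v i * σ) • EuclideanSpace.single i σ with hu
  have hui : u i = 0 := by simp [hu, mul_assoc, hσσ]
  have hdrop : dropCoord i u = dropCoord i v := by
    ext j
    simp [hu]
  refine ⟨u, v i * σ, (sub_add_cancel _ _).symm, ?_⟩
  have := norm_sq_eq_dropCoord i u
  rw [hui, hdrop] at this
  exact (sq_eq_sq₀ (norm_nonneg _) (norm_nonneg _)).1 (by linarith)

lemma measurable_insertCoord (i : Fin (n + 1)) :
    Measurable fun q : EuclideanSpace ℝ (Fin n) × ℝ => insertCoord i q.2 q.1 :=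
  (WithLp.measurable_toLp 2 _).comp
    ((MeasurableEquiv.piFinSuccAbove (fun _ : Fin (n + 1) => ℝ) i).symm.measurable.comp
      (measurable_snd.prodMk ((WithLp.measurable_ofLp 2 _).comp measurable_fst)))

lemma lintegral_lintegral_insertCoord (i : Fin (n + 1))
    {ψ : EuclideanSpace ℝ (Fin (n + 1)) → ℝ≥0∞} (hψ : Measurable ψ) :
    ∫⁻ x' : EuclideanSpace ℝ (Fin n), ∫⁻ t : ℝ, ψ (insertCoord i t x') = ∫⁻ x, ψ x := by
  have hins : Measurable fun q : ℝ × (Fin n → ℝ) =>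
      ψ (WithLp.toLp 2 (i.insertNth (α := fun _ => ℝ) q.1 q.2)) :=
    hψ.comp ((WithLp.measurable_toLp 2 _).comp
      (MeasurableEquiv.piFinSuccAbove (fun _ : Fin (n + 1) => ℝ) i).symm.measurable)
  calc _ = ∫⁻ y : Fin n → ℝ, ∫⁻ t : ℝ, ψ (WithLp.toLp 2 (i.insertNth (α := fun _ => ℝ) t y)) :=
        (PiLp.volume_preserving_ofLp (Fin n)).lintegral_comp hins.lintegral_prod_left'
    _ = ∫⁻ q : ℝ × (Fin n → ℝ), ψ (WithLp.toLp 2 (i.insertNth (α := fun _ => ℝ) q.1 q.2)) :=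
        (lintegral_prod_symm _ hins.aemeasurable).symm
    _ = ∫⁻ y : Fin (n + 1) → ℝ, ψ (WithLp.toLp 2 y) :=
        (volume_preserving_piFinSuccAbove (fun _ : Fin (n + 1) => ℝ) i).symm.lintegral_comp
          (hψ.comp (WithLp.measurable_toLp 2 _))
    _ = _ := (PiLp.volume_preserving_toLp (Fin (n + 1))).lintegral_comp hψ

lemma add_smul_single_eq_insertCoord (y : EuclideanSpace ℝ (Fin (n + 1))) (i : Fin (n + 1))
    (s σ : ℝ) :
    y + s • EuclideanSpace.single i σ = insertCoord i (s * σ + y i) (dropCoord i y) := by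
  ext j
  rcases Fin.eq_self_or_eq_succAbove i j with rfl | ⟨k, rfl⟩
  · simp [insertCoord, add_comm]
  · simp [insertCoord]

lemma lintegral_line_eq_lintegral_insertCoord {i : Fin (n + 1)} {σ : ℝ} (hσ : |σ| = 1)
    (ψ : EuclideanSpace ℝ (Fin (n + 1)) → ℝ≥0∞) (y : EuclideanSpace ℝ (Fin (n + 1))) :
    ∫⁻ s : ℝ, ψ (y + s • EuclideanSpace.single i σ) =
      ∫⁻ t : ℝ, ψ (insertCoord i t (dropCoord i y)) := by
  simp_rw [add_smul_single_eq_insertCoord]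
  rw [← lintegral_add_right_eq_self (fun t => ψ (insertCoord i t (dropCoord i y))) (y i)]
  rcases abs_eq (zero_le_one' ℝ) |>.1 hσ with rfl | rfl
  · simp only [mul_one]
  · rw [← lintegral_neg_eq_self]
    simp only [mul_neg, mul_one, neg_neg]

end Coordinates

lemma abs_le_of_apply_add_smul_eq_zero {E : Type*} [SeminormedAddCommGroup E] [NormedSpace ℝ E]
    {ℓ : E →L[ℝ] ℝ} {e u : E} {c d M : ℝ} (hc : 0 < c) (he : ℓ e ≤ -c) (hM : ‖ℓ‖ ≤ M)
    (h : ℓ (u + d • e) = 0) : |d| ≤ M / c * ‖u‖ := by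
  rw [div_mul_eq_mul_div, le_div_iff₀ hc]
  have hℓu : ℓ u = -(d * ℓ e) := by
    rw [map_add, map_smul, smul_eq_mul] at h
    linarith
  calc |d| * c ≤ |d| * |ℓ e| := by
        gcongr
        exact le_abs.2 (.inr (by linarith))
    _ = |ℓ u| := by rw [hℓu, abs_neg, abs_mul]
    _ ≤ ‖ℓ‖ * ‖u‖ := ℓ.le_opNorm u
    _ ≤ M * ‖u‖ := by gcongr

lemma map_restrict_euclideanHausdorffMeasure_le {X : Type*} [MetricSpace X] [MeasurableSpace X]
    [BorelSpace X] {n : ℕ} {T : Set X} {K : ℝ≥0} {g : X → EuclideanSpace ℝ (Fin n)}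
    (hgm : Measurable g) (hg : AntilipschitzWith K (T.domRestrict g)) :
    (μHE[n].restrict T).map g ≤ K ^ n • volume := by
  refine Measure.le_iff.2 fun A hA => ?_
  have himg : g ⁻¹' A ∩ T = Subtype.val '' (T.domRestrict g ⁻¹' A) := by
    change _ = Subtype.val '' (Subtype.val ⁻¹' (g ⁻¹' A))
    rw [Subtype.image_preimage_coe, inter_comm]
  rw [Measure.map_apply hgm hA, Measure.restrict_apply (hgm hA), himg,
    isometry_subtype_coe.euclideanHausdorffMeasure_image,
    ← EuclideanSpace.euclideanHausdorffMeasure_eq_volume,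
    Measure.euclideanHausdorffMeasure_def, Measure.euclideanHausdorffMeasure_def]
  simp only [Measure.smul_apply, ENNReal.smul_def, smul_eq_mul]
  have hle := hg.hausdorffMeasure_preimage_le (d := n) (by positivity) A
  rw [ENNReal.rpow_natCast] at hle
  refine (mul_le_mul_right hle _).trans_eq ?_
  push_cast
  ring

namespace IsBdryChart

variable {n : ℕ} {Ω : Set (EuclideanSpace ℝ (Fin (n + 1)))} {x : EuclideanSpace ℝ (Fin (n + 1))}
  {R : ℝ} {f : EuclideanSpace ℝ (Fin (n + 1)) → ℝ} {i : Fin (n + 1)} {σ c M : ℝ}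

lemma dist_le_dist_dropCoord (h : IsBdryChart Ω x R f i σ c M) (hΩ : IsOpen Ω)
    {y z : EuclideanSpace ℝ (Fin (n + 1))} (hy : y ∈ frontier Ω ∩ ball x R)
    (hz : z ∈ frontier Ω ∩ ball x R) :
    dist y z ≤ (1 + M / c) * dist (dropCoord i y) (dropCoord i z) := by
  obtain ⟨w, hw, hmvt⟩ := h.exists_sub_eq_fderiv hz.2 hy.2
  rw [h.eq_zero_of_mem_frontier hΩ hy.2 hy.1, h.eq_zero_of_mem_frontier hΩ hz.2 hz.1, sub_self]
    at hmvt
  obtain ⟨u, d, hud, hu⟩ := exists_eq_add_smul_single (i := i) h.abs_sigma (y - z)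
  have hd : |d| ≤ M / c * ‖u‖ :=
    abs_le_of_apply_add_smul_eq_zero h.c_pos (h.fderiv_le w hw) (h.norm_fderiv_le w hw)
      (hud ▸ hmvt.symm)
  calc dist y z = ‖u + d • EuclideanSpace.single i σ‖ := by rw [dist_eq_norm, hud]
    _ ≤ ‖u‖ + |d| := by
        simpa [norm_smul, h.norm_single] using norm_add_le u (d • EuclideanSpace.single i σ)
    _ ≤ (1 + M / c) * ‖u‖ := by linarith
    _ = _ := by rw [hu, dist_eq_norm, map_sub]

lemma exists_map_dropCoord_le (h : IsBdryChart Ω x R f i σ c M) (hΩ : IsOpen Ω) :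
    ∃ L : ℝ≥0, ((bdryMeasure Ω).restrict (ball x R)).map (dropCoord i) ≤ L • volume := by
  have hanti : AntilipschitzWith (1 + M / c).toNNReal
      ((ball x R ∩ frontier Ω).domRestrict (dropCoord i)) := by
    refine AntilipschitzWith.of_le_mul_dist fun y z => ?_
    refine (h.dist_le_dist_dropCoord hΩ y.2.symm z.2.symm).trans ?_
    exact mul_le_mul_of_nonneg_right (Real.le_coe_toNNReal _) dist_nonneg
  refine ⟨(1 + M / c).toNNReal ^ n, ?_⟩
  rw [bdryMeasure, Measure.restrict_restrict measurableSet_ball]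
  exact map_restrict_euclideanHausdorffMeasure_le (dropCoord i).continuous.measurable hanti

lemma exists_sweepBound (h : IsBdryChart Ω x R f i σ c M) (hΩ : IsOpen Ω) :
    ∃ L : ℝ≥0, SweepBound ((bdryMeasure Ω).restrict (ball x R)) (EuclideanSpace.single i σ) univ
      volume L := by
  obtain ⟨L, hL⟩ := h.exists_map_dropCoord_le hΩ
  refine ⟨L, fun ψ hψ => ?_⟩
  have hm : Measurable fun x' => ∫⁻ t : ℝ, ψ (insertCoord i t x') :=
    (hψ.comp (measurable_insertCoord i)).lintegral_prod_right'
  simp_rw [setLIntegral_univ, lintegral_line_eq_lintegral_insertCoord h.abs_sigma ψ]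
  rw [← lintegral_map hm (dropCoord i).continuous.measurable]
  calc _ ≤ ∫⁻ x', ∫⁻ t : ℝ, ψ (insertCoord i t x') ∂volume ∂(L • volume) :=
        lintegral_mono' hL le_rfl
    _ = L * ∫⁻ x', ∫⁻ t : ℝ, ψ (insertCoord i t x') := by
        rw [ENNReal.smul_def, lintegral_smul_measure, smul_eq_mul]
    _ = _ := by rw [lintegral_lintegral_insertCoord i hψ]

end IsBdryChart

section Trace

lemma ae_mem_frontier {N : ℕ} (Ω : Set (EuclideanSpace ℝ (Fin N))) :
    ∀ᵐ y ∂(bdryMeasure Ω), y ∈ frontier Ω :=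
  ae_restrict_mem isClosed_frontier.measurableSet

variable {n : ℕ} {Ω : Set (EuclideanSpace ℝ (Fin (n + 1)))} {x : EuclideanSpace ℝ (Fin (n + 1))}

lemma IsBdryChart.exists_sweepBound_ball {R : ℝ} {f : EuclideanSpace ℝ (Fin (n + 1)) → ℝ}
    {i : Fin (n + 1)} {σ c M : ℝ} (h : IsBdryChart Ω x R f i σ c M) (hΩ : IsOpen Ω)
    (hx : x ∈ frontier Ω) :
    ∃ δ ∈ Ioc 0 (R / 2), ∃ z, ∃ ρ > 0, ball z ρ ⊆ Ω ∧ ∃ L : ℝ≥0,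
      SweepBound ((bdryMeasure Ω).restrict (ball x δ)) (EuclideanSpace.single i σ)
        (Ioc (R / 2 - δ) (R / 2)) (volume.restrict (ball z ρ)) L ∧
      SweepBound ((bdryMeasure Ω).restrict (ball x δ)) (EuclideanSpace.single i σ)
        (Ioc 0 (R / 2)) (volume.restrict Ω) L := by
  obtain ⟨L, hL⟩ := h.exists_sweepBound hΩ
  have hR := h.R_pos
  set e : EuclideanSpace ℝ (Fin (n + 1)) := EuclideanSpace.single i σ
  have hz : x + (R / 2) • e ∈ Ω :=
    h.add_mem_of_mem_ball (mem_ball_self (half_pos hR)) hx.1 (half_pos hR) (add_halves R).le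
  obtain ⟨ρ, hρ, hρΩ⟩ := Metric.isOpen_iff.1 hΩ _ hz
  set δ := min (ρ / 2) (R / 2)
  have hδρ : δ ≤ ρ / 2 := min_le_left _ _
  have hδR : δ ≤ R / 2 := min_le_right _ _
  have hL : SweepBound ((bdryMeasure Ω).restrict (ball x δ)) e univ volume L := fun Ψ hΨ =>
    (lintegral_mono_set (ball_subset_ball (by linarith))).trans (hL Ψ hΨ)
  refine ⟨δ, ⟨by positivity, hδR⟩, x + (R / 2) • e, ρ, hρ, hρΩ, L,
    hL.restrict measurableSet_ball measurableSet_Ioc ?_,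
    hL.restrict hΩ.measurableSet measurableSet_Ioc ?_⟩
  · filter_upwards [ae_restrict_mem measurableSet_ball] with y hy s hs
    rw [mem_ball_iff_norm] at hy ⊢
    calc ‖y + s • e - (x + (R / 2) • e)‖ = ‖(y - x) + (s - R / 2) • e‖ := by congr 1; module
      _ ≤ ‖y - x‖ + ‖(s - R / 2) • e‖ := norm_add_le _ _
      _ = ‖y - x‖ + (R / 2 - s) := by
          rw [norm_smul, h.norm_single, mul_one, Real.norm_of_nonpos (by linarith [hs.2]), neg_sub]
      _ < ρ := by linarith [hs.1]
  · filter_upwards [ae_restrict_of_ae (ae_mem_frontier Ω), ae_restrict_mem measurableSet_ball]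
      with y hyΩ hy s hs
    exact h.add_mem_of_mem_ball hy hyΩ.1 hs.1 (by linarith [hs.2])

lemma exists_oscBound_near_bdry (hΩo : IsOpen Ω) (hΩ : HasC1Boundary Ω) (hx : x ∈ frontier Ω) :
    ∃ r > 0, ∃ z, ∃ ρ > 0, ball z ρ ⊆ Ω ∧ bdryMeasure Ω (ball x r) < ⊤ ∧
      OscBound (volume.restrict Ω) ((bdryMeasure Ω).restrict (ball x r))
        (volume.restrict (ball z ρ)) := by
  obtain ⟨R, f, i, σ, c, M, h⟩ := hΩ.exists_isBdryChart hx
  obtain ⟨δ, hδ, z, ρ, hρ, hzΩ, L, hball, hlines⟩ := h.exists_sweepBound_ball hΩo hx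
  have hδlen : volume (Ioc (R / 2 - δ) (R / 2)) ≠ 0 := by simpa using hδ.1
  have : IsFiniteMeasure (volume.restrict (ball z ρ)) :=
    isFiniteMeasure_restrict.2 measure_ball_lt_top.ne
  refine ⟨δ, hδ.1, z, ρ, hρ, hzΩ, ?_, ?_⟩
  · simpa using hball.measure_univ_lt_top ENNReal.coe_ne_top hδlen
  · exact OscBound.of_sweepBound (OscBound.of_concentric_balls hzΩ hzΩ) hball hlines
      ENNReal.coe_ne_top ENNReal.coe_ne_top (sub_nonneg.2 hδ.2) (sub_lt_self _ hδ.1)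

lemma exists_finset_bdry_cover (hΩo : IsOpen Ω) (hΩb : IsBounded Ω) (hΩ : HasC1Boundary Ω) :
    ∃ (t : Finset (EuclideanSpace ℝ (Fin (n + 1)))) (r : EuclideanSpace ℝ (Fin (n + 1)) → ℝ),
      bdryMeasure Ω ≤ ∑ j ∈ t, (bdryMeasure Ω).restrict (ball j (r j)) ∧
      ∀ j ∈ t, bdryMeasure Ω (ball j (r j)) < ⊤ ∧ ∃ z, ∃ ρ > 0, ball z ρ ⊆ Ω ∧
        OscBound (volume.restrict Ω) ((bdryMeasure Ω).restrict (ball j (r j)))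
          (volume.restrict (ball z ρ)) := by
  have hcomp : IsCompact (frontier Ω) :=
    hΩb.isCompact_closure.of_isClosed_subset isClosed_frontier frontier_subset_closure
  choose! r hr hosc using fun x (hx : x ∈ frontier Ω) => exists_oscBound_near_bdry hΩo hΩ hx
  obtain ⟨t, ht, hcov⟩ := hcomp.elim_nhds_subcover (fun x => ball x (r x))
    (fun x hx => ball_mem_nhds x (hr x hx))
  refine ⟨t, r, ?_, fun j hj => ?_⟩
  · refine Measure.le_iff.2 fun A hA => ?_
    simp_rw [Measure.finsetSum_apply, Measure.restrict_apply hA]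
    calc bdryMeasure Ω A ≤ bdryMeasure Ω (⋃ j ∈ t, A ∩ ball j (r j)) := by
          refine measure_mono_ae ?_
          filter_upwards [ae_mem_frontier Ω] with y hy hyA
          obtain ⟨j, hj, hyj⟩ := mem_iUnion₂.1 (hcov hy)
          exact mem_iUnion₂.2 ⟨j, hj, hyA, hyj⟩
      _ ≤ _ := measure_biUnion_finset_le _ _
  · obtain ⟨z, ρ, hρ, hz, hlt, h⟩ := hosc j (ht j hj)
    exact ⟨hlt, z, ρ, hρ, hz, h⟩

lemma isFiniteMeasure_bdryMeasure (hΩo : IsOpen Ω) (hΩb : IsBounded Ω) (hΩ : HasC1Boundary Ω) :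
    IsFiniteMeasure (bdryMeasure Ω) := by
  obtain ⟨t, r, hle, ht⟩ := exists_finset_bdry_cover hΩo hΩb hΩ
  refine ⟨(hle univ).trans_lt ?_⟩
  simp only [Measure.finsetSum_apply, Measure.restrict_apply_univ]
  exact ENNReal.sum_lt_top.2 fun j hj => (ht j hj).1

lemma oscBound_bdry_ball (hΩo : IsOpen Ω) (hΩb : IsBounded Ω) (hΩc : IsPreconnected Ω)
    (hΩ : HasC1Boundary Ω) {z : EuclideanSpace ℝ (Fin (n + 1))} {ρ : ℝ} (hρ : 0 < ρ)
    (hz : ball z ρ ⊆ Ω) :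
    OscBound (volume.restrict Ω) (bdryMeasure Ω) (volume.restrict (ball z ρ)) := by
  have := isFiniteMeasure_bdryMeasure hΩo hΩb hΩ
  have : IsFiniteMeasure (volume.restrict (ball z ρ)) :=
    isFiniteMeasure_restrict.2 measure_ball_lt_top.ne
  obtain ⟨t, r, hle, ht⟩ := exists_finset_bdry_cover hΩo hΩb hΩ
  refine (OscBound.finset_sum fun j hj => ?_).mono le_rfl hle le_rfl
  obtain ⟨-, w, s, hs, hw, h⟩ := ht j hj
  exact h.trans_ball hs (OscBound.of_balls hΩo hΩc hs hρ hw hz)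

lemma oscBound_bdry_bdry (hΩo : IsOpen Ω) (hΩb : IsBounded Ω) (hΩc : IsConnected Ω)
    (hΩ : HasC1Boundary Ω) : OscBound (volume.restrict Ω) (bdryMeasure Ω) (bdryMeasure Ω) := by
  have := isFiniteMeasure_bdryMeasure hΩo hΩb hΩ
  obtain ⟨z, hz⟩ := hΩc.nonempty
  obtain ⟨ρ, hρ, hzρ⟩ := Metric.isOpen_iff.1 hΩo z hz
  have : IsFiniteMeasure (volume.restrict (ball z ρ)) :=
    isFiniteMeasure_restrict.2 measure_ball_lt_top.ne
  have h := oscBound_bdry_ball hΩo hΩb hΩc.isPreconnected hΩ hρ hzρ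
  exact h.trans_ball hρ h.symm

lemma exists_lintegral_bdry_le (hΩo : IsOpen Ω) (hΩb : IsBounded Ω) (hΩc : IsConnected Ω)
    (hΩ : HasC1Boundary Ω) :
    ∃ C : ℝ≥0, ∀ φ : EuclideanSpace ℝ (Fin (n + 1)) → ℝ, ContDiff ℝ 1 φ →
      ∫⁻ y, ‖φ y‖ₑ ∂(bdryMeasure Ω) ≤ C * ∫⁻ x in Ω, (‖fderiv ℝ φ x‖ₑ + ‖φ x‖ₑ) := by
  have := isFiniteMeasure_bdryMeasure hΩo hΩb hΩ
  obtain ⟨z, hz⟩ := hΩc.nonempty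
  obtain ⟨ρ, hρ, hzρ⟩ := Metric.isOpen_iff.1 hΩo z hz
  obtain ⟨C, hC⟩ := oscBound_bdry_ball hΩo hΩb hΩc.isPreconnected hΩ hρ hzρ
  set μ := bdryMeasure Ω
  have hB0 : volume (ball z ρ) ≠ 0 := (measure_ball_pos volume z hρ).ne'
  have hBt : volume (ball z ρ) ≠ ⊤ := measure_ball_lt_top.ne
  refine ⟨((C + μ univ) / volume (ball z ρ)).toNNReal, fun φ hφ => ?_⟩
  rw [ENNReal.coe_toNNReal (ENNReal.div_ne_top (by finiteness) hB0)]
  have hφm := hφ.continuous.enorm.measurable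
  have key : volume (ball z ρ) * ∫⁻ y, ‖φ y‖ₑ ∂μ ≤
      (C + μ univ) * ∫⁻ x in Ω, (‖fderiv ℝ φ x‖ₑ + ‖φ x‖ₑ) := by
    calc volume (ball z ρ) * ∫⁻ y, ‖φ y‖ₑ ∂μ = ∫⁻ y, (∫⁻ _ in ball z ρ, ‖φ y‖ₑ) ∂μ := by
          simp_rw [← lintegral_const_mul' _ _ hBt, setLIntegral_const, mul_comm]
      _ ≤ ∫⁻ y, ((∫⁻ w in ball z ρ, ‖φ y - φ w‖ₑ) + ∫⁻ w in ball z ρ, ‖φ w‖ₑ) ∂μ := by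
          gcongr with y
          rw [← lintegral_add_right _ hφm]
          gcongr with w
          simpa only [sub_add_cancel] using enorm_add_le (φ y - φ w) (φ w)
      _ = (∫⁻ y, (∫⁻ w in ball z ρ, ‖φ y - φ w‖ₑ) ∂μ) + μ univ * ∫⁻ w in ball z ρ, ‖φ w‖ₑ := by
          rw [lintegral_add_right _ measurable_const, lintegral_const, mul_comm (μ univ)]
      _ ≤ C * (∫⁻ x in Ω, ‖fderiv ℝ φ x‖ₑ) + μ univ * ∫⁻ x in Ω, ‖φ x‖ₑ := by
          gcongr
          exact hC φ hφ
      _ ≤ _ := by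
          rw [add_mul]
          gcongr
          · exact le_self_add
          · exact le_add_self
  rw [mul_comm, ← ENNReal.le_div_iff_mul_le (.inl hB0) (.inl hBt)] at key
  exact key.trans_eq (by rw [ENNReal.mul_comm_div, mul_comm, ← mul_div_assoc, mul_comm])

end Trace

section Cutoff

lemma enorm_fderiv_mul_le {E : Type*} [NormedAddCommGroup E] [NormedSpace ℝ E] {a b : E → ℝ} {x : E}
    (ha : DifferentiableAt ℝ a x) (hb : DifferentiableAt ℝ b x) :
    ‖fderiv ℝ (fun y => a y * b y) x‖ₑ ≤ ‖a x‖ₑ * ‖fderiv ℝ b x‖ₑ + ‖b x‖ₑ * ‖fderiv ℝ a x‖ₑ := by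
  rw [fderiv_fun_mul ha hb, ← enorm_smul, ← enorm_smul]
  exact enorm_add_le (a x • fderiv ℝ b x) (b x • fderiv ℝ a x)

/-- `ζ` is a smooth cut-off function between the concentric balls of radius `r / 2` and `r` about
`x`, with gradient bounded by `Z`. -/
structure IsCutoff {E : Type*} [NormedAddCommGroup E] [NormedSpace ℝ E] (x : E) (r : ℝ) (ζ : E → ℝ)
    (Z : ℝ≥0) : Prop where
  contDiff : ContDiff ℝ ∞ ζ
  nonneg : ∀ y, 0 ≤ ζ y
  le_one : ∀ y, ζ y ≤ 1
  eq_one : ∀ y ∈ ball x (r / 2), ζ y = 1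
  eq_zero : ∀ y, y ∉ ball x r → ζ y = 0
  norm_fderiv_le : ∀ y, ‖fderiv ℝ ζ y‖ ≤ Z

lemma exists_isCutoff {E : Type*} [NormedAddCommGroup E] [InnerProductSpace ℝ E]
    [FiniteDimensional ℝ E] (x : E) {r : ℝ} (hr : 0 < r) : ∃ ζ Z, IsCutoff x r ζ Z := by
  let b : ContDiffBump x := ⟨r / 2, r, half_pos hr, half_lt_self hr⟩
  have hb : ContDiff ℝ ∞ b := b.contDiff
  obtain ⟨Z, hZ⟩ := (hb.continuous_fderiv (by simp)).bounded_above_of_compact_support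
    (b.hasCompactSupport.fderiv (𝕜 := ℝ))
  refine ⟨b, Z.toNNReal, hb, fun y => b.nonneg, fun y => b.le_one,
    fun y hy => b.one_of_mem_closedBall (ball_subset_closedBall hy), fun y hy => ?_,
    fun y => (hZ y).trans (Real.le_coe_toNNReal Z)⟩
  rw [← Function.notMem_support, b.support_eq]
  exact hy

namespace IsCutoff

variable {E : Type*} [NormedAddCommGroup E] [NormedSpace ℝ E] {x : E} {r : ℝ} {ζ φ : E → ℝ}
  {Z : ℝ≥0}

lemma hasCompactSupport [FiniteDimensional ℝ E] (h : IsCutoff x r ζ Z) : HasCompactSupport ζ :=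
  .intro (isCompact_closedBall x r) fun y hy =>
    h.eq_zero y fun hyr => hy (ball_subset_closedBall hyr)

lemma abs_le_one (h : IsCutoff x r ζ Z) (y : E) : |ζ y| ≤ 1 :=
  (abs_of_nonneg (h.nonneg y)).trans_le (h.le_one y)

lemma fderiv_eq_zero (h : IsCutoff x r ζ Z) {y : E} (hy : y ∉ ball x r) : fderiv ℝ ζ y = 0 :=
  IsLocalMin.fderiv_eq_zero (Eventually.of_forall fun z => by rw [h.eq_zero y hy]; exact h.nonneg z)

lemma enorm_fderiv_mul_le_indicator (h : IsCutoff x r ζ Z) (hφ : Differentiable ℝ φ) (y : E) :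
    ‖fderiv ℝ (fun y => ζ y * φ y) y‖ₑ ≤
      (ball x r).indicator (fun y => ‖fderiv ℝ φ y‖ₑ + Z * ‖φ y‖ₑ) y := by
  refine (enorm_fderiv_mul_le (h.contDiff.differentiable (by simp) y) (hφ y)).trans ?_
  by_cases hy : y ∈ ball x r
  · have hζ : ‖ζ y‖ₑ ≤ 1 := by
      rw [← enorm_one (G := ℝ)]
      exact enorm_le_iff_norm_le.2 (by simpa using h.abs_le_one y)
    have hdζ : ‖fderiv ℝ ζ y‖ₑ ≤ Z := by
      exact_mod_cast h.norm_fderiv_le y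
    rw [indicator_of_mem hy, mul_comm ‖φ y‖ₑ]
    gcongr
    exact mul_le_of_le_one_left zero_le hζ
  · rw [indicator_of_notMem hy, h.eq_zero y hy, h.fderiv_eq_zero hy, enorm_zero, zero_mul,
      ← ofReal_norm 0, norm_zero, ENNReal.ofReal_zero, mul_zero, add_zero]

end IsCutoff

end Cutoff

section LayerCutoff

lemma deriv_smoothTransition_eq_zero {t : ℝ} (ht : t ∉ Ioo (0 : ℝ) 1) :
    deriv Real.smoothTransition t = 0 := by
  rw [mem_Ioo, not_and_or, not_lt, not_lt] at ht
  rcases ht with ht | ht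
  · refine IsLocalMin.deriv_eq_zero (Eventually.of_forall fun s => ?_)
    rw [Real.smoothTransition.zero_of_nonpos ht]
    exact Real.smoothTransition.nonneg s
  · refine IsLocalMax.deriv_eq_zero (Eventually.of_forall fun s => ?_)
    rw [Real.smoothTransition.one_of_one_le ht]
    exact Real.smoothTransition.le_one s

lemma exists_enorm_deriv_smoothTransition_le :
    ∃ K : ℝ≥0, ∀ t : ℝ, ‖deriv Real.smoothTransition t‖ₑ ≤ K := by
  have hc : Continuous (deriv Real.smoothTransition) :=
    (Real.smoothTransition.contDiff (n := 1)).continuous_deriv le_rfl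
  obtain ⟨K, hK⟩ := hc.bounded_above_of_compact_support (.intro (isCompact_Icc (a := 0) (b := 1))
    fun t ht => deriv_smoothTransition_eq_zero fun h => ht (Ioo_subset_Icc_self h))
  refine ⟨K.toNNReal, fun t => ?_⟩
  rw [← ofReal_norm]
  exact ENNReal.ofReal_le_ofReal (hK t)

variable {E : Type*} {f : E → ℝ} {k : ℝ} {y : E}

/-- The part of `{f < 0}` where `f` is within `1 / k` of `0`. -/
def bdryLayer (f : E → ℝ) (k : ℝ) : Set E :=
  f ⁻¹' Ioo (-(1 / k)) 0

/-- The cut-off function that vanishes off `{f < 0}`, and varies only in the layer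
`bdryLayer f k`. -/
noncomputable def layerCutoff (f : E → ℝ) (k : ℝ) (y : E) : ℝ :=
  Real.smoothTransition (-(k * f y))

lemma enorm_layerCutoff_le_one (f : E → ℝ) (k : ℝ) (y : E) : ‖layerCutoff f k y‖ₑ ≤ 1 := by
  rw [← ofReal_norm, layerCutoff, Real.norm_of_nonneg (Real.smoothTransition.nonneg _)]
  simpa using Real.smoothTransition.le_one _

lemma layerCutoff_eq_zero (hk : 0 ≤ k) (hy : 0 ≤ f y) : layerCutoff f k y = 0 :=
  Real.smoothTransition.zero_of_nonpos (neg_nonpos.2 (mul_nonneg hk hy))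

lemma eventually_layerCutoff_eq_one (hy : f y < 0) : ∀ᶠ k in atTop, layerCutoff f k y = 1 := by
  filter_upwards [eventually_ge_atTop (1 / -f y)] with k hk
  refine Real.smoothTransition.one_of_one_le ?_
  rw [← mul_neg]
  exact (div_le_iff₀ (neg_pos.2 hy)).1 hk

variable [NormedAddCommGroup E] [NormedSpace ℝ E]

lemma contDiff_layerCutoff (hf : ContDiff ℝ 1 f) (k : ℝ) : ContDiff ℝ 1 (layerCutoff f k) :=
  Real.smoothTransition.contDiff.comp (contDiff_const.mul hf).neg

lemma fderiv_layerCutoff (hf : Differentiable ℝ f) (k : ℝ) (y : E) :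
    fderiv ℝ (layerCutoff f k) y =
      deriv Real.smoothTransition (-(k * f y)) • -(k • fderiv ℝ f y) := by
  have hst : DifferentiableAt ℝ Real.smoothTransition (-(k * f y)) :=
    (Real.smoothTransition.contDiff (n := 1)).differentiable one_ne_zero _
  exact (hst.hasDerivAt.comp_hasFDerivAt y ((hf y).hasFDerivAt.const_mul k).neg).fderiv

lemma fderiv_layerCutoff_eq_zero (hf : Differentiable ℝ f) (hk : 0 < k) (hy : y ∉ bdryLayer f k) :
    fderiv ℝ (layerCutoff f k) y = 0 := by
  rw [fderiv_layerCutoff hf, deriv_smoothTransition_eq_zero, zero_smul]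
  refine fun h => hy ⟨?_, neg_of_mul_neg_right (neg_pos.1 h.1) hk.le⟩
  rw [neg_lt, lt_div_iff₀ hk]
  linarith [h.2]

lemma exists_enorm_fderiv_layerCutoff_mul_le : ∃ K : ℝ≥0, ∀ {f φ : E → ℝ} {k : ℝ},
    Differentiable ℝ f → Differentiable ℝ φ → 0 < k → ∀ y,
      ‖fderiv ℝ (fun y => layerCutoff f k y * φ y) y‖ₑ ≤ {y | f y < 0}.indicator
        (fun y => ‖fderiv ℝ φ y‖ₑ) y + (bdryLayer f k).indicator
          (fun y => K * (ENNReal.ofReal k * (‖fderiv ℝ f y‖ₑ * ‖φ y‖ₑ))) y := by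
  obtain ⟨K, hK⟩ := exists_enorm_deriv_smoothTransition_le
  refine ⟨K, fun {f φ k} hf hφ hk y => ?_⟩
  have hθ : DifferentiableAt ℝ (layerCutoff f k) y :=
    ((Real.smoothTransition.contDiff (n := 1)).differentiable one_ne_zero).comp
      (hf.const_mul k).neg y
  refine (enorm_fderiv_mul_le hθ (hφ y)).trans (add_le_add ?_ ?_)
  · by_cases hy : f y < 0
    · rw [indicator_of_mem (show y ∈ {y | f y < 0} from hy)]
      exact mul_le_of_le_one_left zero_le (enorm_layerCutoff_le_one f k y)
    · simp [layerCutoff_eq_zero hk.le (not_lt.1 hy)]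
  · by_cases hy : y ∈ bdryLayer f k
    · rw [indicator_of_mem hy, fderiv_layerCutoff hf, enorm_smul, enorm_neg, enorm_smul,
        Real.enorm_of_nonneg hk.le]
      calc _ ≤ ‖φ y‖ₑ * (K * (ENNReal.ofReal k * ‖fderiv ℝ f y‖ₑ)) := by gcongr; exact hK _
        _ = _ := by ring
    · rw [fderiv_layerCutoff_eq_zero hf hk hy, ← ofReal_norm 0, norm_zero, ENNReal.ofReal_zero,
        mul_zero]
      exact zero_le

end LayerCutoff

section Layer

variable {N : ℕ} {Ω : Set (EuclideanSpace ℝ (Fin N))} {x : EuclideanSpace ℝ (Fin N)} {R : ℝ}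
  {f : EuclideanSpace ℝ (Fin N) → ℝ} {i : Fin N} {σ c M : ℝ}

namespace IsBdryChart

lemma measurableSet_bdryLayer (h : IsBdryChart Ω x R f i σ c M) (k : ℝ) :
    MeasurableSet (bdryLayer f k) :=
  h.contDiff.continuous.measurable measurableSet_Ioo

lemma volume_line_bdryLayer_le (h : IsBdryChart Ω x R f i σ c M) {r : ℝ} (hr : r ≤ R) (k : ℝ)
    (w : EuclideanSpace ℝ (Fin N)) :
    volume {s : ℝ | w - s • EuclideanSpace.single i σ ∈ ball x r ∩ bdryLayer f k} ≤
      ENNReal.ofReal (1 / k / c) := by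
  have hmono {s t : ℝ} (hs : w - s • EuclideanSpace.single i σ ∈ ball x r ∩ bdryLayer f k)
      (ht : w - t • EuclideanSpace.single i σ ∈ ball x r ∩ bdryLayer f k) (hst : s ≤ t) :
      t - s ≤ 1 / k / c := by
    have heq : w - s • EuclideanSpace.single i σ =
        (w - t • EuclideanSpace.single i σ) + (t - s) • EuclideanSpace.single i σ := by module
    have hdecr := h.apply_add_le (s := t - s) (ball_subset_ball hr ht.1) (sub_nonneg.2 hst)
      (by rw [← heq]; exact ball_subset_ball hr hs.1)
    rw [← heq] at hdecr
    rw [le_div_iff₀ h.c_pos]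
    linarith [hs.2.1, ht.2.2]
  refine (Real.volume_le_diam _).trans (ediam_le_of_forall_dist_le fun s hs t ht => ?_)
  rw [Real.dist_eq, abs_le']
  rcases le_total s t with hst | hst
  · exact ⟨by linarith [hmono hs ht hst], by linarith [hmono hs ht hst]⟩
  · exact ⟨hmono ht hs hst, by linarith [hmono ht hs hst]⟩

lemma sweepBound_bdryLayer (h : IsBdryChart Ω x R f i σ c M) (hΩ : MeasurableSet Ω) {r s : ℝ}
    (hrs : r + s ≤ R) (hs : 0 ≤ s) (k : ℝ) :
    SweepBound (volume.restrict (ball x r ∩ bdryLayer f k)) (EuclideanSpace.single i σ) (Ioc 0 s)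
      (volume.restrict Ω) (ENNReal.ofReal (1 / k / c)) := by
  have hr : r ≤ R := by linarith
  have hm : MeasurableSet (ball x r ∩ bdryLayer f k) :=
    measurableSet_ball.inter (h.measurableSet_bdryLayer k)
  refine (SweepBound.of_volume_le hm (h.volume_line_bdryLayer_le hr k)).restrict hΩ
    measurableSet_Ioc ?_
  filter_upwards [ae_restrict_mem hm] with y hy t ht
  exact h.add_mem_of_mem_ball hy.1
    (subset_closure ((h.mem_iff y (ball_subset_ball hr hy.1)).2 hy.2.2)) ht.1 (by linarith [ht.2])

lemma exists_mul_lintegral_bdryLayer_le (h : IsBdryChart Ω x R f i σ c M) (hΩ : MeasurableSet Ω)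
    {r : ℝ} (hr : r < R) :
    ∃ C : ℝ≥0, ∀ k : ℝ, 0 < k → ∀ φ : EuclideanSpace ℝ (Fin N) → ℝ, ContDiff ℝ 1 φ →
      ENNReal.ofReal k * ∫⁻ y in ball x r ∩ bdryLayer f k, ‖φ y‖ₑ ≤
        C * ∫⁻ z in Ω, (‖fderiv ℝ φ z‖ₑ + ‖φ z‖ₑ) := by
  have hc := h.c_pos
  set H := R - r
  have hH : 0 < H := sub_pos.2 hr
  have hH0 : ENNReal.ofReal H ≠ 0 := by simpa using hH
  refine ⟨((1 + ENNReal.ofReal H) * ENNReal.ofReal (1 / c) / ENNReal.ofReal H).toNNReal,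
    fun k hk φ hφ => ?_⟩
  rw [ENNReal.coe_toNNReal (ENNReal.div_ne_top (by finiteness) hH0)]
  set a := (volume : Measure (EuclideanSpace ℝ (Fin N))).restrict (ball x r ∩ bdryLayer f k)
  set D := ∫⁻ z in Ω, (‖fderiv ℝ φ z‖ₑ + ‖φ z‖ₑ)
  have he : ‖(EuclideanSpace.single i σ : EuclideanSpace ℝ (Fin N))‖ₑ = 1 := by
    rw [← ofReal_norm, h.norm_single, ENNReal.ofReal_one]
  have hsweep := h.sweepBound_bdryLayer hΩ (by simp [H] : r + H ≤ R) hH.le k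
  have hkey := hsweep.mul_lintegral_enorm_le hsweep le_rfl hφ
  rw [sub_zero, he, one_mul] at hkey
  have hkc : ENNReal.ofReal k * ENNReal.ofReal (1 / k / c) = ENNReal.ofReal (1 / c) := by
    rw [← ENNReal.ofReal_mul hk.le]
    congr 1
    field_simp
  have hφD : ∫⁻ z in Ω, ‖φ z‖ₑ ≤ D := lintegral_mono fun z => le_add_self
  have hdD : ∫⁻ z in Ω, ‖fderiv ℝ φ z‖ₑ ≤ D := lintegral_mono fun z => le_self_add
  rw [← ENNReal.mul_div_right_comm,
    ENNReal.le_div_iff_mul_le (.inl hH0) (.inl ENNReal.ofReal_ne_top)]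
  calc (ENNReal.ofReal k * ∫⁻ y, ‖φ y‖ₑ ∂a) * ENNReal.ofReal H
      = ENNReal.ofReal k * (ENNReal.ofReal H * ∫⁻ y, ‖φ y‖ₑ ∂a) := by ring
    _ ≤ ENNReal.ofReal k * (ENNReal.ofReal (1 / k / c) * D +
          ENNReal.ofReal H * (ENNReal.ofReal (1 / k / c) * D)) := by
        gcongr
        exact hkey.trans (by gcongr)
    _ = (1 + ENNReal.ofReal H) * (ENNReal.ofReal k * ENNReal.ofReal (1 / k / c)) * D := by ring
    _ = _ := by rw [hkc]

end IsBdryChart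

end Layer

section Sobolev

variable {N : ℕ} {Ω : Set (EuclideanSpace ℝ (Fin N))} {x : EuclideanSpace ℝ (Fin N)} {R : ℝ}
  {f : EuclideanSpace ℝ (Fin N) → ℝ} {i : Fin N} {σ c M P : ℝ}

lemma exists_lintegral_rpow_le_of_lintegral_fderiv_le (hP : Real.HolderConjugate N P) (K : ℝ≥0) :
    ∃ C : ℝ≥0, ∀ (w : EuclideanSpace ℝ (Fin N) → ℝ) (D : ℝ≥0∞), ContDiff ℝ 1 w →
      HasCompactSupport w → ∫⁻ y, ‖fderiv ℝ w y‖ₑ ≤ K * D → ∫⁻ y, ‖w y‖ₑ ^ P ≤ C * D ^ P := by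
  have hP0 : 0 ≤ P := hP.symm.nonneg
  refine ⟨lintegralPowLePowLIntegralFDerivConst (volume : Measure (EuclideanSpace ℝ (Fin N))) P *
    K ^ P, fun w D hw hwc hD => ?_⟩
  refine (lintegral_pow_le_pow_lintegral_fderiv volume hw hwc (by simpa using hP)).trans ?_
  rw [ENNReal.coe_mul, ENNReal.coe_rpow_of_nonneg _ hP0, mul_assoc,
    ← ENNReal.mul_rpow_of_nonneg _ _ hP0]
  gcongr

lemma IsCutoff.lintegral_fderiv_mul_le {r : ℝ} {ζ φ : EuclideanSpace ℝ (Fin N) → ℝ} {Z : ℝ≥0}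
    (h : IsCutoff x r ζ Z) (hφ : Differentiable ℝ φ) :
    ∫⁻ y, ‖fderiv ℝ (fun y => ζ y * φ y) y‖ₑ ≤
      ∫⁻ y in ball x r, (‖fderiv ℝ φ y‖ₑ + Z * ‖φ y‖ₑ) := by
  rw [← lintegral_indicator measurableSet_ball]
  exact lintegral_mono (h.enorm_fderiv_mul_le_indicator hφ)

lemma exists_sobolev_near_interior (hΩ : IsOpen Ω) (hx : x ∈ Ω) (hP : Real.HolderConjugate N P) :
    ∃ r > 0, ∃ C : ℝ≥0, ∀ φ : EuclideanSpace ℝ (Fin N) → ℝ, ContDiff ℝ 1 φ →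
      ∫⁻ y in ball x r ∩ Ω, ‖φ y‖ₑ ^ P ≤ C * (∫⁻ z in Ω, (‖fderiv ℝ φ z‖ₑ + ‖φ z‖ₑ)) ^ P := by
  obtain ⟨r, hr, hrΩ⟩ := Metric.isOpen_iff.1 hΩ x hx
  obtain ⟨ζ, Z, hζ⟩ := exists_isCutoff x hr
  obtain ⟨C, hC⟩ := exists_lintegral_rpow_le_of_lintegral_fderiv_le hP (1 + Z)
  refine ⟨r / 2, half_pos hr, C, fun φ hφ => ?_⟩
  calc ∫⁻ y in ball x (r / 2) ∩ Ω, ‖φ y‖ₑ ^ P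
      ≤ ∫⁻ y in ball x (r / 2), ‖φ y‖ₑ ^ P := lintegral_mono_set inter_subset_left
    _ = ∫⁻ y in ball x (r / 2), ‖ζ y * φ y‖ₑ ^ P :=
        setLIntegral_congr_fun measurableSet_ball fun y hy => by simp [hζ.eq_one y hy]
    _ ≤ ∫⁻ y, ‖ζ y * φ y‖ₑ ^ P := setLIntegral_le_lintegral _ _
    _ ≤ _ := by
        refine hC _ _ ((hζ.contDiff.of_le (by simp)).mul hφ) hζ.hasCompactSupport.mul_right ?_
        refine (hζ.lintegral_fderiv_mul_le (hφ.differentiable one_ne_zero)).trans ?_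
        refine (lintegral_mono_set hrΩ).trans ?_
        rw [← lintegral_const_mul' _ _ ENNReal.coe_ne_top]
        gcongr with y
        push_cast
        rw [mul_add]
        gcongr
        · exact le_mul_of_one_le_left zero_le le_self_add
        · exact le_add_self

lemma IsBdryChart.exists_enorm_fderiv_layerCutoff_mul_add_le (h : IsBdryChart Ω x R f i σ c M)
    (Z : ℝ≥0) :
    ∃ K : ℝ≥0, ∀ k : ℝ, 0 < k → ∀ φ : EuclideanSpace ℝ (Fin N) → ℝ, Differentiable ℝ φ →
      ∀ y ∈ ball x R, ‖fderiv ℝ (fun y => layerCutoff f k y * φ y) y‖ₑ +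
        Z * ‖layerCutoff f k y * φ y‖ₑ ≤
          Ω.indicator (fun y => (1 + Z) * (‖fderiv ℝ φ y‖ₑ + ‖φ y‖ₑ)) y +
            (bdryLayer f k).indicator (fun y => K * (ENNReal.ofReal k * ‖φ y‖ₑ)) y := by
  obtain ⟨K, hK⟩ := exists_enorm_fderiv_layerCutoff_mul_le (E := EuclideanSpace ℝ (Fin N))
  have hf : Differentiable ℝ f := h.contDiff.differentiable one_ne_zero
  refine ⟨K * M.toNNReal, fun k hk φ hφ y hy => ?_⟩
  calc _ ≤ {y | f y < 0}.indicator (fun y => ‖fderiv ℝ φ y‖ₑ) y + (bdryLayer f k).indicator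
          (fun y => K * (ENNReal.ofReal k * (‖fderiv ℝ f y‖ₑ * ‖φ y‖ₑ))) y +
            Z * ‖layerCutoff f k y * φ y‖ₑ := by gcongr; exact hK hf hφ hk y
    _ = ({y | f y < 0}.indicator (fun y => ‖fderiv ℝ φ y‖ₑ) y +
          Z * ‖layerCutoff f k y * φ y‖ₑ) + (bdryLayer f k).indicator
            (fun y => K * (ENNReal.ofReal k * (‖fderiv ℝ f y‖ₑ * ‖φ y‖ₑ))) y := by ring
    _ ≤ _ := add_le_add ?_ (indicator_le_indicator ?_)
  · by_cases hyΩ : y ∈ Ω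
    · rw [indicator_of_mem hyΩ, indicator_of_mem (by exact (h.mem_iff y hy).1 hyΩ), enorm_mul,
        mul_add]
      gcongr
      · exact le_mul_of_one_le_left zero_le le_self_add
      · exact le_add_self
      · exact mul_le_of_le_one_left zero_le (enorm_layerCutoff_le_one f k y)
    · have hfy : ¬f y < 0 := fun hlt => hyΩ ((h.mem_iff y hy).2 hlt)
      simp [hfy, layerCutoff_eq_zero hk.le (not_lt.1 hfy)]
  · calc K * (ENNReal.ofReal k * (‖fderiv ℝ f y‖ₑ * ‖φ y‖ₑ))
        = K * ‖fderiv ℝ f y‖ₑ * (ENNReal.ofReal k * ‖φ y‖ₑ) := by ring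
      _ ≤ _ := by
        rw [ENNReal.coe_mul]
        gcongr
        rw [← ofReal_norm]
        exact ENNReal.ofReal_le_ofReal (h.norm_fderiv_le y hy)

lemma IsBdryChart.exists_lintegral_fderiv_cutoff_le (h : IsBdryChart Ω x R f i σ c M)
    (hΩ : MeasurableSet Ω) {r : ℝ} (hr : r < R) {ζ : EuclideanSpace ℝ (Fin N) → ℝ} {Z : ℝ≥0}
    (hζ : IsCutoff x r ζ Z) :
    ∃ C : ℝ≥0, ∀ k : ℝ, 0 < k → ∀ φ : EuclideanSpace ℝ (Fin N) → ℝ, ContDiff ℝ 1 φ →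
      ∫⁻ y, ‖fderiv ℝ (fun y => ζ y * (layerCutoff f k y * φ y)) y‖ₑ ≤
        C * ∫⁻ z in Ω, (‖fderiv ℝ φ z‖ₑ + ‖φ z‖ₑ) := by
  obtain ⟨C, hC⟩ := h.exists_mul_lintegral_bdryLayer_le hΩ hr
  obtain ⟨K, hK⟩ := h.exists_enorm_fderiv_layerCutoff_mul_add_le Z
  refine ⟨1 + Z + K * C, fun k hk φ hφ => ?_⟩
  set D := ∫⁻ z in Ω, (‖fderiv ℝ φ z‖ₑ + ‖φ z‖ₑ)
  have hlm := h.measurableSet_bdryLayer k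
  calc _ ≤ ∫⁻ y in ball x r, (‖fderiv ℝ (fun y => layerCutoff f k y * φ y) y‖ₑ +
          Z * ‖layerCutoff f k y * φ y‖ₑ) := hζ.lintegral_fderiv_mul_le
        (((contDiff_layerCutoff h.contDiff k).mul hφ).differentiable one_ne_zero)
    _ ≤ (∫⁻ y in ball x r, Ω.indicator (fun y => (1 + Z) * (‖fderiv ℝ φ y‖ₑ + ‖φ y‖ₑ)) y) +
          ∫⁻ y in ball x r, (bdryLayer f k).indicator
            (fun y => K * (ENNReal.ofReal k * ‖φ y‖ₑ)) y := by
        rw [← lintegral_add_right _ (((hφ.continuous.enorm.measurable.const_mul _).const_mul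
          _).indicator hlm)]
        exact setLIntegral_mono' measurableSet_ball fun y hy =>
          hK k hk φ (hφ.differentiable one_ne_zero) y (ball_subset_ball hr.le hy)
    _ ≤ (1 + Z) * D + K * (C * D) := by
        refine add_le_add ?_ ?_
        · refine (setLIntegral_le_lintegral _ _).trans ?_
          rw [lintegral_indicator hΩ, lintegral_const_mul' _ _ (by finiteness)]
        · rw [setLIntegral_indicator hlm, inter_comm, lintegral_const_mul' _ _ (by finiteness),
            lintegral_const_mul' _ _ (by finiteness)]
          exact mul_le_mul_right (hC k hk φ hφ) _
    _ = _ := by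
        push_cast
        ring

lemma exists_sobolev_near_bdry (hΩ : IsOpen Ω) (hΩ₁ : HasC1Boundary Ω) (hx : x ∈ frontier Ω)
    (hP : Real.HolderConjugate N P) :
    ∃ r > 0, ∃ C : ℝ≥0, ∀ φ : EuclideanSpace ℝ (Fin N) → ℝ, ContDiff ℝ 1 φ →
      ∫⁻ y in ball x r ∩ Ω, ‖φ y‖ₑ ^ P ≤ C * (∫⁻ z in Ω, (‖fderiv ℝ φ z‖ₑ + ‖φ z‖ₑ)) ^ P := by
  obtain ⟨R, f, i, σ, c, M, h⟩ := hΩ₁.exists_isBdryChart hx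
  have hr : 0 < R / 2 := half_pos h.R_pos
  have hrR : R / 2 < R := half_lt_self h.R_pos
  obtain ⟨ζ, Z, hζ⟩ := exists_isCutoff x hr
  obtain ⟨K, hK⟩ := h.exists_lintegral_fderiv_cutoff_le hΩ.measurableSet hrR hζ
  obtain ⟨C, hC⟩ := exists_lintegral_rpow_le_of_lintegral_fderiv_le hP K
  refine ⟨R / 2 / 2, half_pos hr, C, fun φ hφ => ?_⟩
  set D := ∫⁻ z in Ω, (‖fderiv ℝ φ z‖ₑ + ‖φ z‖ₑ)
  set w : ℕ → EuclideanSpace ℝ (Fin N) → ℝ :=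
    fun k y => ζ y * (layerCutoff f (k + 1) y * φ y) with hw
  have hws (k : ℕ) : ContDiff ℝ 1 (w k) :=
    (hζ.contDiff.of_le (by simp)).mul ((contDiff_layerCutoff h.contDiff _).mul hφ)
  have hwP (k : ℕ) : ∫⁻ y, ‖w k y‖ₑ ^ P ≤ C * D ^ P :=
    hC _ _ (hws k) hζ.hasCompactSupport.mul_right (hK _ (by positivity) φ hφ)
  have hlim : ∀ y ∈ ball x (R / 2 / 2) ∩ Ω,
      liminf (fun k => ‖w k y‖ₑ ^ P) atTop = ‖φ y‖ₑ ^ P := by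
    intro y hy
    have hfy := (h.mem_iff y (ball_subset_ball (by linarith) hy.1)).1 hy.2
    refine (tendsto_const_nhds.congr' ?_).liminf_eq
    filter_upwards [(tendsto_atTop_add_const_right _ 1 tendsto_natCast_atTop_atTop).eventually
      (eventually_layerCutoff_eq_one hfy)] with k hk
    simp only [hw, hk, hζ.eq_one y hy.1, one_mul]
  calc ∫⁻ y in ball x (R / 2 / 2) ∩ Ω, ‖φ y‖ₑ ^ P
      = ∫⁻ y in ball x (R / 2 / 2) ∩ Ω, liminf (fun k => ‖w k y‖ₑ ^ P) atTop :=
        setLIntegral_congr_fun (measurableSet_ball.inter hΩ.measurableSet)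
          fun y hy => (hlim y hy).symm
    _ ≤ ∫⁻ y, liminf (fun k => ‖w k y‖ₑ ^ P) atTop := setLIntegral_le_lintegral _ _
    _ ≤ liminf (fun k => ∫⁻ y, ‖w k y‖ₑ ^ P) atTop := lintegral_liminf_le fun k =>
        (hws k).continuous.enorm.measurable.pow_const _
    _ ≤ _ := liminf_le_of_le (by isBoundedDefault) fun b hb => by
        obtain ⟨k, hk⟩ := hb.exists
        exact hk.trans (hwP k)

lemma exists_sobolev (hΩo : IsOpen Ω) (hΩb : IsBounded Ω) (hΩ : HasC1Boundary Ω)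
    (hP : Real.HolderConjugate N P) :
    ∃ C : ℝ≥0, ∀ φ : EuclideanSpace ℝ (Fin N) → ℝ, ContDiff ℝ 1 φ →
      ∫⁻ y in Ω, ‖φ y‖ₑ ^ P ≤ C * (∫⁻ z in Ω, (‖fderiv ℝ φ z‖ₑ + ‖φ z‖ₑ)) ^ P := by
  have hloc : ∀ x ∈ closure Ω, ∃ r > 0, ∃ C : ℝ≥0, ∀ φ : EuclideanSpace ℝ (Fin N) → ℝ,
      ContDiff ℝ 1 φ → ∫⁻ y in ball x r ∩ Ω, ‖φ y‖ₑ ^ P ≤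
        C * (∫⁻ z in Ω, (‖fderiv ℝ φ z‖ₑ + ‖φ z‖ₑ)) ^ P := by
    intro x hx
    by_cases hxΩ : x ∈ Ω
    · exact exists_sobolev_near_interior hΩo hxΩ hP
    · exact exists_sobolev_near_bdry hΩo hΩ (hΩo.frontier_eq ▸ ⟨hx, hxΩ⟩) hP
  choose! r hr C hC using hloc
  obtain ⟨t, ht, hcov⟩ := hΩb.isCompact_closure.elim_nhds_subcover (fun x => ball x (r x))
    (fun x hx => ball_mem_nhds x (hr x hx))
  refine ⟨∑ j ∈ t, C j, fun φ hφ => ?_⟩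
  have hle : volume.restrict Ω ≤ ∑ j ∈ t, volume.restrict (ball j (r j) ∩ Ω) := by
    refine Measure.le_iff.2 fun A hA => ?_
    rw [Measure.finsetSum_apply]
    simp_rw [Measure.restrict_apply hA]
    refine (measure_mono fun y hy => ?_).trans (measure_biUnion_finset_le t _)
    obtain ⟨j, hj, hyj⟩ := mem_iUnion₂.1 (hcov (subset_closure hy.2))
    exact mem_iUnion₂.2 ⟨j, hj, hy.1, hyj, hy.2⟩
  calc ∫⁻ y in Ω, ‖φ y‖ₑ ^ P ≤ ∑ j ∈ t, ∫⁻ y in ball j (r j) ∩ Ω, ‖φ y‖ₑ ^ P :=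
        (lintegral_mono' hle le_rfl).trans (lintegral_finsetSum_measure _ _ _).le
    _ ≤ ∑ j ∈ t, C j * (∫⁻ z in Ω, (‖fderiv ℝ φ z‖ₑ + ‖φ z‖ₑ)) ^ P :=
        Finset.sum_le_sum fun j hj => hC j (ht j hj) φ hφ
    _ = _ := by rw [← Finset.sum_mul, ENNReal.ofNNReal_finsetSum]

end Sobolev

section SobolevTrace

lemma SubcriticalTrace.exists_exponent {N : ℕ} {p q : ℝ} (hsub : SubcriticalTrace N p q)
    (hN : 1 ≤ N) (hp : 1 < p) (hq : 0 < q) :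
    ∃ s, 1 < s ∧ q < s ∧ s * N ≤ p * (N - 1 + s) := by
  have hN' : (1 : ℝ) ≤ N := by exact_mod_cast hN
  by_cases hpN : p < N
  · have hNp : 0 < (N : ℝ) - p := sub_pos.2 hpN
    refine ⟨p * (N - 1) / (N - p), ?_, hsub hpN, le_of_eq ?_⟩
    · rw [one_lt_div hNp]
      nlinarith
    · field_simp
      ring
  · exact ⟨q + 1, by linarith, by linarith, by nlinarith⟩

lemma enorm_norm_rpow {F : Type*} [SeminormedAddCommGroup F] (v : F) {s : ℝ} (hs : 0 ≤ s) :
    ‖‖v‖ ^ s‖ₑ = ‖v‖ₑ ^ s := by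
  rw [Real.enorm_rpow_of_nonneg (norm_nonneg v) hs, enorm_norm]

lemma rpow_sub_one_mul_self (a : ℝ≥0∞) {s : ℝ} (hs : 1 ≤ s) : a ^ (s - 1) * a = a ^ s := by
  conv_lhs => rw [← ENNReal.rpow_one a, ← ENNReal.rpow_mul, one_mul,
    ← ENNReal.rpow_add_of_nonneg _ _ (sub_nonneg.2 hs) zero_le_one, sub_add_cancel]

lemma rpow_one_div_le_of_le_mul_rpow {Y B : ℝ≥0∞} {s : ℝ} (hs : 0 < s) (hY : Y ≠ ⊤)
    (h : Y ≤ B * Y ^ ((s - 1) / s)) : Y ^ (1 / s) ≤ B := by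
  by_cases hY0 : Y = 0
  · rw [hY0, ENNReal.zero_rpow_of_pos (by positivity)]
    exact zero_le
  have hsplit : Y = Y ^ (1 / s) * Y ^ ((s - 1) / s) := by
    rw [← ENNReal.rpow_add _ _ hY0 hY, ← add_div, add_sub_cancel, div_self hs.ne', ENNReal.rpow_one]
  exact (ENNReal.mul_le_mul_iff_left (ENNReal.rpow_pos (pos_iff_ne_zero.2 hY0) hY).ne'
    (ENNReal.rpow_ne_top_of_ne_zero hY0 hY)).1 (hsplit.symm.le.trans h)

section Power

variable {E : Type*} [NormedAddCommGroup E] [NormedSpace ℝ E] {φ : E → ℝ} {s : ℝ}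

lemma enorm_fderiv_norm_rpow_add_le (hφ : Differentiable ℝ φ) (hs : 1 < s) (x : E) :
    ‖fderiv ℝ (fun x => ‖φ x‖ ^ s) x‖ₑ + ‖φ x‖ₑ ^ s ≤
      s.toNNReal * (‖φ x‖ₑ ^ (s - 1) * (‖fderiv ℝ φ x‖ₑ + ‖φ x‖ₑ)) := by
  have hS : (s.toNNReal : ℝ) = s := Real.coe_toNNReal _ (by linarith)
  have hS1 : 1 < s.toNNReal := Real.one_lt_toNNReal.2 hs
  have hderiv := enorm_fderiv_norm_rpow_le hφ (x := x) hS1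
  rw [hS] at hderiv
  rw [mul_add, mul_add, rpow_sub_one_mul_self _ hs.le, ← mul_assoc]
  exact add_le_add hderiv (le_mul_of_one_le_left zero_le (by exact_mod_cast hS1.le))

lemma lintegral_fderiv_norm_rpow_add_le [MeasurableSpace E] [BorelSpace E] (m : Measure E)
    {t t' : ℝ} (ht : t'.HolderConjugate t) (hφ : ContDiff ℝ 1 φ) (hs : 1 < s) :
    ∫⁻ x, (‖fderiv ℝ (fun x => ‖φ x‖ ^ s) x‖ₑ + ‖φ x‖ₑ ^ s) ∂m ≤
      s.toNNReal * ((∫⁻ x, ‖φ x‖ₑ ^ ((s - 1) * t') ∂m) ^ (1 / t') *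
        (∫⁻ x, (‖fderiv ℝ φ x‖ₑ + ‖φ x‖ₑ) ^ t ∂m) ^ (1 / t)) := by
  have hφm : Measurable fun x => ‖φ x‖ₑ := hφ.continuous.enorm.measurable
  have hdm : Measurable fun x => ‖fderiv ℝ φ x‖ₑ :=
    (hφ.continuous_fderiv one_ne_zero).enorm.measurable
  calc _ ≤ ∫⁻ x, s.toNNReal * (‖φ x‖ₑ ^ (s - 1) * (‖fderiv ℝ φ x‖ₑ + ‖φ x‖ₑ)) ∂m :=
        lintegral_mono (enorm_fderiv_norm_rpow_add_le (hφ.differentiable one_ne_zero) hs)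
    _ = s.toNNReal * ∫⁻ x, ‖φ x‖ₑ ^ (s - 1) * (‖fderiv ℝ φ x‖ₑ + ‖φ x‖ₑ) ∂m :=
        lintegral_const_mul' _ _ ENNReal.coe_ne_top
    _ ≤ _ := by
        simp only [ENNReal.rpow_mul]
        gcongr
        exact ENNReal.lintegral_mul_le_Lp_mul_Lq m ht (hφm.pow_const _).aemeasurable
          (hdm.add hφm).aemeasurable

end Power

lemma setLIntegral_enorm_rpow_ne_top {E F : Type*} [PseudoMetricSpace E] [ProperSpace E]
    [MeasurableSpace E] [OpensMeasurableSpace E] [SeminormedAddCommGroup F] (μ : Measure E)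
    [IsFiniteMeasureOnCompacts μ] {Ω : Set E} (hΩ : IsBounded Ω) {φ : E → F} (hφ : Continuous φ)
    {r : ℝ} (hr : 0 ≤ r) : ∫⁻ x in Ω, ‖φ x‖ₑ ^ r ∂μ ≠ ⊤ := by
  obtain ⟨B, hB⟩ := hΩ.isCompact_closure.exists_bound_of_continuousOn hφ.continuousOn
  have hle : ∫⁻ x in closure Ω, ‖φ x‖ₑ ^ r ∂μ ≤ ENNReal.ofReal B ^ r * μ (closure Ω) := by
    rw [← setLIntegral_const]
    refine setLIntegral_mono' isClosed_closure.measurableSet fun x hx => ?_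
    gcongr
    exact (ofReal_norm (φ x)).ge.trans (ENNReal.ofReal_le_ofReal (hB x hx))
  exact ne_top_of_le_ne_top
    (ENNReal.mul_ne_top (ENNReal.rpow_ne_top_of_nonneg hr ENNReal.ofReal_ne_top)
      hΩ.isCompact_closure.measure_lt_top.ne)
    ((lintegral_mono_set subset_closure).trans hle)

lemma lintegral_add_rpow_le {α : Type*} [MeasurableSpace α] (μ : Measure α) {a b : α → ℝ≥0∞}
    (ha : AEMeasurable a μ) (hb : AEMeasurable b μ) {t p : ℝ} (ht : 0 < t) (htp : t ≤ p)
    (hp : 1 ≤ p) :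
    (∫⁻ x, (a x + b x) ^ t ∂μ) ^ (1 / t) ≤
      (2 ^ (p - 1)) ^ (1 / p) * μ univ ^ (1 / t - 1 / p) *
        (∫⁻ x, (a x ^ p + b x ^ p) ∂μ) ^ (1 / p) := by
  have hjensen := eLpNorm'_le_eLpNorm'_mul_rpow_measure_univ (μ := μ) ht htp
    (ha.add hb).aestronglyMeasurable
  simp only [eLpNorm', enorm_eq_self, Pi.add_apply] at hjensen
  have hadd : ∫⁻ x, (a x + b x) ^ p ∂μ ≤ 2 ^ (p - 1) * ∫⁻ x, (a x ^ p + b x ^ p) ∂μ := by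
    rw [← lintegral_const_mul' _ _
      (ENNReal.rpow_ne_top_of_nonneg (sub_nonneg.2 hp) ENNReal.ofNat_ne_top)]
    exact lintegral_mono fun x => ENNReal.rpow_add_le_mul_rpow_add_rpow _ _ hp
  calc _ ≤ (∫⁻ x, (a x + b x) ^ p ∂μ) ^ (1 / p) * μ univ ^ (1 / t - 1 / p) := hjensen
    _ ≤ (2 ^ (p - 1) * ∫⁻ x, (a x ^ p + b x ^ p) ∂μ) ^ (1 / p) * μ univ ^ (1 / t - 1 / p) := by
        gcongr
    _ = _ := by
        rw [ENNReal.mul_rpow_of_nonneg _ _ (by positivity)]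
        ring

-- The inequality for `P` is applied to `|φ| ^ s`; Hölder's inequality puts a lower power of the
-- left-hand side on the right, where it is absorbed.
lemma exists_sobolev_rpow {N : ℕ} {Ω : Set (EuclideanSpace ℝ (Fin N))} (hΩo : IsOpen Ω)
    (hΩb : IsBounded Ω) (hΩ : HasC1Boundary Ω) {P s t : ℝ} (hP : Real.HolderConjugate N P)
    (hs : 1 < s) (ht : (s * P / (s - 1)).HolderConjugate t) :
    ∃ C : ℝ≥0, ∀ φ : EuclideanSpace ℝ (Fin N) → ℝ, ContDiff ℝ 1 φ →
      (∫⁻ x in Ω, ‖φ x‖ₑ ^ (s * P)) ^ (1 / s) ≤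
        C * ((∫⁻ x in Ω, (‖fderiv ℝ φ x‖ₑ + ‖φ x‖ₑ) ^ t) ^ (1 / t)) ^ P := by
  have hP0 : 0 < P := hP.symm.pos
  have hs0 : 0 < s := by linarith
  have hs1 : 0 < s - 1 := by linarith
  obtain ⟨C, hC⟩ := exists_sobolev hΩo hΩb hΩ hP
  refine ⟨C * s.toNNReal ^ P, fun φ hφ => rpow_one_div_le_of_le_mul_rpow hs0
    (setLIntegral_enorm_rpow_ne_top _ hΩb hφ.continuous (by positivity)) ?_⟩
  set A := (∫⁻ x in Ω, (‖fderiv ℝ φ x‖ₑ + ‖φ x‖ₑ) ^ t) ^ (1 / t)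
  have hsob := hC _ (hφ.norm_rpow hs)
  have hholder := lintegral_fderiv_norm_rpow_add_le (volume.restrict Ω) ht hφ hs
  rw [mul_div_cancel₀ _ hs1.ne'] at hholder
  simp_rw [enorm_norm_rpow _ hs0.le, ← ENNReal.rpow_mul] at hsob
  set Y := ∫⁻ x in Ω, ‖φ x‖ₑ ^ (s * P)
  calc Y ≤ C * (s.toNNReal * (Y ^ (1 / (s * P / (s - 1))) * A)) ^ P := hsob.trans (by gcongr)
    _ = C * s.toNNReal ^ P * A ^ P * Y ^ (1 / (s * P / (s - 1)) * P) := by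
        rw [ENNReal.mul_rpow_of_nonneg _ _ hP0.le, ENNReal.mul_rpow_of_nonneg _ _ hP0.le,
          ← ENNReal.rpow_mul]
        ring
    _ = _ := by
        rw [show 1 / (s * P / (s - 1)) * P = (s - 1) / s by field_simp, ENNReal.coe_mul,
          ENNReal.coe_rpow_of_nonneg _ hP0.le]

variable {n : ℕ} {Ω : Set (EuclideanSpace ℝ (Fin (n + 1)))}

lemma exists_sobolev_trace_critical (hΩo : IsOpen Ω) (hΩb : IsBounded Ω)
    (hΩc : IsConnected Ω) (hΩ : HasC1Boundary Ω) {P s t : ℝ}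
    (hP : Real.HolderConjugate (n + 1 : ℕ) P) (hs : 1 < s)
    (ht : (s * P / (s - 1)).HolderConjugate t) :
    ∃ C : ℝ≥0, ∀ φ : EuclideanSpace ℝ (Fin (n + 1)) → ℝ, ContDiff ℝ 1 φ →
      ∫⁻ y, ‖φ y‖ₑ ^ s ∂(bdryMeasure Ω) ≤
        C * ((∫⁻ x in Ω, (‖fderiv ℝ φ x‖ₑ + ‖φ x‖ₑ) ^ t) ^ (1 / t)) ^ s := by
  have hP0 : 0 < P := hP.symm.pos
  have hs0 : 0 < s := by linarith
  have hs1 : 0 < s - 1 := by linarith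
  obtain ⟨C₁, hC₁⟩ := exists_sobolev_rpow hΩo hΩb hΩ hP hs ht
  obtain ⟨C₂, hC₂⟩ := exists_lintegral_bdry_le hΩo hΩb hΩc hΩ
  refine ⟨C₂ * s.toNNReal * C₁ ^ ((s - 1) / P), fun φ hφ => ?_⟩
  have hsob := hC₁ φ hφ
  have htrace := hC₂ _ (hφ.norm_rpow hs)
  have hholder := lintegral_fderiv_norm_rpow_add_le (volume.restrict Ω) ht hφ hs
  rw [mul_div_cancel₀ _ hs1.ne'] at hholder
  simp_rw [enorm_norm_rpow _ hs0.le] at htrace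
  set A := (∫⁻ x in Ω, (‖fderiv ℝ φ x‖ₑ + ‖φ x‖ₑ) ^ t) ^ (1 / t)
  set Y := ∫⁻ x in Ω, ‖φ x‖ₑ ^ (s * P)
  have hY : Y ^ (1 / (s * P / (s - 1))) ≤ C₁ ^ ((s - 1) / P) * A ^ (s - 1) := calc
    _ = (Y ^ (1 / s)) ^ ((s - 1) / P) := by
        rw [← ENNReal.rpow_mul]
        congr 1
        field_simp
    _ ≤ (C₁ * A ^ P) ^ ((s - 1) / P) := by gcongr
    _ = _ := by
        rw [ENNReal.mul_rpow_of_nonneg _ _ (by positivity), ← ENNReal.rpow_mul,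
          mul_div_cancel₀ _ hP0.ne']
  calc _ ≤ C₂ * (s.toNNReal * (C₁ ^ ((s - 1) / P) * A ^ (s - 1) * A)) :=
        htrace.trans (by grw [hholder, hY])
    _ = _ := by
        rw [mul_assoc _ (A ^ (s - 1)), rpow_sub_one_mul_self _ hs.le, ENNReal.coe_mul,
          ENNReal.coe_mul, ENNReal.coe_rpow_of_nonneg _ (by positivity)]
        ring

lemma exists_sobolev_trace (hn : 1 ≤ n) (hΩo : IsOpen Ω) (hΩb : IsBounded Ω)
    (hΩc : IsConnected Ω) (hΩ : HasC1Boundary Ω) {s p : ℝ} (hs : 1 < s) (hp : 1 ≤ p)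
    (hsp : s * (n + 1) ≤ p * (n + s)) :
    ∃ C : ℝ≥0, ∀ φ : EuclideanSpace ℝ (Fin (n + 1)) → ℝ, ContDiff ℝ 1 φ →
      ∫⁻ y, ‖φ y‖ₑ ^ s ∂(bdryMeasure Ω) ≤
        C * (∫⁻ x in Ω, (‖fderiv ℝ φ x‖ₑ ^ p + ‖φ x‖ₑ ^ p)) ^ (s / p) := by
  have hn' : (1 : ℝ) ≤ n := by exact_mod_cast hn
  have : 0 < s - 1 := by linarith
  set t : ℝ := s * (n + 1) / (n + s) with ht
  have ht0 : 0 < t := by positivity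
  have htp : t ≤ p := (div_le_iff₀ (by positivity)).2 hsp
  have hP : Real.HolderConjugate ((n + 1 : ℕ) : ℝ) ((n + 1) / n) := by
    refine Real.holderConjugate_iff.2 ⟨by push_cast; linarith, ?_⟩
    push_cast
    field_simp
    ring
  have hconj : (s * ((n + 1) / n) / (s - 1)).HolderConjugate t := by
    refine (Real.holderConjugate_iff.2 ⟨?_, ?_⟩).symm
    · rw [ht, one_lt_div (by positivity)]
      nlinarith
    · rw [ht]
      field_simp
      ring
  obtain ⟨C, hC⟩ := exists_sobolev_trace_critical hΩo hΩb hΩc hΩ hP hs hconj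
  set K : ℝ≥0∞ := (2 ^ (p - 1)) ^ (1 / p) * volume Ω ^ (1 / t - 1 / p)
  have hKt : K ^ s ≠ ⊤ := ENNReal.rpow_ne_top_of_nonneg (by positivity) <| ENNReal.mul_ne_top
    (ENNReal.rpow_ne_top_of_nonneg (by positivity)
      (ENNReal.rpow_ne_top_of_nonneg (by linarith) ENNReal.ofNat_ne_top))
    (ENNReal.rpow_ne_top_of_nonneg (sub_nonneg.2 (one_div_le_one_div_of_le ht0 htp))
      hΩb.measure_lt_top.ne)
  refine ⟨C * (K ^ s).toNNReal, fun φ hφ => (hC φ hφ).trans ?_⟩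
  have hle := lintegral_add_rpow_le (volume.restrict Ω)
    (hφ.continuous_fderiv one_ne_zero).enorm.measurable.aemeasurable
    hφ.continuous.enorm.measurable.aemeasurable ht0 htp hp
  rw [Measure.restrict_apply_univ] at hle
  grw [hle]
  rw [ENNReal.mul_rpow_of_nonneg K _ (by positivity), ← ENNReal.rpow_mul _ (1 / p),
    one_div_mul_eq_div, ENNReal.coe_mul, ENNReal.coe_toNNReal hKt, mul_assoc]

end SobolevTrace

section LpConvergence

variable {α F G : Type*} [MeasurableSpace α] {m : Measure α} [NormedAddCommGroup F]
  [NormedAddCommGroup G] {p : ℝ≥0∞}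

lemma norm_smul_le_mul_of_le [NormedSpace ℝ F] {a K L : ℝ} {v : F} (ha : ‖a‖ ≤ K)
    (hv : ‖v‖ ≤ L) : ‖a • v‖ ≤ K * L :=
  (norm_smul_le a v).trans (mul_le_mul ha hv (norm_nonneg v) ((norm_nonneg a).trans ha))

lemma tendsto_eLpNorm_zero_of_le {f : ℕ → α → F} {h : ℕ → α → G} (K : ℝ)
    (hle : ∀ n, ∀ᵐ x ∂m, ‖h n x‖ ≤ K * ‖f n x‖)
    (hf : Tendsto (fun n => eLpNorm (f n) p m) atTop (𝓝 0)) :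
    Tendsto (fun n => eLpNorm (h n) p m) atTop (𝓝 0) :=
  tendsto_nhds_bot_mono'
    (by simpa using ENNReal.Tendsto.const_mul hf (.inr (ENNReal.ofReal_ne_top (r := K))))
    fun n => eLpNorm_le_mul_eLpNorm_of_ae_le_mul (hle n) p

lemma tendsto_eLpNorm_zero_add {f h : ℕ → α → F} (hp : 1 ≤ p)
    (hfm : ∀ n, AEStronglyMeasurable (f n) m) (hhm : ∀ n, AEStronglyMeasurable (h n) m)
    (hf : Tendsto (fun n => eLpNorm (f n) p m) atTop (𝓝 0))
    (hh : Tendsto (fun n => eLpNorm (h n) p m) atTop (𝓝 0)) :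
    Tendsto (fun n => eLpNorm (fun x => f n x + h n x) p m) atTop (𝓝 0) :=
  tendsto_nhds_bot_mono' (by simpa using hf.add hh)
    fun n => eLpNorm_add_le (hfm n) (hhm n) hp

lemma tendsto_eLpNorm_zero_of_exponent_le [IsFiniteMeasure m] {f : ℕ → α → F} {r : ℝ≥0∞}
    (hrp : r ≤ p) (hfm : ∀ n, AEStronglyMeasurable (f n) m)
    (hf : Tendsto (fun n => eLpNorm (f n) p m) atTop (𝓝 0)) :
    Tendsto (fun n => eLpNorm (f n) r m) atTop (𝓝 0) := by
  rcases eq_or_ne r 0 with rfl | hr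
  · simp
  have hexp : 0 ≤ 1 / r.toReal - 1 / p.toReal := by
    rw [one_div, one_div, ← ENNReal.toReal_inv, ← ENNReal.toReal_inv, sub_nonneg]
    exact ENNReal.toReal_mono (ENNReal.inv_ne_top.2 hr) (ENNReal.inv_le_inv.2 hrp)
  have hlim := ENNReal.Tendsto.mul_const hf
    (.inr (ENNReal.rpow_ne_top_of_nonneg hexp (measure_ne_top m univ)))
  rw [zero_mul] at hlim
  exact tendsto_nhds_bot_mono' hlim fun n => eLpNorm_le_eLpNorm_mul_rpow_measure_univ hrp (hfm n)

lemma lintegral_enorm_rpow_eq {p : ℝ} (hp : 0 < p) (f : α → F) :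
    ∫⁻ x, ‖f x‖ₑ ^ p ∂m = eLpNorm f (ENNReal.ofReal p) m ^ p := by
  rw [eLpNorm_eq_lintegral_rpow_enorm_toReal (by simpa using hp) ENNReal.ofReal_ne_top,
    ENNReal.toReal_ofReal hp.le, ← ENNReal.rpow_mul, one_div, inv_mul_cancel₀ hp.ne',
    ENNReal.rpow_one]

lemma tendsto_rpow_zero_iff {β : Type*} {l : Filter β} {f : β → ℝ≥0∞} {s : ℝ} (hs : 0 < s) :
    Tendsto (fun x => f x ^ s) l (𝓝 0) ↔ Tendsto f l (𝓝 0) := by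
  constructor <;> intro h
  · simpa [← ENNReal.rpow_mul, hs.ne', hs] using h.ennrpow_const s⁻¹
  · simpa [hs] using h.ennrpow_const s

lemma tendsto_eLpNorm_zero_smul [NormedSpace ℝ F] {g : α → F} {a : ℕ → α → ℝ} {K p : ℝ}
    (hp : 0 < p) (hg : MemLp g (ENNReal.ofReal p) m)
    (ham : ∀ n, AEStronglyMeasurable (a n) m) (hK : ∀ n x, ‖a n x‖ ≤ K)
    (ha : ∀ᵐ x ∂m, Tendsto (fun n => a n x) atTop (𝓝 0)) :
    Tendsto (fun n => eLpNorm (fun x => a n x • g x) (ENNReal.ofReal p) m) atTop (𝓝 0) := by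
  have hgfin : ∫⁻ x, ‖g x‖ₑ ^ p ∂m ≠ ⊤ := by
    rw [lintegral_enorm_rpow_eq hp]
    exact ENNReal.rpow_ne_top_of_nonneg hp.le hg.eLpNorm_ne_top
  rw [← tendsto_rpow_zero_iff hp]
  simp_rw [← lintegral_enorm_rpow_eq hp, enorm_smul, ENNReal.mul_rpow_of_nonneg _ _ hp.le]
  rw [← lintegral_zero (μ := m)]
  refine tendsto_lintegral_of_dominated_convergence'
    (fun x => ENNReal.ofReal K ^ p * ‖g x‖ₑ ^ p)
    (fun n => ((ham n).enorm.pow_const _).mul (hg.1.enorm.pow_const _))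
    (fun n => .of_forall fun x => ?_) ?_ ?_
  · have hKe : ‖a n x‖ₑ ≤ ENNReal.ofReal K := by
      rw [← ofReal_norm]
      exact ENNReal.ofReal_le_ofReal (hK n x)
    exact mul_le_mul_left (ENNReal.rpow_le_rpow hKe hp.le) _
  · rw [lintegral_const_mul' _ _ (ENNReal.rpow_ne_top_of_nonneg hp.le ENNReal.ofReal_ne_top)]
    exact ENNReal.mul_ne_top (ENNReal.rpow_ne_top_of_nonneg hp.le ENNReal.ofReal_ne_top) hgfin
  · filter_upwards [ha] with x hx
    simpa using ENNReal.Tendsto.mul_const ((tendsto_rpow_zero_iff hp).2 (by simpa using hx.enorm))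
      (.inr (ENNReal.rpow_ne_top_of_nonneg hp.le (enorm_ne_top (x := g x))))

lemma tendsto_eLpNorm_smul_sub_smul [NormedSpace ℝ F] {f : ℕ → α → F} {g : α → F}
    {a : ℕ → α → ℝ} {b : α → ℝ} {K p : ℝ} (hp : 1 ≤ p)
    (hfm : ∀ n, AEStronglyMeasurable (f n) m) (hg : MemLp g (ENNReal.ofReal p) m)
    (ham : ∀ n, AEStronglyMeasurable (a n) m) (hbm : AEStronglyMeasurable b m)
    (haK : ∀ n x, ‖a n x‖ ≤ K) (hbK : ∀ x, ‖b x‖ ≤ K)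
    (hf : Tendsto (fun n => eLpNorm (fun x => f n x - g x) (ENNReal.ofReal p) m) atTop (𝓝 0))
    (hab : ∀ᵐ x ∂m, Tendsto (fun n => a n x) atTop (𝓝 (b x))) :
    Tendsto (fun n => eLpNorm (fun x => a n x • f n x - b x • g x) (ENNReal.ofReal p) m)
      atTop (𝓝 0) := by
  have hsplit : ∀ n x, a n x • f n x - b x • g x =
      a n x • (f n x - g x) + (a n x - b x) • g x := fun n x => by module
  simp_rw [hsplit]
  refine tendsto_eLpNorm_zero_add (by simpa using hp)
    (fun n => (ham n).smul ((hfm n).sub hg.1)) (fun n => ((ham n).sub hbm).smul hg.1) ?_ ?_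
  · exact tendsto_eLpNorm_zero_of_le K
      (fun n => .of_forall fun x => norm_smul_le_mul_of_le (haK n x) le_rfl) hf
  · refine tendsto_eLpNorm_zero_smul (K := K + K) (by linarith) hg (fun n => (ham n).sub hbm)
      (fun n x => norm_sub_le_of_le (haK n x) (hbK x)) ?_
    filter_upwards [hab] with x hx
    simpa using hx.sub_const (b x)

lemma tendsto_eLpNorm_of_tendsto_sub {f : ℕ → α → F} {g : α → F} (hp : 1 ≤ p)
    (hfm : ∀ n, AEStronglyMeasurable (f n) m) (hg : MemLp g p m)
    (hf : Tendsto (fun n => eLpNorm (fun x => f n x - g x) p m) atTop (𝓝 0)) :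
    Tendsto (fun n => eLpNorm (f n) p m) atTop (𝓝 (eLpNorm g p m)) := by
  have hlow : ∀ n, eLpNorm g p m - eLpNorm (fun x => f n x - g x) p m ≤ eLpNorm (f n) p m := by
    intro n
    have := eLpNorm_sub_le (hfm n) ((hfm n).sub hg.1) hp
    rw [sub_sub_cancel] at this
    exact tsub_le_iff_right.2 this
  have hupp : ∀ n, eLpNorm (f n) p m ≤ eLpNorm g p m + eLpNorm (fun x => f n x - g x) p m := by
    intro n
    have := eLpNorm_add_le hg.1 ((hfm n).sub hg.1) hp
    rwa [add_sub_cancel] at this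
  refine tendsto_of_tendsto_of_tendsto_of_le_of_le ?_ ?_ hlow hupp
  · simpa using ENNReal.Tendsto.sub tendsto_const_nhds hf (.inl hg.eLpNorm_ne_top)
  · simpa using hf.const_add (eLpNorm g p m)

lemma tendsto_integral_inner_of_tendsto_eLpNorm [InnerProductSpace ℝ F] [IsFiniteMeasure m]
    {f : ℕ → α → F} {g ψ : α → F} {K : ℝ} (hp : 1 ≤ p)
    (hfm : ∀ n, AEStronglyMeasurable (f n) m) (hg : MemLp g p m)
    (hψ : AEStronglyMeasurable ψ m) (hK : ∀ x, ‖ψ x‖ ≤ K)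
    (hf : Tendsto (fun n => eLpNorm (fun x => f n x - g x) p m) atTop (𝓝 0)) :
    Tendsto (fun n => ∫ x, ⟪f n x, ψ x⟫ ∂m) atTop (𝓝 (∫ x, ⟪g x, ψ x⟫ ∂m)) := by
  have hbound : ∀ v x, ‖⟪v, ψ x⟫‖ ≤ K * ‖v‖ := fun v x => by
    rw [mul_comm]
    exact (norm_inner_le_norm _ _).trans (mul_le_mul_of_nonneg_left (hK x) (norm_nonneg v))
  have hint : ∀ v : α → F, MemLp v p m → Integrable (fun x => ⟪v x, ψ x⟫) m := fun v hv =>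
    (hv.of_le_mul (hv.1.inner hψ) (.of_forall fun x => hbound (v x) x)).integrable hp
  refine tendsto_integral_of_L1' _ (hint g hg).aestronglyMeasurable ?_ ?_
  · filter_upwards [hf.eventually_lt_const ENNReal.zero_lt_top] with n hn
    have hsub : MemLp (fun x => f n x - g x) p m := ⟨(hfm n).sub hg.1, hn⟩
    exact hint _ ((hsub.add hg).ae_eq (.of_forall fun x => by simp))
  · refine tendsto_eLpNorm_zero_of_le K (fun n => .of_forall fun x => ?_)
      (tendsto_eLpNorm_zero_of_exponent_le hp (fun n => (hfm n).sub hg.1) hf)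
    rw [Pi.sub_apply, ← inner_sub_left]
    exact hbound _ x

lemma lintegral_le_of_tendsto_ae {f : ℕ → α → ℝ≥0∞} {g : α → ℝ≥0∞} {b : ℕ → ℝ≥0∞} {B : ℝ≥0∞}
    (hf : ∀ n, AEMeasurable (f n) m) (hfg : ∀ᵐ x ∂m, Tendsto (fun n => f n x) atTop (𝓝 (g x)))
    (hfb : ∀ n, ∫⁻ x, f n x ∂m ≤ b n) (hb : Tendsto b atTop (𝓝 B)) : ∫⁻ x, g x ∂m ≤ B := by
  calc ∫⁻ x, g x ∂m = ∫⁻ x, liminf (fun n => f n x) atTop ∂m :=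
        lintegral_congr_ae (hfg.mono fun x hx => hx.liminf_eq.symm)
    _ ≤ liminf (fun n => ∫⁻ x, f n x ∂m) atTop := lintegral_liminf_le' hf
    _ ≤ liminf b atTop := liminf_le_liminf (.of_forall hfb)
    _ = B := hb.liminf_eq

end LpConvergence

section Gradient

variable {E : Type*} [NormedAddCommGroup E] [InnerProductSpace ℝ E] [CompleteSpace E]
  {φ ψ : E → ℝ} {x : E}

lemma norm_gradient (φ : E → ℝ) (x : E) : ‖gradient φ x‖ = ‖fderiv ℝ φ x‖ := by
  rw [← toDual_gradient, LinearIsometryEquiv.norm_map]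

lemma enorm_gradient (φ : E → ℝ) (x : E) : ‖gradient φ x‖ₑ = ‖fderiv ℝ φ x‖ₑ := by
  rw [← ofReal_norm, ← ofReal_norm, norm_gradient]

lemma continuous_gradient {k : WithTop ℕ∞} (hφ : ContDiff ℝ k φ) (hk : k ≠ 0) :
    Continuous (gradient φ) :=
  (InnerProductSpace.toDual ℝ E).symm.continuous.comp (hφ.continuous_fderiv hk)

lemma gradient_fun_neg (φ : E → ℝ) (x : E) :
    gradient (fun y => -φ y) x = -gradient φ x := by
  simp [gradient]

lemma gradient_fun_add (hφ : DifferentiableAt ℝ φ x) (hψ : DifferentiableAt ℝ ψ x) :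
    gradient (fun y => φ y + ψ y) x = gradient φ x + gradient ψ x := by
  simp [gradient, fderiv_fun_add hφ hψ]

lemma gradient_fun_mul (hφ : DifferentiableAt ℝ φ x) (hψ : DifferentiableAt ℝ ψ x) :
    gradient (fun y => φ y * ψ y) x = φ x • gradient ψ x + ψ x • gradient φ x := by
  simp [gradient, fderiv_fun_mul hφ hψ]

lemma gradient_fun_comp {F : ℝ → ℝ} (hF : DifferentiableAt ℝ F (φ x))
    (hφ : DifferentiableAt ℝ φ x) :
    gradient (fun y => F (φ y)) x = deriv F (φ x) • gradient φ x := by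
  have : HasFDerivAt (fun y => F (φ y)) (deriv F (φ x) • fderiv ℝ φ x) x :=
    hF.hasDerivAt.comp_hasFDerivAt x hφ.hasFDerivAt
  simp [gradient, this.fderiv]

end Gradient

lemma memLp_comp_of_lipschitz {α : Type*} [MeasurableSpace α] {m : Measure α} [IsFiniteMeasure m]
    {F : ℝ → ℝ} {K : ℝ≥0} (hF : LipschitzWith K F) {v : α → ℝ} {p : ℝ≥0∞} (hv : MemLp v p m) :
    MemLp (fun x => F (v x)) p m := by
  have hF0 : LipschitzWith K fun s => F s - F 0 := by
    simpa using hF.sub (LipschitzWith.const (F 0))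
  refine ((hF0.comp_memLp (by simp) hv).add (memLp_const (F 0))).ae_eq (.of_forall fun x => ?_)
  simp

section WeakGradient

variable {N : ℕ} {Ω : Set (EuclideanSpace ℝ (Fin N))} {p : ℝ}
  {φ : ℕ → EuclideanSpace ℝ (Fin N) → ℝ} {u : EuclideanSpace ℝ (Fin N) → ℝ}
  {g : EuclideanSpace ℝ (Fin N) → EuclideanSpace ℝ (Fin N)}

lemma isWeakGradient_gradient (Ω : Set (EuclideanSpace ℝ (Fin N)))
    {f : EuclideanSpace ℝ (Fin N) → ℝ} (hf : ContDiff ℝ 1 f) :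
    IsWeakGradient Ω f (gradient f) := by
  intro ψ hψ hψc hψΩ v
  have hψ0 : ∀ x ∉ Ω, ψ x = 0 := fun x hx =>
    image_eq_zero_of_notMem_tsupport fun hx' => hx (hψΩ hx')
  have hdψ0 : ∀ x ∉ Ω, fderiv ℝ ψ x = 0 := fun x hx =>
    image_eq_zero_of_notMem_tsupport fun hx' => hx (hψΩ (tsupport_fderiv_subset ℝ hx'))
  have hfc := hf.continuous
  have : Continuous (fderiv ℝ f) := hf.continuous_fderiv one_ne_zero
  have hψcont := hψ.continuous
  have hdψ := hψ.continuous_fderiv (by simp)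
  have hdψc : HasCompactSupport fun x => fderiv ℝ ψ x v := hψc.fderiv_apply ℝ v
  rw [setIntegral_eq_integral_of_forall_compl_eq_zero (fun x hx => by simp [hdψ0 x hx]),
    setIntegral_eq_integral_of_forall_compl_eq_zero (fun x hx => by simp [hψ0 x hx])]
  simp_rw [inner_gradient_left, mul_comm (ψ _)]
  refine integral_mul_fderiv_eq_neg_fderiv_mul_of_integrable ?_ ?_ ?_
    (fun x _ => hf.differentiable one_ne_zero x) (fun x _ => hψ.differentiable (by simp) x)
  · exact Continuous.integrable_of_hasCompactSupport (by fun_prop) hψc.mul_left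
  · exact Continuous.integrable_of_hasCompactSupport (by fun_prop) hdψc.mul_left
  · exact Continuous.integrable_of_hasCompactSupport (by fun_prop) hψc.mul_left

namespace TendstoW1p

lemma isWeakGradient [IsFiniteMeasure (volume.restrict Ω)] (h : TendstoW1p Ω p φ u g)
    (hφ : ∀ j, ContDiff ℝ 1 (φ j)) (hp : 1 ≤ p)
    (hu : MemLp u (ENNReal.ofReal p) (volume.restrict Ω))
    (hg : MemLp g (ENNReal.ofReal p) (volume.restrict Ω)) : IsWeakGradient Ω u g := by
  intro ψ hψ hψc hψΩ v
  have hp1 : 1 ≤ ENNReal.ofReal p := by simpa using hp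
  have hψcont := hψ.continuous
  have hdψ := hψ.continuous_fderiv (by simp)
  have hdψv : Continuous fun x => fderiv ℝ ψ x v := by fun_prop
  obtain ⟨K, hK⟩ := hdψv.bounded_above_of_compact_support (hψc.fderiv_apply ℝ v)
  obtain ⟨Z, hZ⟩ := hψcont.bounded_above_of_compact_support hψc
  have hleft := tendsto_integral_inner_of_tendsto_eLpNorm hp1
    (fun j => (hφ j).continuous.aestronglyMeasurable) hu hdψv.aestronglyMeasurable hK h.1
  have hright := tendsto_integral_inner_of_tendsto_eLpNorm (ψ := fun x => ψ x • v) hp1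
    (fun j => (continuous_gradient (hφ j) one_ne_zero).aestronglyMeasurable) hg
    (by fun_prop) (fun x => norm_smul_le_mul_of_le (hZ x) le_rfl) h.2
  simp only [real_inner_smul_right] at hright
  simp only [RCLike.inner_apply, conj_trivial, mul_comm (fderiv ℝ ψ _ v)] at hleft
  refine tendsto_nhds_unique hleft (hright.neg.congr fun j => ?_)
  exact (isWeakGradient_gradient Ω (hφ j) ψ hψ hψc hψΩ v).symm

lemma tendsto_lintegral (h : TendstoW1p Ω p φ u g) (hφ : ∀ j, ContDiff ℝ 1 (φ j)) (hp : 1 ≤ p)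
    (hu : MemLp u (ENNReal.ofReal p) (volume.restrict Ω))
    (hg : MemLp g (ENNReal.ofReal p) (volume.restrict Ω)) :
    Tendsto (fun j => ∫⁻ x in Ω, (‖fderiv ℝ (φ j) x‖ₑ ^ p + ‖φ j x‖ₑ ^ p)) atTop
      (𝓝 (∫⁻ x in Ω, (‖g x‖ₑ ^ p + ‖u x‖ₑ ^ p))) := by
  have hp0 : 0 < p := by linarith
  have hp1 : 1 ≤ ENNReal.ofReal p := by simpa using hp
  have hgrad := fun j => continuous_gradient (hφ j) one_ne_zero
  simp_rw [← enorm_gradient]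
  rw [lintegral_add_left' (hg.1.enorm.pow_const _)]
  simp_rw [fun j => lintegral_add_left (μ := volume.restrict Ω)
    ((hgrad j).enorm.measurable.pow_const p) (fun x => ‖φ j x‖ₑ ^ p), lintegral_enorm_rpow_eq hp0]
  exact ((tendsto_eLpNorm_of_tendsto_sub hp1 (fun j => (hgrad j).aestronglyMeasurable) hg
      h.2).ennrpow_const p).add
    ((tendsto_eLpNorm_of_tendsto_sub hp1 (fun j => (hφ j).continuous.aestronglyMeasurable) hu
      h.1).ennrpow_const p)

lemma tendsto_lintegral_fderiv [IsFiniteMeasure (volume.restrict Ω)] (h : TendstoW1p Ω p φ u g)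
    (hφ : ∀ j, ContDiff ℝ 1 (φ j)) (hp : 1 ≤ p)
    (hg : MemLp g (ENNReal.ofReal p) (volume.restrict Ω)) :
    Tendsto (fun j => ∫⁻ x in Ω, ‖fderiv ℝ (φ j) x‖ₑ) atTop (𝓝 (∫⁻ x in Ω, ‖g x‖ₑ)) := by
  have hp1 : 1 ≤ ENNReal.ofReal p := by simpa using hp
  have hgrad := fun j => (continuous_gradient (hφ j) one_ne_zero).aestronglyMeasurable
    (μ := volume.restrict Ω)
  simp_rw [← enorm_gradient, ← eLpNorm_one_eq_lintegral_enorm]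
  exact tendsto_eLpNorm_of_tendsto_sub le_rfl hgrad (hg.mono_exponent hp1)
    (tendsto_eLpNorm_zero_of_exponent_le hp1 (fun j => (hgrad j).sub hg.1) h.2)

end TendstoW1p

end WeakGradient

/-- `u ∈ L^p(Ω)` is the limit in `W^{1,p}(Ω)` of functions smooth up to the boundary, with gradient
`g` and trace `τ`. Unlike in `MemW1p`, that `g` is the weak gradient of `u` is not part of the
definition: it follows from the approximation, see `HasTrace.isWeakGradient`. -/
structure HasTrace {N : ℕ} (Ω : Set (EuclideanSpace ℝ (Fin N))) (p : ℝ)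
    (u : EuclideanSpace ℝ (Fin N) → ℝ)
    (g : EuclideanSpace ℝ (Fin N) → EuclideanSpace ℝ (Fin N))
    (τ : EuclideanSpace ℝ (Fin N) → ℝ) : Prop where
  memLp : MemLp u (ENNReal.ofReal p) (volume.restrict Ω)
  memLp_grad : MemLp g (ENNReal.ofReal p) (volume.restrict Ω)
  isTrace : IsTrace Ω p u g τ

namespace HasTrace

section Operations

variable {N : ℕ} {Ω : Set (EuclideanSpace ℝ (Fin N))} {p : ℝ}
  {u u' : EuclideanSpace ℝ (Fin N) → ℝ}
  {g g' : EuclideanSpace ℝ (Fin N) → EuclideanSpace ℝ (Fin N)}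
  {τ τ' : EuclideanSpace ℝ (Fin N) → ℝ}

lemma exists_seq (h : HasTrace Ω p u g τ) (hp : 0 < p) :
    ∃ φ : ℕ → EuclideanSpace ℝ (Fin N) → ℝ, (∀ j, ContDiff ℝ ∞ (φ j)) ∧ TendstoW1p Ω p φ u g ∧
      Tendsto (fun j => eLpNorm (fun x => φ j x - τ x) (ENNReal.ofReal p) (bdryMeasure Ω))
        atTop (𝓝 0) ∧
      (∀ᵐ x ∂(volume.restrict Ω), Tendsto (fun j => φ j x) atTop (𝓝 (u x))) ∧
      ∀ᵐ x ∂(bdryMeasure Ω), Tendsto (fun j => φ j x) atTop (𝓝 (τ x)) := by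
  obtain ⟨hτ, φ, hφ, ⟨hφu, hφg⟩, hφτ⟩ := h.isTrace
  have hp0 : ENNReal.ofReal p ≠ 0 := by simpa using hp
  obtain ⟨ns, hns, hae⟩ := (tendstoInMeasure_of_tendsto_eLpNorm (f := φ) (g := u) hp0
    (fun j => (hφ j).continuous.aestronglyMeasurable) h.memLp.1 hφu).exists_seq_tendsto_ae
  obtain ⟨ms, hms, hae'⟩ := (tendstoInMeasure_of_tendsto_eLpNorm (f := fun j => φ (ns j)) (g := τ)
    hp0 (fun j => (hφ _).continuous.aestronglyMeasurable) hτ.1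
    (hφτ.comp hns.tendsto_atTop)).exists_seq_tendsto_ae
  have hsub : Tendsto (fun j => ns (ms j)) atTop atTop :=
    hns.tendsto_atTop.comp hms.tendsto_atTop
  exact ⟨fun j => φ (ns (ms j)), fun j => hφ _, ⟨hφu.comp hsub, hφg.comp hsub⟩, hφτ.comp hsub,
    hae.mono fun x hx => hx.comp hms.tendsto_atTop, hae'⟩

lemma comp [IsFiniteMeasure (volume.restrict Ω)] [IsFiniteMeasure (bdryMeasure Ω)]
    (h : HasTrace Ω p u g τ) (hp : 1 ≤ p) {F : ℝ → ℝ} (hF : ContDiff ℝ ∞ F) {K : ℝ≥0}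
    (hFK : LipschitzWith K F) :
    HasTrace Ω p (fun x => F (u x)) (fun x => deriv F (u x) • g x) (fun x => F (τ x)) := by
  obtain ⟨φ, hφ, ⟨hφu, hφg⟩, hφτ, hae, -⟩ := h.exists_seq (by linarith)
  have hFd : Differentiable ℝ F := hF.differentiable (by simp)
  have hF' : Continuous (deriv F) := hF.continuous_deriv (by simp)
  have hK : ∀ s, ‖deriv F s‖ ≤ K := fun s => norm_deriv_le_of_lipschitz hFK
  have hdu : AEStronglyMeasurable (fun x => deriv F (u x)) (volume.restrict Ω) :=
    hF'.comp_aestronglyMeasurable h.memLp.1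
  have hFsub : ∀ j (v : EuclideanSpace ℝ (Fin N) → ℝ) x,
      ‖F (φ j x) - F (v x)‖ ≤ K * ‖φ j x - v x‖ := fun j v x => hFK.norm_sub_le _ _
  refine ⟨memLp_comp_of_lipschitz hFK h.memLp,
    h.memLp_grad.of_le_mul (hdu.smul h.memLp_grad.1)
      (.of_forall fun x => norm_smul_le_mul_of_le (hK _) le_rfl),
    memLp_comp_of_lipschitz hFK h.isTrace.1, fun j x => F (φ j x), fun j => hF.comp (hφ j),
    ⟨tendsto_eLpNorm_zero_of_le K (fun j => .of_forall (hFsub j u)) hφu, ?_⟩,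
    tendsto_eLpNorm_zero_of_le K (fun j => .of_forall (hFsub j τ)) hφτ⟩
  simp_rw [fun j x => gradient_fun_comp (hFd (φ j x)) ((hφ j).differentiable (by simp) x)]
  exact tendsto_eLpNorm_smul_sub_smul hp
    (fun j => (continuous_gradient (hφ j) (by simp)).aestronglyMeasurable) h.memLp_grad
    (fun j => (hF'.comp (hφ j).continuous).aestronglyMeasurable) hdu (fun j x => hK _)
    (fun x => hK _) hφg (hae.mono fun x hx => (hF'.tendsto _).comp hx)

lemma smooth_mul (h : HasTrace Ω p u g τ) (hp : 1 ≤ p) {η : EuclideanSpace ℝ (Fin N) → ℝ}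
    (hη : ContDiff ℝ ∞ η) {K Z : ℝ} (hK : ∀ x, |η x| ≤ K) (hZ : ∀ x, ‖fderiv ℝ η x‖ ≤ Z) :
    HasTrace Ω p (fun x => η x * u x) (fun x => η x • g x + u x • gradient η x)
      (fun x => η x * τ x) := by
  obtain ⟨φ, hφ, ⟨hφu, hφg⟩, hφτ, -, -⟩ := h.exists_seq (by linarith)
  have hηc := hη.continuous
  have hgc := continuous_gradient hη (by simp)
  have hη_mul : ∀ s x, ‖η x * s‖ ≤ K * ‖s‖ := fun s x => norm_mul_le_of_le (hK x) le_rfl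
  have hη_smul : ∀ (v : EuclideanSpace ℝ (Fin N)) x, ‖η x • v‖ ≤ K * ‖v‖ := fun v x =>
    norm_smul_le_mul_of_le (hK x) le_rfl
  have hη_grad : ∀ (s : ℝ) x, ‖s • gradient η x‖ ≤ Z * ‖s‖ := fun s x => by
    rw [mul_comm]
    exact norm_smul_le_mul_of_le le_rfl ((norm_gradient η x).trans_le (hZ x))
  have hgrad : ∀ j x, gradient (fun x => η x * φ j x) x - (η x • g x + u x • gradient η x) =
      η x • (gradient (φ j) x - g x) + (φ j x - u x) • gradient η x := fun j x => by
    rw [gradient_fun_mul (hη.differentiable (by simp) x) ((hφ j).differentiable (by simp) x)]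
    module
  refine ⟨h.memLp.of_le_mul (hηc.aestronglyMeasurable.mul h.memLp.1)
      (.of_forall fun x => hη_mul _ x),
    .add (h.memLp_grad.of_le_mul (hηc.aestronglyMeasurable.smul h.memLp_grad.1)
      (.of_forall fun x => hη_smul _ x))
      (h.memLp.of_le_mul (h.memLp.1.smul hgc.aestronglyMeasurable)
      (.of_forall fun x => hη_grad _ x)),
    h.isTrace.1.of_le_mul (hηc.aestronglyMeasurable.mul h.isTrace.1.1)
      (.of_forall fun x => hη_mul _ x),
    fun j x => η x * φ j x, fun j => hη.mul (hφ j), ⟨?_, ?_⟩, ?_⟩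
  · simp_rw [← mul_sub]
    exact tendsto_eLpNorm_zero_of_le K (fun j => .of_forall fun x => hη_mul _ x) hφu
  · simp_rw [hgrad]
    exact tendsto_eLpNorm_zero_add (by simpa using hp)
      (fun j => hηc.aestronglyMeasurable.smul
        ((continuous_gradient (hφ j) (by simp)).aestronglyMeasurable.sub h.memLp_grad.1))
      (fun j => ((hφ j).continuous.aestronglyMeasurable.sub h.memLp.1).smul
        hgc.aestronglyMeasurable)
      (tendsto_eLpNorm_zero_of_le K (fun j => .of_forall fun x => hη_smul _ x) hφg)
      (tendsto_eLpNorm_zero_of_le Z (fun j => .of_forall fun x => hη_grad _ x) hφu)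
  · simp_rw [← mul_sub]
    exact tendsto_eLpNorm_zero_of_le K (fun j => .of_forall fun x => hη_mul _ x) hφτ

lemma neg (h : HasTrace Ω p u g τ) :
    HasTrace Ω p (fun x => -u x) (fun x => -g x) (fun x => -τ x) := by
  obtain ⟨hτ, φ, hφ, ⟨hφu, hφg⟩, hφτ⟩ := h.isTrace
  have hneg : ∀ {F : Type} [NormedAddCommGroup F] (a b : F), ‖-a - -b‖ ≤ 1 * ‖a - b‖ :=
    fun a b => by rw [one_mul, neg_sub_neg, norm_sub_rev]
  refine ⟨h.memLp.neg, h.memLp_grad.neg, hτ.neg, fun j x => -φ j x, fun j => (hφ j).neg,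
    ⟨tendsto_eLpNorm_zero_of_le 1 (fun j => .of_forall fun x => hneg _ _) hφu,
      tendsto_eLpNorm_zero_of_le 1 (fun j => .of_forall fun x => ?_) hφg⟩,
    tendsto_eLpNorm_zero_of_le 1 (fun j => .of_forall fun x => hneg _ _) hφτ⟩
  rw [gradient_fun_neg]
  exact hneg _ _

lemma add (h : HasTrace Ω p u g τ) (h' : HasTrace Ω p u' g' τ') (hp : 1 ≤ p) :
    HasTrace Ω p (fun x => u x + u' x) (fun x => g x + g' x) (fun x => τ x + τ' x) := by
  obtain ⟨hτ, φ, hφ, ⟨hφu, hφg⟩, hφτ⟩ := h.isTrace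
  obtain ⟨hτ', ψ, hψ, ⟨hψu, hψg⟩, hψτ⟩ := h'.isTrace
  have hp1 : 1 ≤ ENNReal.ofReal p := by simpa using hp
  have hgrad : ∀ j x, gradient (fun x => φ j x + ψ j x) x =
      gradient (φ j) x + gradient (ψ j) x := fun j x =>
    gradient_fun_add ((hφ j).differentiable (by simp) x) ((hψ j).differentiable (by simp) x)
  refine ⟨h.memLp.add h'.memLp, h.memLp_grad.add h'.memLp_grad, hτ.add hτ',
    fun j x => φ j x + ψ j x, fun j => (hφ j).add (hψ j), ⟨?_, ?_⟩, ?_⟩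
  · simp_rw [add_sub_add_comm]
    exact tendsto_eLpNorm_zero_add hp1
      (fun j => (hφ j).continuous.aestronglyMeasurable.sub h.memLp.1)
      (fun j => (hψ j).continuous.aestronglyMeasurable.sub h'.memLp.1) hφu hψu
  · simp_rw [hgrad, add_sub_add_comm]
    exact tendsto_eLpNorm_zero_add hp1
      (fun j => (continuous_gradient (hφ j) (by simp)).aestronglyMeasurable.sub h.memLp_grad.1)
      (fun j => (continuous_gradient (hψ j) (by simp)).aestronglyMeasurable.sub h'.memLp_grad.1)
      hφg hψg
  · simp_rw [add_sub_add_comm]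
    exact tendsto_eLpNorm_zero_add hp1
      (fun j => (hφ j).continuous.aestronglyMeasurable.sub hτ.1)
      (fun j => (hψ j).continuous.aestronglyMeasurable.sub hτ'.1) hφτ hψτ

lemma isWeakGradient [IsFiniteMeasure (volume.restrict Ω)] (h : HasTrace Ω p u g τ) (hp : 1 ≤ p) :
    IsWeakGradient Ω u g := by
  obtain ⟨-, φ, hφ, hlim, -⟩ := h.isTrace
  exact hlim.isWeakGradient (fun j => (hφ j).of_le (by simp)) hp h.memLp h.memLp_grad

lemma memW1p [IsFiniteMeasure (volume.restrict Ω)] (h : HasTrace Ω p u g τ) (hp : 1 ≤ p) :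
    MemW1p Ω p u g :=
  ⟨h.memLp, h.memLp_grad, h.isWeakGradient hp⟩

end Operations

section Boundary

variable {n : ℕ} {Ω : Set (EuclideanSpace ℝ (Fin (n + 1)))}

lemma exists_lintegral_trace_le (hn : 1 ≤ n) (hΩo : IsOpen Ω) (hΩb : IsBounded Ω)
    (hΩc : IsConnected Ω) (hΩ : HasC1Boundary Ω) {s p : ℝ} (hs : 1 < s) (hp : 1 ≤ p)
    (hsp : s * (n + 1) ≤ p * (n + s)) :
    ∃ C : ℝ≥0, ∀ u g τ, HasTrace Ω p u g τ →
      ∫⁻ y, ‖τ y‖ₑ ^ s ∂(bdryMeasure Ω) ≤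
        C * (∫⁻ x in Ω, (‖g x‖ₑ ^ p + ‖u x‖ₑ ^ p)) ^ (s / p) := by
  obtain ⟨C, hC⟩ := exists_sobolev_trace hn hΩo hΩb hΩc hΩ hs hp hsp
  refine ⟨C, fun u g τ h => ?_⟩
  obtain ⟨φ, hφ, hlim, -, -, hae⟩ := h.exists_seq (by linarith)
  have hφ1 : ∀ j, ContDiff ℝ 1 (φ j) := fun j => (hφ j).of_le (by simp)
  exact lintegral_le_of_tendsto_ae
    (fun j => ((hφ j).continuous.enorm.measurable.pow_const s).aemeasurable)
    (hae.mono fun y hy => hy.enorm.ennrpow_const s) (fun j => hC (φ j) (hφ1 j))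
    (ENNReal.Tendsto.const_mul
      ((hlim.tendsto_lintegral hφ1 hp h.memLp h.memLp_grad).ennrpow_const (s / p))
      (.inr ENNReal.coe_ne_top))

lemma lintegral_lintegral_trace_le [IsFiniteMeasure (volume.restrict Ω)]
    [IsFiniteMeasure (bdryMeasure Ω)] {C : ℝ≥0}
    (hC : ∀ φ : EuclideanSpace ℝ (Fin (n + 1)) → ℝ, ContDiff ℝ 1 φ →
      ∫⁻ y, (∫⁻ z, ‖φ y - φ z‖ₑ ∂(bdryMeasure Ω)) ∂(bdryMeasure Ω) ≤
        C * ∫⁻ x in Ω, ‖fderiv ℝ φ x‖ₑ)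
    {p : ℝ} {u : EuclideanSpace ℝ (Fin (n + 1)) → ℝ}
    {g : EuclideanSpace ℝ (Fin (n + 1)) → EuclideanSpace ℝ (Fin (n + 1))}
    {τ : EuclideanSpace ℝ (Fin (n + 1)) → ℝ} (h : HasTrace Ω p u g τ) (hp : 1 ≤ p) :
    ∫⁻ y, (∫⁻ z, ‖τ y - τ z‖ₑ ∂(bdryMeasure Ω)) ∂(bdryMeasure Ω) ≤ C * ∫⁻ x in Ω, ‖g x‖ₑ := by
  obtain ⟨φ, hφ, hlim, -, -, hae⟩ := h.exists_seq (by linarith)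
  have hφ1 : ∀ j, ContDiff ℝ 1 (φ j) := fun j => (hφ j).of_le (by simp)
  have hφm : ∀ j, Measurable
      fun z : EuclideanSpace ℝ (Fin (n + 1)) × EuclideanSpace ℝ (Fin (n + 1)) =>
        ‖φ j z.1 - φ j z.2‖ₑ := fun j => by
    have := (hφ j).continuous
    exact Continuous.measurable (by fun_prop)
  have hτ := h.isTrace.1.1
  rw [← lintegral_prod (fun z => ‖τ z.1 - τ z.2‖ₑ) (hτ.comp_fst.sub hτ.comp_snd).enorm]
  refine lintegral_le_of_tendsto_ae (f := fun j z => ‖φ j z.1 - φ j z.2‖ₑ)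
    (fun j => (hφm j).aemeasurable) ?_ (fun j => ?_)
    (ENNReal.Tendsto.const_mul (hlim.tendsto_lintegral_fderiv hφ1 hp h.memLp_grad)
      (.inr ENNReal.coe_ne_top))
  · filter_upwards [Measure.quasiMeasurePreserving_fst.ae hae,
      Measure.quasiMeasurePreserving_snd.ae hae] with z hz₁ hz₂
    exact (hz₁.sub hz₂).enorm
  · rw [lintegral_prod _ (hφm j).aemeasurable]
    exact hC (φ j) (hφ1 j)

end Boundary

end HasTrace

lemma measure_mul_lintegral_enorm_le {α F : Type*} [MeasurableSpace α] [SeminormedAddCommGroup F]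
    {μ : Measure α} {Γ : Set α} (hΓ : NullMeasurableSet Γ μ) {f : α → F}
    (hf : ∀ᵐ x ∂μ, x ∈ Γ → f x = 0) :
    μ Γ * ∫⁻ y, ‖f y‖ₑ ∂μ ≤ ∫⁻ y, (∫⁻ z, ‖f y - f z‖ₑ ∂μ) ∂μ := by
  refine (lintegral_const_mul_le _ _).trans (lintegral_mono fun y => ?_)
  calc μ Γ * ‖f y‖ₑ = ∫⁻ _ in Γ, ‖f y‖ₑ ∂μ := by rw [setLIntegral_const, mul_comm]
    _ = ∫⁻ z in Γ, ‖f y - f z‖ₑ ∂μ := by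
        refine lintegral_congr_ae (((ae_restrict_iff'₀ hΓ).2 hf).mono fun z hz => ?_)
        simp only [hz, sub_zero]
    _ ≤ ∫⁻ z, ‖f y - f z‖ₑ ∂μ := setLIntegral_le_lintegral _ _

section Boundary

variable {n : ℕ} {Ω : Set (EuclideanSpace ℝ (Fin (n + 1)))}

lemma exists_measure_mul_lintegral_trace_le (hΩo : IsOpen Ω) (hΩb : IsBounded Ω)
    (hΩc : IsConnected Ω) (hΩ : HasC1Boundary Ω) {p : ℝ} (hp : 1 ≤ p) :
    ∃ C : ℝ≥0, ∀ u g τ Γ, HasTrace Ω p u g τ → NullMeasurableSet Γ (bdryMeasure Ω) →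
      (∀ᵐ x ∂(bdryMeasure Ω), x ∈ Γ → τ x = 0) →
      bdryMeasure Ω Γ * ∫⁻ y, ‖τ y‖ₑ ∂(bdryMeasure Ω) ≤ C * ∫⁻ x in Ω, ‖g x‖ₑ := by
  have := isFiniteMeasure_bdryMeasure hΩo hΩb hΩ
  have : IsFiniteMeasure (volume.restrict Ω) := isFiniteMeasure_restrict.2 hΩb.measure_lt_top.ne
  obtain ⟨C, hC⟩ := oscBound_bdry_bdry hΩo hΩb hΩc hΩ
  exact ⟨C, fun u g τ Γ h hΓm hΓ => (measure_mul_lintegral_enorm_le hΓm hΓ).trans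
    (h.lintegral_lintegral_trace_le hC hp)⟩

lemma MemW1p0.hasTrace_zero {p : ℝ} {u : EuclideanSpace ℝ (Fin (n + 1)) → ℝ}
    {g : EuclideanSpace ℝ (Fin (n + 1)) → EuclideanSpace ℝ (Fin (n + 1))}
    (h : MemW1p0 Ω p u g) (hΩo : IsOpen Ω) : HasTrace Ω p u g fun _ => 0 := by
  obtain ⟨hu, φ, hφ, hlim⟩ := h
  refine ⟨hu.memLp, hu.memLp_grad, .zero, φ, fun j => (hφ j).1, hlim, ?_⟩
  have hφ0 : ∀ j, φ j =ᵐ[bdryMeasure Ω] 0 := fun j => by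
    filter_upwards [ae_mem_frontier Ω] with y hy
    rw [hΩo.frontier_eq] at hy
    exact image_eq_zero_of_notMem_tsupport fun hy' => hy.2 ((hφ j).2.2 hy')
  simp only [sub_zero, eLpNorm_congr_ae (hφ0 _), eLpNorm_zero, tendsto_const_nhds]

lemma HasTrace.ae_eq_zero_of_memW1p0 {p : ℝ} {u : EuclideanSpace ℝ (Fin (n + 1)) → ℝ}
    {g : EuclideanSpace ℝ (Fin (n + 1)) → EuclideanSpace ℝ (Fin (n + 1))}
    {τ : EuclideanSpace ℝ (Fin (n + 1)) → ℝ} (h : HasTrace Ω p u g τ) (h0 : MemW1p0 Ω p u g)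
    (hn : 1 ≤ n) (hΩo : IsOpen Ω) (hΩb : IsBounded Ω) (hΩc : IsConnected Ω)
    (hΩ : HasC1Boundary Ω) (hp : 1 < p) : τ =ᵐ[bdryMeasure Ω] 0 := by
  obtain ⟨C, hC⟩ := exists_lintegral_trace_le hn hΩo hΩb hΩc hΩ hp hp.le (by gcongr)
  have hp0 : 0 < p := by linarith
  have hτ := hC _ _ _ (h.add (h0.hasTrace_zero hΩo).neg hp.le)
  simp only [add_neg_cancel, neg_zero, add_zero, enorm_zero, ENNReal.zero_rpow_of_pos hp0,
    div_self hp0.ne', lintegral_const, zero_mul, mul_zero, ENNReal.rpow_one, nonpos_iff_eq_zero,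
    lintegral_enorm_rpow_eq hp0, ENNReal.rpow_eq_zero_iff_of_pos hp0] at hτ
  exact (eLpNorm_eq_zero_iff h.isTrace.1.1 (by simpa using hp0)).1 hτ

end Boundary

section ExactMeasure

lemma continuous_measureReal_Iic (ν : Measure ℝ) [IsFiniteMeasure ν] [NullSingletonClass ν] :
    Continuous fun t => ν.real (Iic t) := by
  have hprim : Continuous fun t => ∫ _ in (0 : ℝ)..t, (1 : ℝ) ∂ν :=
    intervalIntegral.continuous_primitive (fun _ _ => ⟨integrableOn_const, integrableOn_const⟩) 0
  refine (continuous_const.add hprim).congr (f := fun t => ν.real (Iic 0) + _) fun t => ?_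
  rw [← intervalIntegral.integral_Iic_sub_Iic integrableOn_const integrableOn_const]
  simp

lemma tendsto_measure_Iic_atBot_zero (ν : Measure ℝ) [IsFiniteMeasure ν] [NullSingletonClass ν] :
    Tendsto (fun t => ν (Iic t)) atBot (𝓝 0) := by
  have hcompl : ∀ t, ν univ - ν (Ici t) = ν (Iic t) := fun t => by
    rw [← measure_compl measurableSet_Ici (measure_ne_top _ _), compl_Ici]
    exact measure_congr Iio_ae_eq_Iic
  have hsub := ENNReal.Tendsto.sub (tendsto_const_nhds (x := ν univ)) (tendsto_measure_Ici_atBot ν)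
    (.inl (measure_ne_top _ _))
  simpa only [hcompl, tsub_self] using hsub

lemma exists_measure_Iic_eq (ν : Measure ℝ) [IsFiniteMeasure ν] [NullSingletonClass ν] {c : ℝ≥0∞}
    (h0 : 0 < c) (hc : c < ν univ) : ∃ t, ν (Iic t) = c := by
  have hctop : c ≠ ⊤ := hc.ne_top
  obtain ⟨a, ha⟩ := ((tendsto_measure_Iic_atBot_zero ν).eventually (gt_mem_nhds h0)).exists
  obtain ⟨b, hb⟩ := ((tendsto_measure_Iic_atTop ν).eventually (lt_mem_nhds hc)).exists
  obtain ⟨t, ht⟩ := mem_range_of_exists_le_of_exists_ge (c := c.toReal)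
    (continuous_measureReal_Iic ν) ⟨a, ENNReal.toReal_mono hctop ha.le⟩
    ⟨b, ENNReal.toReal_mono (measure_ne_top _ _) hb.le⟩
  exact ⟨t, (ENNReal.toReal_eq_toReal_iff' (measure_ne_top _ _) hctop).1 ht⟩

-- A Borel isomorphism with the real line reduces this to the continuity of `t ↦ ν (Iic t)`.
lemma exists_measurableSet_subset_measure_eq {X : Type*} [MeasurableSpace X] [StandardBorelSpace X]
    (μ : Measure X) [IsFiniteMeasure μ] [NullSingletonClass μ] {A : Set X}
    (hA : NullMeasurableSet A μ) {c : ℝ≥0∞} (hc : c ≤ μ A) :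
    ∃ B ⊆ A, MeasurableSet B ∧ μ B = c := by
  obtain ⟨A', hA'A, hA'm, hA'e⟩ := hA.exists_measurable_subset_ae_eq
  rw [← measure_congr hA'e] at hc
  rcases eq_or_ne c 0 with rfl | h0
  · exact ⟨∅, empty_subset _, .empty, measure_empty⟩
  rcases hc.eq_or_lt with rfl | hlt
  · exact ⟨A', hA'A, hA'm, rfl⟩
  have hX : ¬ Countable X := fun h => by simp [(to_countable A').measure_zero μ] at hlt
  let e : X ≃ᵐ ℝ := PolishSpace.measurableEquivOfNotCountable hX not_countable
  let ν := (μ.restrict A').map e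
  have : NullSingletonClass ν := ⟨fun t => by
    rw [e.map_apply, show e ⁻¹' {t} = {e.symm t} by ext; simp [e.eq_symm_apply]]
    exact measure_singleton _⟩
  have hν : c < ν univ := by simpa [ν, e.map_apply] using hlt
  obtain ⟨t, ht⟩ := exists_measure_Iic_eq ν (pos_iff_ne_zero.2 h0) hν
  have hm := e.measurable (measurableSet_Iic (a := t))
  refine ⟨e ⁻¹' Iic t ∩ A', inter_subset_right.trans hA'A, hm.inter hA'm, ?_⟩
  rw [← Measure.restrict_apply hm, ← e.map_apply]
  exact ht
lemma ofReal_mul_le_measure_sdiff {X : Type*} [MeasurableSpace X] {μ : Measure X}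
    [IsFiniteMeasure μ] {A B : Set X} {m : ℝ≥0∞} {α β : ℝ} (hα : 0 ≤ α) (hαβ : α ≤ β)
    (hA : μ A = ENNReal.ofReal β * m) (hB : μ B ≤ ENNReal.ofReal (β - α) * m) :
    ENNReal.ofReal α * m ≤ μ (A \ B) := by
  refine le_trans (ENNReal.le_sub_of_add_le_right (measure_ne_top μ B) ?_) le_measure_sdiff
  calc ENNReal.ofReal α * m + μ B ≤ ENNReal.ofReal α * m + ENNReal.ofReal (β - α) * m := by gcongr
    _ = μ A := by
      rw [hA, ← add_mul, ← ENNReal.ofReal_add hα (by linarith), add_sub_cancel]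

lemma exists_measure_closedBall_le {X : Type*} [PseudoMetricSpace X] [MeasurableSpace X]
    (μ : Measure X) [μ.OuterRegular] [NullSingletonClass μ] (x : X) {c : ℝ≥0∞} (hc : 0 < c) :
    ∃ r > 0, μ (closedBall x r) ≤ c := by
  obtain ⟨U, hxU, hU, hUc⟩ := ({x} : Set X).exists_isOpen_lt_of_lt (μ := μ) c (by simpa using hc)
  obtain ⟨r, hr, hrU⟩ := nhds_basis_closedBall.mem_iff.1 (hU.mem_nhds (hxU rfl))
  exact ⟨r, hr, (measure_mono hrU).trans hUc.le⟩

end ExactMeasure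

section BdryMeasure

lemma euclideanHausdorffMeasure_image_le {X Y : Type*} [EMetricSpace X]
    [EMetricSpace Y] [MeasurableSpace X] [BorelSpace X] [MeasurableSpace Y] [BorelSpace Y]
    {f : X → Y} (hf : LipschitzWith 1 f) (d : ℕ) (A : Set X) : μHE[d] (f '' A) ≤ μHE[d] A := by
  simp only [Measure.euclideanHausdorffMeasure_def, Measure.smul_apply, ENNReal.smul_def,
    smul_eq_mul]
  gcongr
  simpa using hf.hausdorffMeasure_image_le d.cast_nonneg A

variable {n : ℕ} {Ω : Set (EuclideanSpace ℝ (Fin (n + 1)))}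

lemma nullSingletonClass_bdryMeasure (hn : 1 ≤ n) : NullSingletonClass (bdryMeasure Ω) := by
  have := Measure.nullSingletonClass_hausdorff (X := EuclideanSpace ℝ (Fin (n + 1)))
    (d := (n : ℕ)) (by exact_mod_cast hn)
  have : NullSingletonClass (μHE[n + 1 - 1] : Measure (EuclideanSpace ℝ (Fin (n + 1)))) :=
    ⟨fun x => by rw [Nat.add_sub_cancel, Measure.euclideanHausdorffMeasure_def,
      Measure.smul_apply, measure_singleton, smul_zero]⟩
  unfold bdryMeasure
  infer_instance

lemma ball_dropCoord_subset_image (i : Fin (n + 1)) (x : EuclideanSpace ℝ (Fin (n + 1))) (r : ℝ) :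
    ball (dropCoord i x) r ⊆ dropCoord i '' ball x r := by
  intro y hy
  have hdrop : dropCoord i (insertCoord i (x i) y) = y := by ext j; simp [insertCoord]
  refine ⟨insertCoord i (x i) y, ?_, hdrop⟩
  have hnorm := norm_sq_eq_dropCoord i (insertCoord i (x i) y - x)
  have hcoord : (insertCoord i (x i) y - x) i = 0 := by simp [insertCoord]
  rw [hcoord, map_sub, hdrop, zero_pow two_ne_zero, zero_add,
    sq_eq_sq₀ (norm_nonneg _) (norm_nonneg _)] at hnorm
  rwa [mem_ball_iff_norm, hnorm, ← mem_ball_iff_norm]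

lemma dropCoord_image_subset_image_frontier (hΩb : IsBounded Ω) (i : Fin (n + 1)) :
    dropCoord i '' Ω ⊆ dropCoord i '' frontier Ω := by
  rintro _ ⟨x, hx, rfl⟩
  let line : ℝ → EuclideanSpace ℝ (Fin (n + 1)) := fun s => x + s • EuclideanSpace.single i 1
  have hline : Continuous line := by fun_prop
  have hdist : ∀ s t, dist (line s) (line t) = dist s t := fun s t => by
    simp [line, dist_eq_norm, ← sub_smul, norm_smul]
  have hbdd : IsBounded (line ⁻¹' Ω) := by
    obtain ⟨R, hR⟩ := Metric.isBounded_iff.1 hΩb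
    exact Metric.isBounded_iff.2 ⟨R, fun s hs t ht => hdist s t ▸ hR hs ht⟩
  have hne : (frontier (line ⁻¹' Ω)).Nonempty := nonempty_frontier_iff.2
    ⟨⟨0, by simpa [line] using hx⟩, fun h => NormedSpace.unbounded_univ ℝ ℝ (h ▸ hbdd)⟩
  obtain ⟨s, hs⟩ := hne
  refine ⟨line s, hline.frontier_preimage_subset _ hs, ?_⟩
  ext j
  simp [line]

lemma bdryMeasure_frontier_pos (hΩo : IsOpen Ω) (hΩb : IsBounded Ω) (hΩn : Ω.Nonempty) :
    0 < bdryMeasure Ω (frontier Ω) := by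
  obtain ⟨x, hx⟩ := hΩn
  obtain ⟨r, hr, hrΩ⟩ := Metric.isOpen_iff.1 hΩo x hx
  calc 0 < volume (ball (dropCoord 0 x) r) := measure_ball_pos volume _ hr
    _ ≤ volume (dropCoord 0 '' frontier Ω) := measure_mono <|
        (ball_dropCoord_subset_image 0 x r).trans <|
          (image_mono hrΩ).trans (dropCoord_image_subset_image_frontier hΩb 0)
    _ = μHE[n] (dropCoord 0 '' frontier Ω) := by
        rw [EuclideanSpace.euclideanHausdorffMeasure_eq_volume]
    _ ≤ μHE[n] (frontier Ω) :=
        euclideanHausdorffMeasure_image_le (lipschitzWith_dropCoord 0) n _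
    _ = bdryMeasure Ω (frontier Ω) := by
        rw [bdryMeasure, Measure.restrict_apply_self, Nat.add_sub_cancel]

end BdryMeasure

section Energy

variable {N : ℕ} {Ω Γ : Set (EuclideanSpace ℝ (Fin N))} {p q : ℝ}
  {u : EuclideanSpace ℝ (Fin N) → ℝ} {g : EuclideanSpace ℝ (Fin N) → EuclideanSpace ℝ (Fin N)}
  {τ : EuclideanSpace ℝ (Fin N) → ℝ}

lemma lintegral_energy_eq (u : EuclideanSpace ℝ (Fin N) → ℝ) (hp : 0 < p)
    (hg : AEStronglyMeasurable g (volume.restrict Ω)) :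
    ∫⁻ x in Ω, (‖g x‖ₑ ^ p + ‖u x‖ₑ ^ p) =
      eLpNorm g (ENNReal.ofReal p) (volume.restrict Ω) ^ p +
        eLpNorm u (ENNReal.ofReal p) (volume.restrict Ω) ^ p := by
  rw [lintegral_add_left' (hg.enorm.pow_const _), lintegral_enorm_rpow_eq hp,
    lintegral_enorm_rpow_eq hp]

lemma HasTrace.energy_ne_top (h : HasTrace Ω p u g τ) (hp : 0 < p) :
    ∫⁻ x in Ω, (‖g x‖ₑ ^ p + ‖u x‖ₑ ^ p) ≠ ⊤ := by
  rw [lintegral_energy_eq u hp h.memLp_grad.1]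
  exact ENNReal.add_ne_top.2 ⟨ENNReal.rpow_ne_top_of_nonneg hp.le h.memLp_grad.2.ne,
    ENNReal.rpow_ne_top_of_nonneg hp.le h.memLp.2.ne⟩

lemma HasTrace.rayleighQuot_lt_top (h : HasTrace Ω p u g τ) (hp : 0 < p) (hq : 0 < q)
    (hτ : ¬ τ =ᵐ[bdryMeasure Ω] 0) : rayleighQuot Ω p q u g τ < ⊤ := by
  refine ENNReal.div_lt_top (h.energy_ne_top hp) fun h0 => hτ ?_
  rwa [ENNReal.rpow_eq_zero_iff_of_pos (div_pos hp hq), lintegral_enorm_rpow_eq hq,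
    ENNReal.rpow_eq_zero_iff_of_pos hq, eLpNorm_eq_zero_iff h.isTrace.1.1 (by simpa using hq)]
    at h0

lemma MemAdmissible.hasTrace (h : MemAdmissible Ω p Γ u g τ) : HasTrace Ω p u g τ :=
  ⟨h.memW1p.memLp, h.memW1p.memLp_grad, h.isTrace⟩

lemma MemW1p.memW1p0_of_energy_eq_zero (h : MemW1p Ω p u g) (hp : 0 < p)
    (h0 : ∫⁻ x in Ω, (‖g x‖ₑ ^ p + ‖u x‖ₑ ^ p) = 0) : MemW1p0 Ω p u g := by
  rw [lintegral_energy_eq u hp h.memLp_grad.1, add_eq_zero, ENNReal.rpow_eq_zero_iff_of_pos hp,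
    ENNReal.rpow_eq_zero_iff_of_pos hp, ← eLpNorm_neg, ← eLpNorm_neg (f := u)] at h0
  have hgrad : gradient (fun _ : EuclideanSpace ℝ (Fin N) => (0 : ℝ)) = 0 := by
    ext
    simp [gradient]
  refine ⟨h, fun _ _ => 0, fun _ => ⟨contDiff_const, HasCompactSupport.zero, by simp⟩, ?_, ?_⟩
  · simp_rw [zero_sub]
    exact tendsto_const_nhds.congr fun _ => h0.2.symm
  · simp_rw [hgrad, Pi.zero_apply, zero_sub]
    exact tendsto_const_nhds.congr fun _ => h0.1.symm

lemma MemAdmissible.energy_ne_zero (h : MemAdmissible Ω p Γ u g τ) (hp : 0 < p) :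
    ∫⁻ x in Ω, (‖g x‖ₑ ^ p + ‖u x‖ₑ ^ p) ≠ 0 := fun h0 =>
  h.notMemW1p0 (h.memW1p.memW1p0_of_energy_eq_zero hp h0)

end Energy

section Competitors

lemma IsCutoff.hasTrace {N : ℕ} {Ω : Set (EuclideanSpace ℝ (Fin N))}
    [IsFiniteMeasure (volume.restrict Ω)] [IsFiniteMeasure (bdryMeasure Ω)]
    {x : EuclideanSpace ℝ (Fin N)} {r : ℝ} {ζ : EuclideanSpace ℝ (Fin N) → ℝ} {Z : ℝ≥0}
    (h : IsCutoff x r ζ Z) (p : ℝ) : HasTrace Ω p ζ (gradient ζ) ζ := by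
  have hζ := h.contDiff.continuous
  refine ⟨.of_bound hζ.aestronglyMeasurable 1 (.of_forall h.abs_le_one),
    .of_bound (continuous_gradient h.contDiff (by simp)).aestronglyMeasurable Z
      (.of_forall fun y => (norm_gradient ζ y).trans_le (h.norm_fderiv_le y)),
    .of_bound hζ.aestronglyMeasurable 1 (.of_forall h.abs_le_one), fun _ => ζ,
    fun _ => h.contDiff, ⟨?_, ?_⟩, ?_⟩
  all_goals simp

variable {n : ℕ} {Ω Γ : Set (EuclideanSpace ℝ (Fin (n + 1)))} {p q α : ℝ}
  {u : EuclideanSpace ℝ (Fin (n + 1)) → ℝ}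
  {g : EuclideanSpace ℝ (Fin (n + 1)) → EuclideanSpace ℝ (Fin (n + 1))}
  {τ : EuclideanSpace ℝ (Fin (n + 1)) → ℝ}

lemma HasTrace.optTraceConst_le (h : HasTrace Ω p u g τ) (hn : 1 ≤ n) (hΩo : IsOpen Ω)
    (hΩb : IsBounded Ω) (hΩc : IsConnected Ω) (hΩ : HasC1Boundary Ω) (hp : 1 < p)
    (hΓ : Γ ⊆ frontier Ω) (hΓm : NullMeasurableSet Γ (bdryMeasure Ω))
    (hα : ENNReal.ofReal α * bdryMeasure Ω (frontier Ω) ≤ bdryMeasure Ω Γ)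
    (hτΓ : ∀ᵐ x ∂(bdryMeasure Ω), x ∈ Γ → τ x = 0) (hτ : ¬ τ =ᵐ[bdryMeasure Ω] 0) :
    optTraceConst Ω p q α ≤ rayleighQuot Ω p q u g τ := by
  have := isFiniteMeasure_bdryMeasure hΩo hΩb hΩ
  have : IsFiniteMeasure (volume.restrict Ω) := isFiniteMeasure_restrict.2 hΩb.measure_lt_top.ne
  have := nullSingletonClass_bdryMeasure (Ω := Ω) hn
  obtain ⟨B, hBΓ, hBm, hB⟩ := exists_measurableSet_subset_measure_eq _ hΓm hα
  refine sInf_le_of_le ⟨B, hBΓ.trans hΓ, hBm.nullMeasurableSet, hB, rfl⟩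
    (sInf_le ⟨u, g, τ, ⟨h.memW1p hp.le, fun h0 => ?_, h.isTrace, ?_⟩, rfl⟩)
  · exact hτ (h.ae_eq_zero_of_memW1p0 h0 hn hΩo hΩb hΩc hΩ hp)
  · exact hτΓ.mono fun x hx hxB => hx (hBΓ hxB)

lemma optTraceConst_lt_top (hn : 1 ≤ n) (hΩo : IsOpen Ω) (hΩb : IsBounded Ω)
    (hΩc : IsConnected Ω) (hΩ : HasC1Boundary Ω) (hp : 1 < p) (hq : 0 < q) (hα0 : 0 ≤ α)
    (hα : α < 1) : optTraceConst Ω p q α < ⊤ := by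
  have := isFiniteMeasure_bdryMeasure hΩo hΩb hΩ
  have : IsFiniteMeasure (volume.restrict Ω) := isFiniteMeasure_restrict.2 hΩb.measure_lt_top.ne
  have := nullSingletonClass_bdryMeasure (Ω := Ω) hn
  have hpos := bdryMeasure_frontier_pos hΩo hΩb hΩc.nonempty
  obtain ⟨x, -, hx⟩ := exists_mem_forall_mem_nhdsWithin_pos_measure hpos.ne'
  obtain ⟨r, hr, hrα⟩ := exists_measure_closedBall_le (bdryMeasure Ω) x
    (ENNReal.mul_pos (ENNReal.ofReal_pos.2 (sub_pos.2 hα)).ne' hpos.ne')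
  obtain ⟨ζ, Z, hζ⟩ := exists_isCutoff x hr
  have hζT : HasTrace Ω p ζ (gradient ζ) ζ := hζ.hasTrace p
  have hζ0 : ¬ ζ =ᵐ[bdryMeasure Ω] 0 := fun h =>
    (hx _ (mem_nhdsWithin_of_mem_nhds (ball_mem_nhds x (half_pos hr)))).ne'
      (measure_mono_null (fun y hy => by simp [hζ.eq_one y hy]) h)
  have hΓ : ENNReal.ofReal α * bdryMeasure Ω (frontier Ω) ≤
      bdryMeasure Ω (frontier Ω \ closedBall x r) :=
    ofReal_mul_le_measure_sdiff hα0 hα.le (by simp) hrα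
  exact (hζT.optTraceConst_le hn hΩo hΩb hΩc hΩ hp sdiff_subset
    (isClosed_frontier.measurableSet.diff isClosed_closedBall.measurableSet).nullMeasurableSet hΓ
    (.of_forall fun y hy => hζ.eq_zero y fun h => hy.2 (ball_subset_closedBall h)) hζ0).trans_lt
    (hζT.rayleighQuot_lt_top (by linarith) hq hζ0)

end Competitors

section SmoothAbs

/-- A smooth approximation of the absolute value that vanishes at `0`. -/
noncomputable def smoothAbs (δ s : ℝ) : ℝ := √(s ^ 2 + δ ^ 2) - δ

variable {δ : ℝ}

lemma contDiff_smoothAbs (hδ : 0 < δ) : ContDiff ℝ ∞ (smoothAbs δ) := by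
  unfold smoothAbs
  exact (ContDiff.sqrt (by fun_prop) fun s => by positivity).sub contDiff_const

lemma lipschitzWith_smoothAbs (hδ : 0 < δ) : LipschitzWith 1 (smoothAbs δ) := by
  refine lipschitzWith_of_nnnorm_deriv_le ((contDiff_smoothAbs hδ).differentiable (by simp))
    fun s => ?_
  have hsq : HasDerivAt (fun s : ℝ => s ^ 2 + δ ^ 2) (2 * s) s := by
    simpa using (hasDerivAt_pow 2 s).add_const (δ ^ 2)
  have hderiv : deriv (smoothAbs δ) s = 2 * s / (2 * √(s ^ 2 + δ ^ 2)) :=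
    ((hsq.sqrt (by positivity)).sub_const δ).deriv
  rw [← NNReal.coe_le_coe, coe_nnnorm, NNReal.coe_one, Real.norm_eq_abs, hderiv,
    mul_div_mul_left _ _ two_ne_zero, abs_div, abs_of_nonneg (Real.sqrt_nonneg _)]
  refine div_le_one_of_le₀ (Real.le_sqrt_of_sq_le ?_) (Real.sqrt_nonneg _)
  rw [sq_abs]
  nlinarith

lemma smoothAbs_nonneg (s : ℝ) : 0 ≤ smoothAbs δ s :=
  sub_nonneg.2 (Real.le_sqrt_of_sq_le (by nlinarith))

lemma smoothAbs_zero (hδ : 0 ≤ δ) : smoothAbs δ 0 = 0 := by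
  simp [smoothAbs, Real.sqrt_sq hδ]

lemma enorm_smoothAbs_le (hδ : 0 < δ) (s : ℝ) : ‖smoothAbs δ s‖ₑ ≤ ‖s‖ₑ := by
  simpa [smoothAbs_zero hδ.le, enorm_le_iff_norm_le] using
    (lipschitzWith_smoothAbs hδ).norm_sub_le s 0

lemma tendsto_smoothAbs (s : ℝ) : Tendsto (fun δ => smoothAbs δ s) (𝓝 0) (𝓝 |s|) := by
  have : Continuous fun δ => smoothAbs δ s := by unfold smoothAbs; fun_prop
  simpa [smoothAbs, Real.sqrt_sq_eq_abs] using this.tendsto 0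

lemma tendsto_lintegral_smoothAbs {X : Type*} [MeasurableSpace X] {m : Measure X} {f : X → ℝ}
    {q : ℝ} (hf : AEStronglyMeasurable f m) (hq : 0 ≤ q) (hfq : ∫⁻ x, ‖f x‖ₑ ^ q ∂m ≠ ⊤) :
    Tendsto (fun δ => ∫⁻ x, ‖smoothAbs δ (f x)‖ₑ ^ q ∂m) (𝓝[>] 0)
      (𝓝 (∫⁻ x, ‖f x‖ₑ ^ q ∂m)) := by
  refine tendsto_lintegral_filter_of_dominated_convergence' (fun x => ‖f x‖ₑ ^ q) ?_ ?_ hfq ?_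
  · filter_upwards [self_mem_nhdsWithin] with δ hδ
    exact ((contDiff_smoothAbs hδ).continuous.comp_aestronglyMeasurable hf).enorm.pow_const _
  · filter_upwards [self_mem_nhdsWithin] with δ hδ
    exact .of_forall fun x => ENNReal.rpow_le_rpow (enorm_smoothAbs_le hδ _) hq
  · filter_upwards with x
    have h := ((tendsto_smoothAbs (f x)).mono_left (nhdsWithin_le_nhds (s := Ioi 0))).enorm
    rw [Real.enorm_abs] at h
    exact h.ennrpow_const q

end SmoothAbs

section CompOfNonneg

/-- A smooth function that is the identity on `[0, ∞)` and takes its values in `(-c, ∞)`; it turns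
functions that are smooth on `(-c, ∞)` into functions smooth on the line. -/
noncomputable def truncNeg (c s : ℝ) : ℝ := s * Real.smoothTransition (1 + s / c)

variable {c s : ℝ}

lemma truncNeg_of_nonneg (hc : 0 < c) (hs : 0 ≤ s) : truncNeg c s = s := by
  rw [truncNeg, Real.smoothTransition.one_of_one_le (by simpa using div_nonneg hs hc.le), mul_one]

lemma truncNeg_of_le_neg (hc : 0 < c) (hs : s ≤ -c) : truncNeg c s = 0 := by
  rw [truncNeg, Real.smoothTransition.zero_of_nonpos, mul_zero]
  have := (div_le_iff₀ hc).2 (by linarith : s ≤ -1 * c)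
  linarith

lemma neg_lt_truncNeg (hc : 0 < c) (s : ℝ) : -c < truncNeg c s := by
  rcases le_or_gt 0 s with hs | hs
  · rw [truncNeg_of_nonneg hc hs]
    linarith
  rcases le_or_gt s (-c) with hsc | hsc
  · rw [truncNeg_of_le_neg hc hsc]
    linarith
  · calc -c < s := hsc
      _ ≤ truncNeg c s := by
        rw [truncNeg]
        nlinarith [Real.smoothTransition.le_one (1 + s / c)]

lemma contDiff_truncNeg (c : ℝ) : ContDiff ℝ ∞ (truncNeg c) :=
  contDiff_id.mul (Real.smoothTransition.contDiff.comp (by fun_prop))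

lemma exists_lipschitzWith_truncNeg (hc : 0 < c) : ∃ K, LipschitzWith K (truncNeg c) := by
  have hcont : Continuous (deriv (truncNeg c)) := (contDiff_truncNeg c).continuous_deriv (by simp)
  obtain ⟨L, hL⟩ := isCompact_Icc.exists_bound_of_continuousOn (s := Icc (-c) 0) hcont.continuousOn
  refine ⟨max L.toNNReal 1, lipschitzWith_of_nnnorm_deriv_le
    ((contDiff_truncNeg c).differentiable (by simp)) fun s => ?_⟩
  rcases lt_or_ge s (-c) with hs | hs
  · have : truncNeg c =ᶠ[𝓝 s] fun _ => 0 := by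
      filter_upwards [Iio_mem_nhds hs] with y hy using truncNeg_of_le_neg hc hy.le
    simp [this.deriv_eq]
  rcases lt_or_ge 0 s with hs0 | hs0
  · have : truncNeg c =ᶠ[𝓝 s] id := by
      filter_upwards [Ioi_mem_nhds hs0] with y hy using truncNeg_of_nonneg hc hy.le
    simp [this.deriv_eq]
  · exact le_max_of_le_left (by simpa [← norm_toNNReal] using Real.toNNReal_mono (hL s ⟨hs, hs0⟩))

lemma deriv_eq_of_eqOn_Ici {f f' : ℝ → ℝ} (hf : DifferentiableAt ℝ f s)
    (hf' : DifferentiableAt ℝ f' s) {a : ℝ} (h : EqOn f f' (Ici a)) (hs : a ≤ s) :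
    deriv f s = deriv f' s := by
  have hu : UniqueDiffWithinAt ℝ (Ici a) s := uniqueDiffOn_Ici a s hs
  rw [← hf.derivWithin hu, ← hf'.derivWithin hu, derivWithin_congr h (h hs)]

lemma HasTrace.comp_of_nonneg {N : ℕ} {Ω : Set (EuclideanSpace ℝ (Fin N))} {p : ℝ}
    {u : EuclideanSpace ℝ (Fin N) → ℝ} {g : EuclideanSpace ℝ (Fin N) → EuclideanSpace ℝ (Fin N)}
    {τ : EuclideanSpace ℝ (Fin N) → ℝ} [IsFiniteMeasure (volume.restrict Ω)]
    [IsFiniteMeasure (bdryMeasure Ω)] (h : HasTrace Ω p u g τ) (hp : 1 ≤ p)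
    (hu : ∀ x, 0 ≤ u x) (hτ : ∀ x, 0 ≤ τ x) {G : ℝ → ℝ} {K : ℝ≥0} (hc : 0 < c)
    (hG : ContDiffOn ℝ ∞ G (Ioi (-c))) (hGK : LipschitzOnWith K G (Ioi (-c))) :
    HasTrace Ω p (fun x => G (u x)) (fun x => deriv G (u x) • g x) (fun x => G (τ x)) := by
  obtain ⟨L, hL⟩ := exists_lipschitzWith_truncNeg hc
  have hmaps : MapsTo (truncNeg c) univ (Ioi (-c)) := fun s _ => neg_lt_truncNeg hc s
  have hsmooth : ContDiff ℝ ∞ fun s => G (truncNeg c s) :=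
    contDiffOn_univ.1 (hG.comp (contDiff_truncNeg c).contDiffOn hmaps)
  have hlip : LipschitzWith (K * L) fun s => G (truncNeg c s) :=
    lipschitzOnWith_univ.1 (hGK.comp hL.lipschitzOnWith hmaps)
  have heq : EqOn (fun s => G (truncNeg c s)) G (Ici 0) := fun s hs => by
    simp only [truncNeg_of_nonneg hc hs]
  have hderiv : ∀ x, deriv (fun s => G (truncNeg c s)) (u x) = deriv G (u x) := fun x =>
    deriv_eq_of_eqOn_Ici (hsmooth.differentiable (by simp) _)
      ((hG.contDiffAt (Ioi_mem_nhds (by linarith [hu x]))).differentiableAt (by simp)) heq (hu x)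
  simpa only [hderiv, truncNeg_of_nonneg hc (hu _), truncNeg_of_nonneg hc (hτ _)] using
    h.comp hp hsmooth hlip

end CompOfNonneg

section Normalization

lemma lintegral_rpow_le_measure_univ_add {X : Type*} [MeasurableSpace X] (m : Measure X)
    (f : X → ℝ≥0∞) {q s : ℝ} (hq : 0 ≤ q) (hqs : q ≤ s) :
    ∫⁻ x, f x ^ q ∂m ≤ m univ + ∫⁻ x, f x ^ s ∂m := by
  rw [← lintegral_one, ← lintegral_add_left measurable_const]
  refine lintegral_mono fun x => ?_
  rcases le_total (f x) 1 with hx | hx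
  · exact (ENNReal.rpow_le_one hx hq).trans le_self_add
  · exact (ENNReal.rpow_le_rpow_of_exponent_le hx hqs).trans le_add_self

lemma lintegral_enorm_smul_rpow {X E : Type*} [MeasurableSpace X] (m : Measure X)
    [NormedAddCommGroup E] [NormedSpace ℝ E] (f : X → E) (c : ℝ) {p : ℝ} (hp : 0 ≤ p) :
    ∫⁻ x, ‖c • f x‖ₑ ^ p ∂m = ‖c‖ₑ ^ p * ∫⁻ x, ‖f x‖ₑ ^ p ∂m := by
  simp_rw [enorm_smul, ENNReal.mul_rpow_of_nonneg _ _ hp]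
  exact lintegral_const_mul' _ _ (ENNReal.rpow_ne_top_of_nonneg hp enorm_ne_top)

lemma exists_energy_smul_eq_rayleighQuot {N : ℕ} {Ω : Set (EuclideanSpace ℝ (Fin N))} {p q : ℝ}
    (hp : 0 ≤ p) (hq : 0 < q) (u : EuclideanSpace ℝ (Fin N) → ℝ)
    (g : EuclideanSpace ℝ (Fin N) → EuclideanSpace ℝ (Fin N)) {τ : EuclideanSpace ℝ (Fin N) → ℝ}
    (h0 : ∫⁻ x, ‖τ x‖ₑ ^ q ∂(bdryMeasure Ω) ≠ 0) (htop : ∫⁻ x, ‖τ x‖ₑ ^ q ∂(bdryMeasure Ω) ≠ ⊤) :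
    ∃ c : ℝ, ∫⁻ x, ‖c • τ x‖ₑ ^ q ∂(bdryMeasure Ω) = 1 ∧
      ∫⁻ x in Ω, (‖c • g x‖ₑ ^ p + ‖c • u x‖ₑ ^ p) = rayleighQuot Ω p q u g τ := by
  set T := ∫⁻ x, ‖τ x‖ₑ ^ q ∂(bdryMeasure Ω) with hT
  have hTr : 0 < T.toReal := ENNReal.toReal_pos h0 htop
  have hc : ‖T.toReal ^ (-(1 / q))‖ₑ = T ^ (-(1 / q)) := by
    rw [Real.enorm_eq_ofReal (by positivity), ← ENNReal.ofReal_rpow_of_pos hTr,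
      ENNReal.ofReal_toReal htop]
  refine ⟨T.toReal ^ (-(1 / q)), ?_, ?_⟩
  · rw [lintegral_enorm_smul_rpow _ _ _ hq.le, hc, ← ENNReal.rpow_mul, ← hT,
      show -(1 / q) * q = -1 by field_simp, ENNReal.rpow_neg_one, ENNReal.inv_mul_cancel h0 htop]
  · simp_rw [enorm_smul, ENNReal.mul_rpow_of_nonneg _ _ hp, ← mul_add]
    rw [lintegral_const_mul' _ _ (ENNReal.rpow_ne_top_of_nonneg hp enorm_ne_top), hc,
      ← ENNReal.rpow_mul, rayleighQuot, ENNReal.div_eq_inv_mul, ← ENNReal.rpow_neg]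
    congr 2
    field_simp

end Normalization

section AlmostMinimizer

/-- `u` is nonnegative, its trace `τ` vanishes on a set `Γ` of relative measure `β`, and `u`
minimizes the quotient that defines `𝒮(α)` up to the error `κ`; it is normalized by
`1 / 2 ≤ ∫ |τ|^q`. -/
structure IsAlmostMinimizer {N : ℕ} (Ω : Set (EuclideanSpace ℝ (Fin N))) (p q α β : ℝ) (κ : ℝ≥0∞)
    (Γ : Set (EuclideanSpace ℝ (Fin N))) (u : EuclideanSpace ℝ (Fin N) → ℝ)
    (g : EuclideanSpace ℝ (Fin N) → EuclideanSpace ℝ (Fin N))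
    (τ : EuclideanSpace ℝ (Fin N) → ℝ) : Prop where
  hasTrace : HasTrace Ω p u g τ
  nonneg : ∀ x, 0 ≤ u x
  trace_nonneg : ∀ x, 0 ≤ τ x
  subset : Γ ⊆ frontier Ω
  nullMeasurableSet : NullMeasurableSet Γ (bdryMeasure Ω)
  measure_eq : bdryMeasure Ω Γ = ENNReal.ofReal β * bdryMeasure Ω (frontier Ω)
  trace_eq_zero : ∀ᵐ x ∂(bdryMeasure Ω), x ∈ Γ → τ x = 0
  energy_le : ∫⁻ x in Ω, (‖g x‖ₑ ^ p + ‖u x‖ₑ ^ p) ≤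
    optTraceConst Ω p q α * (∫⁻ x, ‖τ x‖ₑ ^ q ∂(bdryMeasure Ω)) ^ (p / q) + κ
  energy_le_add_one : ∫⁻ x in Ω, (‖g x‖ₑ ^ p + ‖u x‖ₑ ^ p) ≤ optTraceConst Ω p q α + 1
  half_le : 2⁻¹ ≤ ∫⁻ x, ‖τ x‖ₑ ^ q ∂(bdryMeasure Ω)

variable {n : ℕ} {Ω : Set (EuclideanSpace ℝ (Fin (n + 1)))} {p q : ℝ}

lemma HasTrace.lintegral_trace_rpow_ne_top {u : EuclideanSpace ℝ (Fin (n + 1)) → ℝ}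
    {g : EuclideanSpace ℝ (Fin (n + 1)) → EuclideanSpace ℝ (Fin (n + 1))}
    {τ : EuclideanSpace ℝ (Fin (n + 1)) → ℝ} (h : HasTrace Ω p u g τ) (hn : 1 ≤ n)
    (hΩo : IsOpen Ω) (hΩb : IsBounded Ω) (hΩc : IsConnected Ω) (hΩ : HasC1Boundary Ω) (hp : 1 < p)
    (hq : 0 < q) (hsub : SubcriticalTrace (n + 1) p q) :
    ∫⁻ x, ‖τ x‖ₑ ^ q ∂(bdryMeasure Ω) ≠ ⊤ := by
  have := isFiniteMeasure_bdryMeasure hΩo hΩb hΩ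
  obtain ⟨s, hs, hqs, hsN⟩ := hsub.exists_exponent (by lia) hp hq
  push_cast at hsN
  obtain ⟨C, hC⟩ := exists_lintegral_trace_le hn hΩo hΩb hΩc hΩ hs hp.le (by linarith)
  have hs_top : ∫⁻ x, ‖τ x‖ₑ ^ s ∂(bdryMeasure Ω) < ⊤ := (hC u g τ h).trans_lt
    (ENNReal.mul_lt_top ENNReal.coe_lt_top
      (ENNReal.rpow_lt_top_of_nonneg (by positivity) (h.energy_ne_top (by linarith))))
  exact ((lintegral_rpow_le_measure_univ_add _ _ hq.le hqs.le).trans_lt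
    (ENNReal.add_lt_top.2 ⟨measure_lt_top _ _, hs_top⟩)).ne

lemma exists_normalized (hn : 1 ≤ n) (hΩo : IsOpen Ω) (hΩb : IsBounded Ω) (hΩc : IsConnected Ω)
    (hΩ : HasC1Boundary Ω) (hp : 1 < p) (hq : 0 < q) (hsub : SubcriticalTrace (n + 1) p q)
    {β : ℝ} {S : ℝ≥0∞} (hβ : optTraceConst Ω p q β < S) :
    ∃ Γ u g τ, Γ ⊆ frontier Ω ∧ NullMeasurableSet Γ (bdryMeasure Ω) ∧
      bdryMeasure Ω Γ = ENNReal.ofReal β * bdryMeasure Ω (frontier Ω) ∧ HasTrace Ω p u g τ ∧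
      (∀ᵐ x ∂(bdryMeasure Ω), x ∈ Γ → τ x = 0) ∧
      ∫⁻ x in Ω, (‖g x‖ₑ ^ p + ‖u x‖ₑ ^ p) ≤ S ∧ ∫⁻ x, ‖τ x‖ₑ ^ q ∂(bdryMeasure Ω) = 1 := by
  have := isFiniteMeasure_bdryMeasure hΩo hΩb hΩ
  have : IsFiniteMeasure (volume.restrict Ω) := isFiniteMeasure_restrict.2 hΩb.measure_lt_top.ne
  have hp0 : 0 < p := by linarith
  obtain ⟨_, ⟨Γ, hΓ, hΓm, hΓβ, rfl⟩, hlt⟩ := sInf_lt_iff.1 hβ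
  obtain ⟨_, ⟨u, g, τ, hadm, rfl⟩, hlt⟩ := sInf_lt_iff.1 hlt
  have htop := hadm.hasTrace.lintegral_trace_rpow_ne_top hn hΩo hΩb hΩc hΩ hp hq hsub
  have h0 : ∫⁻ x, ‖τ x‖ₑ ^ q ∂(bdryMeasure Ω) ≠ 0 := by
    intro h
    rw [rayleighQuot, h, ENNReal.zero_rpow_of_pos (by positivity),
      ENNReal.div_zero (hadm.energy_ne_zero hp0)] at hlt
    exact not_top_lt hlt
  obtain ⟨c, hc1, hcE⟩ := exists_energy_smul_eq_rayleighQuot hp0.le hq u g h0 htop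
  have hcT : HasTrace Ω p (fun x => c • u x) (fun x => c • g x) (fun x => c • τ x) := by
    have hderiv : ∀ s, deriv (fun s => c • s) s = c := fun s => by simp
    simpa only [hderiv] using
      hadm.hasTrace.comp hp.le (F := fun s => c • s) (by fun_prop) (lipschitzWith_smul c)
  refine ⟨Γ, _, _, _, hΓ, hΓm, hΓβ, hcT, ?_, hcE.trans_le hlt.le, hc1⟩
  filter_upwards [hadm.trace_eq_zero] with x hx hxΓ
  rw [hx hxΓ, smul_zero]

lemma exists_isAlmostMinimizer (hn : 1 ≤ n) (hΩo : IsOpen Ω) (hΩb : IsBounded Ω)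
    (hΩc : IsConnected Ω) (hΩ : HasC1Boundary Ω) (hp : 1 < p) (hq : 0 < q)
    (hsub : SubcriticalTrace (n + 1) p q) {α β : ℝ} (hα : optTraceConst Ω p q α < ⊤)
    (hβ : optTraceConst Ω p q β ≤ optTraceConst Ω p q α) {κ : ℝ≥0∞} (hκ : 0 < κ) :
    ∃ Γ u g τ, IsAlmostMinimizer Ω p q α β κ Γ u g τ := by
  have := isFiniteMeasure_bdryMeasure hΩo hΩb hΩ
  have : IsFiniteMeasure (volume.restrict Ω) := isFiniteMeasure_restrict.2 hΩb.measure_lt_top.ne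
  set S := optTraceConst Ω p q α
  obtain ⟨ε, hε0, hε1, hεκ⟩ : ∃ ε : ℝ≥0∞, 0 < ε ∧ ε ≤ 1 ∧ ε + ε ≤ κ :=
    ⟨min (κ / 2) 1, lt_min (ENNReal.half_pos hκ.ne') one_pos, min_le_right _ _,
      (add_le_add (min_le_left _ _) (min_le_left _ _)).trans_eq (ENNReal.add_halves κ)⟩
  have hSε : S < S + ε := ENNReal.lt_add_right hα.ne hε0.ne'
  obtain ⟨Γ, u, g, τ, hΓ, hΓm, hΓβ, hT, hτΓ, hE, hT1⟩ :=
    exists_normalized hn hΩo hΩb hΩc hΩ hp hq hsub (hβ.trans_lt hSε)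
  have hlim : Tendsto (fun δ => ∫⁻ x, ‖smoothAbs δ (τ x)‖ₑ ^ q ∂(bdryMeasure Ω)) (𝓝[>] 0)
      (𝓝 1) := by
    simpa only [hT1] using tendsto_lintegral_smoothAbs hT.isTrace.1.1 hq.le (by simp [hT1])
  have hlimS : Tendsto (fun δ =>
      S * (∫⁻ x, ‖smoothAbs δ (τ x)‖ₑ ^ q ∂(bdryMeasure Ω)) ^ (p / q) + ε) (𝓝[>] 0)
      (𝓝 (S + ε)) := by
    simpa using (ENNReal.Tendsto.const_mul (hlim.ennrpow_const (p / q)) (.inr hα.ne)).add_const ε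
  obtain ⟨δ, ⟨hδS, hδhalf⟩, hδ : 0 < δ⟩ := (((hlimS.eventually (lt_mem_nhds hSε)).and
    (hlim.eventually (lt_mem_nhds ENNReal.one_half_lt_one))).and self_mem_nhdsWithin).exists
  have hδE : ∫⁻ x in Ω, (‖deriv (smoothAbs δ) (u x) • g x‖ₑ ^ p + ‖smoothAbs δ (u x)‖ₑ ^ p) ≤
      S + ε := by
    refine le_trans (lintegral_mono fun x => ?_) hE
    gcongr
    · simpa [enorm_le_iff_norm_le] using norm_smul_le_mul_of_le (v := g x)
        (norm_deriv_le_of_lipschitz (lipschitzWith_smoothAbs hδ) (x₀ := u x)) le_rfl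
    · exact enorm_smoothAbs_le hδ _
  refine ⟨Γ, _, _, _, hT.comp hp.le (contDiff_smoothAbs hδ) (lipschitzWith_smoothAbs hδ),
    fun _ => smoothAbs_nonneg _, fun _ => smoothAbs_nonneg _, hΓ, hΓm, hΓβ, ?_, ?_,
    hδE.trans (by gcongr), hδhalf.le⟩
  · filter_upwards [hτΓ] with x hx hxΓ
    rw [hx hxΓ, smoothAbs_zero hδ.le]
  · refine hδE.trans ((add_le_add_left hδS.le ε).trans ?_)
    rw [add_assoc]
    gcongr

end AlmostMinimizer

section RpowCutoff

variable {E : Type*} [NormedAddCommGroup E] {x : E} {r : ℝ} {ζ : E → ℝ} {Z : ℝ≥0}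

lemma IsCutoff.norm_fderiv_pow_succ [NormedSpace ℝ E] (h : IsCutoff x r ζ Z) (k : ℕ) (y : E) :
    ‖fderiv ℝ (fun y => ζ y ^ (k + 1)) y‖ = (k + 1) * ζ y ^ k * ‖fderiv ℝ ζ y‖ := by
  have hζk := pow_nonneg (h.nonneg y) k
  rw [fderiv_fun_pow (k + 1) (h.contDiff.differentiable (by simp) y), norm_smul,
    nsmul_eq_mul, add_tsub_cancel_right, Real.norm_of_nonneg (by positivity)]
  push_cast
  rfl

lemma IsCutoff.pow_succ [NormedSpace ℝ E] (h : IsCutoff x r ζ Z) (k : ℕ) :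
    IsCutoff x r (fun y => ζ y ^ (k + 1)) ((k + 1) * Z) where
  contDiff := h.contDiff.pow _
  nonneg y := pow_nonneg (h.nonneg y) _
  le_one y := pow_le_one₀ (h.nonneg y) (h.le_one y)
  eq_one y hy := by rw [h.eq_one y hy, one_pow]
  eq_zero y hy := by rw [h.eq_zero y hy, zero_pow k.succ_ne_zero]
  norm_fderiv_le y := by
    rw [h.norm_fderiv_pow_succ k y]
    push_cast
    exact mul_le_mul
      (mul_le_of_le_one_right (by positivity) (pow_le_one₀ (h.nonneg y) (h.le_one y)))
      (h.norm_fderiv_le y) (norm_nonneg _) (by positivity)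

lemma exists_isCutoff_norm_fderiv_rpow_le [InnerProductSpace ℝ E] [FiniteDimensional ℝ E] (x : E)
    (hr : 0 < r) {p : ℝ} (hp : 1 < p) : ∃ (η : E → ℝ) (Z A : ℝ≥0), IsCutoff x r η Z ∧
      ∀ y, ‖fderiv ℝ η y‖ ^ p ≤ A * η y ^ (p - 1) := by
  obtain ⟨ζ, Z, h⟩ := exists_isCutoff x hr
  obtain ⟨k, hk⟩ := exists_nat_ge p
  refine ⟨fun y => ζ y ^ (k + 1), _, ((k + 1) * Z) ^ p, h.pow_succ k, fun y => ?_⟩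
  have hy := h.nonneg y
  have hpow : (ζ y ^ k) ^ p ≤ (ζ y ^ (k + 1)) ^ (p - 1) := by
    rw [← Real.rpow_natCast, ← Real.rpow_natCast, ← Real.rpow_mul hy, ← Real.rpow_mul hy]
    refine Real.rpow_le_rpow_of_exponent_ge' hy (h.le_one y)
      (mul_nonneg (by positivity) (by linarith)) ?_
    push_cast
    linarith
  rw [h.norm_fderiv_pow_succ k y]
  push_cast
  calc ((k + 1) * ζ y ^ k * ‖fderiv ℝ ζ y‖) ^ p ≤ ((k + 1) * ζ y ^ k * Z) ^ p := by
        gcongr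
        exact h.norm_fderiv_le y
    _ = ((k + 1) * Z) ^ p * (ζ y ^ k) ^ p := by
        rw [mul_right_comm, Real.mul_rpow (by positivity) (by positivity)]
    _ ≤ _ := by gcongr

end RpowCutoff

section RpowInequalities

variable {p : ℝ}

lemma convexOn_norm_rpow {V : Type*} [NormedAddCommGroup V] [NormedSpace ℝ V] (hp : 1 ≤ p) :
    ConvexOn ℝ univ fun v : V => ‖v‖ ^ p :=
  ⟨convex_univ, fun a ha b hb _ _ hs ht hst => (Real.rpow_le_rpow (norm_nonneg _)
    (convexOn_univ_norm.2 ha hb hs ht hst) (by linarith)).trans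
      ((convexOn_rpow hp).2 (norm_nonneg a) (norm_nonneg b) hs ht hst)⟩

lemma rpow_le_rpow_add_mul_sub (hp : 1 ≤ p) {a b : ℝ} (ha : 0 ≤ a) (hb : 0 < b) :
    b ^ p ≤ a ^ p + p * (b ^ (p - 1) * (b - a)) := by
  have hab : -1 ≤ a / b - 1 := by linarith [div_nonneg ha hb.le]
  have hbern := one_add_mul_self_le_rpow_one_add hab hp
  rw [add_sub_cancel, Real.div_rpow ha hb.le, le_div_iff₀ (by positivity)] at hbern
  have hbp : b ^ p = b ^ (p - 1) * b := by
    rw [← Real.rpow_add_one hb.ne', sub_add_cancel]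
  have hexpand : (1 + p * (a / b - 1)) * b ^ p = b ^ p - p * (b ^ (p - 1) * (b - a)) := by
    rw [hbp]
    field_simp
    ring
  linarith

lemma enorm_rpow_eq_ofReal {V : Type*} [NormedAddCommGroup V] (hp : 0 ≤ p) (v : V) :
    ‖v‖ₑ ^ p = ENNReal.ofReal (‖v‖ ^ p) := by
  rw [← ofReal_norm, ENNReal.ofReal_rpow_of_nonneg (norm_nonneg _) hp]

end RpowInequalities

section PerturbTerm

/-- The profile `t (s + ε) ^ (1 - p)`. An almost minimizer `u` is compared with
`u + η * perturbTerm p t ε u`, because `-∫ η |∇ log (u + ε)| ^ p` appears in the first variation of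
the energy in the direction `η (u + ε) ^ (1 - p)`. -/
noncomputable def perturbTerm (p t ε s : ℝ) : ℝ := t * (s + ε) ^ (1 - p)

variable {p t ε s : ℝ}

lemma perturbTerm_nonneg (ht : 0 ≤ t) (hs : 0 ≤ s + ε) : 0 ≤ perturbTerm p t ε s :=
  mul_nonneg ht (Real.rpow_nonneg hs _)

lemma hasDerivAt_perturbTerm (p t : ℝ) (hs : 0 < s + ε) :
    HasDerivAt (perturbTerm p t ε) (t * ((1 - p) * (s + ε) ^ (-p))) s := by
  have h : HasDerivAt (perturbTerm p t ε) _ s :=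
    (((hasDerivAt_id s).add_const ε).rpow_const (p := 1 - p) (.inl hs.ne')).const_mul t
  simpa only [id, one_mul, sub_sub_cancel_left] using h

lemma contDiffOn_perturbTerm (p t : ℝ) {c : ℝ} (hc : c < ε) :
    ContDiffOn ℝ ∞ (perturbTerm p t ε) (Ioi (-c)) :=
  contDiffOn_const.mul (ContDiffOn.rpow_const_of_ne (by fun_prop) fun s (hs : -c < s) => by
    linarith)

lemma exists_lipschitzOnWith_perturbTerm (hp : 0 ≤ p) (t : ℝ) {c : ℝ} (hc : c < ε) :
    ∃ K, LipschitzOnWith K (perturbTerm p t ε) (Ioi (-c)) := by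
  refine ⟨‖t‖₊ * (‖1 - p‖₊ * ‖(ε - c) ^ (-p)‖₊),
    (convex_Ioi _).lipschitzOnWith_of_nnnorm_hasDerivWithin_le
      (fun s (hs : -c < s) => (hasDerivAt_perturbTerm p t (by linarith)).hasDerivWithinAt)
      fun s (hs : -c < s) => ?_⟩
  have hs' : 0 ≤ s + ε := by linarith
  rw [nnnorm_mul, nnnorm_mul]
  gcongr
  rw [← NNReal.coe_le_coe, coe_nnnorm, coe_nnnorm, Real.norm_of_nonneg (by positivity),
    Real.norm_of_nonneg (Real.rpow_nonneg (by linarith) _)]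
  exact Real.rpow_le_rpow_of_nonpos (by linarith) (by linarith) (by linarith)

lemma HasTrace.perturb {N : ℕ} {Ω : Set (EuclideanSpace ℝ (Fin N))}
    {u : EuclideanSpace ℝ (Fin N) → ℝ} {g : EuclideanSpace ℝ (Fin N) → EuclideanSpace ℝ (Fin N)}
    {τ : EuclideanSpace ℝ (Fin N) → ℝ} [IsFiniteMeasure (volume.restrict Ω)]
    [IsFiniteMeasure (bdryMeasure Ω)] (h : HasTrace Ω p u g τ) (hp : 1 ≤ p)
    (hu : ∀ y, 0 ≤ u y) (hτ : ∀ y, 0 ≤ τ y) (t : ℝ) (hε : 0 < ε) {x : EuclideanSpace ℝ (Fin N)}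
    {r : ℝ} {η : EuclideanSpace ℝ (Fin N) → ℝ} {Z : ℝ≥0} (hη : IsCutoff x r η Z) :
    HasTrace Ω p (fun y => u y + η y * perturbTerm p t ε (u y))
      (fun y => (1 - t * ((p - 1) * η y * (u y + ε) ^ (-p))) • g y +
        perturbTerm p t ε (u y) • gradient η y)
      (fun y => τ y + η y * perturbTerm p t ε (τ y)) := by
  obtain ⟨K, hK⟩ := exists_lipschitzOnWith_perturbTerm (p := p) (by linarith) t (half_lt_self hε)
  have hG := h.comp_of_nonneg hp hu hτ (half_pos hε)
    (contDiffOn_perturbTerm p t (half_lt_self hε)) hK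
  convert h.add (hG.smooth_mul hp hη.contDiff hη.abs_le_one hη.norm_fderiv_le) hp using 2 with y
  rw [(hasDerivAt_perturbTerm p t (add_pos_of_nonneg_of_pos (hu y) hε)).deriv]
  module

end PerturbTerm

section PerturbEstimate

variable {p t ε s η : ℝ} {A : ℝ≥0}

lemma norm_perturb_rpow_add_le {V : Type*} [NormedAddCommGroup V] [NormedSpace ℝ V] (hp : 1 < p)
    (ht : 0 < t) (hs : 0 < s + ε) (hη : 0 ≤ η) (htη : t * ((p - 1) * η * (s + ε) ^ (-p)) ≤ 1)
    (v : V) {H : V} (hH : ‖H‖ ^ p ≤ A * η ^ (p - 1)) :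
    ‖(1 - t * ((p - 1) * η * (s + ε) ^ (-p))) • v + perturbTerm p t ε s • H‖ ^ p +
      t * ((p - 1) * η * ‖(s + ε)⁻¹ • v‖ ^ p) ≤ ‖v‖ ^ p + t * ((p - 1) ^ (1 - p) * A) := by
  have hp1 : 0 < p - 1 := by linarith
  rw [perturbTerm]
  set y := s + ε
  have hlog : ‖y⁻¹ • v‖ ^ p = y ^ (-p) * ‖v‖ ^ p := by
    rw [norm_smul, Real.norm_of_nonneg (by positivity), Real.mul_rpow (by positivity)
      (norm_nonneg v), Real.inv_rpow hs.le, Real.rpow_neg hs.le]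
  rcases hη.eq_or_lt with rfl | hη
  · rw [Real.zero_rpow hp1.ne', mul_zero] at hH
    have hH0 : H = 0 := by
      by_contra hne
      exact hH.not_gt (Real.rpow_pos_of_pos (norm_pos_iff.2 hne) p)
    simp only [hH0, mul_zero, zero_mul, sub_zero, one_smul, smul_zero, add_zero]
    exact le_add_of_nonneg_right (by positivity)
  -- The new gradient is the convex combination of `v` and `c • H` with weight `θ`.
  set θ := t * ((p - 1) * η * y ^ (-p)) with hθ
  have hθ0 : 0 < θ := by positivity
  set c := y / ((p - 1) * η) with hc
  have hθc : t * y ^ (1 - p) = θ * c := by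
    rw [hθ, hc, sub_eq_add_neg, Real.rpow_add hs, Real.rpow_one]
    field_simp
  have hcH : θ * ‖c • H‖ ^ p ≤ t * ((p - 1) ^ (1 - p) * A) := by
    calc θ * ‖c • H‖ ^ p = θ * c ^ p * ‖H‖ ^ p := by
          rw [norm_smul, Real.norm_of_nonneg (by positivity),
            Real.mul_rpow (by positivity) (norm_nonneg H), ← mul_assoc]
      _ ≤ θ * c ^ p * (A * η ^ (p - 1)) := by gcongr
      _ = t * ((p - 1) ^ (1 - p) * A) := by
          rw [hθ, hc, Real.div_rpow hs.le (by positivity), Real.mul_rpow hp1.le hη.le,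
            Real.rpow_neg hs.le, Real.rpow_sub hη, Real.rpow_sub hp1, Real.rpow_one, Real.rpow_one]
          field_simp
  have hconv := (convexOn_norm_rpow (V := V) hp.le).2 (mem_univ v) (mem_univ (c • H))
    (sub_nonneg.2 htη) hθ0.le (sub_add_cancel 1 θ)
  simp only [smul_smul, smul_eq_mul, ← hθc] at hconv
  rw [hlog, show t * ((p - 1) * η * (y ^ (-p) * ‖v‖ ^ p)) = θ * ‖v‖ ^ p by rw [hθ]; ring]
  linarith

lemma add_perturb_rpow_le (hp : 1 < p) (ht : 0 < t) (hs : 0 ≤ s) (hε : 0 < ε) (hη0 : 0 ≤ η)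
    (hη1 : η ≤ 1) (htε : t ≤ ε ^ p) :
    (s + η * perturbTerm p t ε s) ^ p ≤ s ^ p + t * p := by
  have hy : 0 < s + ε := by positivity
  have hG : 0 ≤ perturbTerm p t ε s := perturbTerm_nonneg ht.le hy.le
  have hηG : η * perturbTerm p t ε s ≤ perturbTerm p t ε s := mul_le_of_le_one_left hG hη1
  have hGε : perturbTerm p t ε s ≤ ε := by
    calc perturbTerm p t ε s ≤ ε ^ p * ε ^ (1 - p) := by
          unfold perturbTerm
          gcongr ?_ * ?_
          exact Real.rpow_le_rpow_of_nonpos hε (by linarith) (by linarith)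
      _ = ε := by rw [← Real.rpow_add hε, add_sub_cancel, Real.rpow_one]
  rcases (show 0 ≤ s + η * perturbTerm p t ε s by positivity).eq_or_lt with h0 | h0
  · rw [← h0, Real.zero_rpow (by linarith)]
    positivity
  calc (s + η * perturbTerm p t ε s) ^ p
      ≤ s ^ p + p * ((s + η * perturbTerm p t ε s) ^ (p - 1) * (η * perturbTerm p t ε s)) := by
        simpa only [add_sub_cancel_left] using rpow_le_rpow_add_mul_sub hp.le hs h0
    _ ≤ s ^ p + p * ((s + ε) ^ (p - 1) * perturbTerm p t ε s) := by
        gcongr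
        exact hηG.trans hGε
    _ = s ^ p + t * p := by
        have hcancel : (s + ε) ^ (p - 1) * (s + ε) ^ (1 - p) = 1 := by
          rw [← Real.rpow_add hy, sub_add_sub_cancel', sub_self, Real.rpow_zero]
        rw [perturbTerm, mul_left_comm _ t, hcancel]
        ring

lemma enorm_perturb_rpow_add_le {V : Type*} [NormedAddCommGroup V] [NormedSpace ℝ V] (hp : 1 < p)
    (ht : 0 < t) (hε : 0 < ε) (htε : t * p ≤ ε ^ p) (hs : 0 ≤ s) (hη0 : 0 ≤ η) (hη1 : η ≤ 1)
    (v : V) {H : V} (hH : ‖H‖ ^ p ≤ A * η ^ (p - 1)) :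
    ‖(1 - t * ((p - 1) * η * (s + ε) ^ (-p))) • v + perturbTerm p t ε s • H‖ₑ ^ p +
        ‖s + η * perturbTerm p t ε s‖ₑ ^ p +
        ENNReal.ofReal t * (ENNReal.ofReal ((p - 1) * η) * ‖(s + ε)⁻¹ • v‖ₑ ^ p) ≤
      ‖v‖ₑ ^ p + ‖s‖ₑ ^ p +
        ENNReal.ofReal t * ENNReal.ofReal ((p - 1) ^ (1 - p) * A + p) := by
  have hp0 : 0 ≤ p := by linarith
  have : 0 ≤ p - 1 := by linarith
  have hy : 0 < s + ε := by positivity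
  have hz : 0 ≤ s + η * perturbTerm p t ε s :=
    add_nonneg hs (mul_nonneg hη0 (perturbTerm_nonneg ht.le hy.le))
  have htη : t * ((p - 1) * η * (s + ε) ^ (-p)) ≤ 1 := by
    calc t * ((p - 1) * η * (s + ε) ^ (-p)) ≤ t * (p * 1 * ε ^ (-p)) := by
          gcongr t * (?_ * ?_ * ?_)
          · linarith
          · exact Real.rpow_le_rpow_of_nonpos hε (by linarith) (by linarith)
      _ = t * p * ε ^ (-p) := by ring
      _ ≤ ε ^ p * ε ^ (-p) := by gcongr
      _ = 1 := by rw [← Real.rpow_add hε, add_neg_cancel, Real.rpow_zero]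
  have hgrad := norm_perturb_rpow_add_le hp ht hy hη0 htη v hH
  have hval := add_perturb_rpow_le hp ht hs hε hη0 hη1 (by nlinarith)
  simp only [enorm_rpow_eq_ofReal hp0, Real.norm_of_nonneg hs, Real.norm_of_nonneg hz]
  rw [← ENNReal.ofReal_mul (by positivity), ← ENNReal.ofReal_mul ht.le,
    ← ENNReal.ofReal_mul ht.le, ← ENNReal.ofReal_add (by positivity) (by positivity),
    ← ENNReal.ofReal_add (by positivity) (by positivity),
    ← ENNReal.ofReal_add (by positivity) (by positivity),
    ← ENNReal.ofReal_add (by positivity) (by positivity)]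
  exact ENNReal.ofReal_le_ofReal (by linarith)

lemma lintegral_perturb_add_le {E : Type*} [NormedAddCommGroup E] [InnerProductSpace ℝ E]
    [CompleteSpace E] [MeasurableSpace E] (μ : Measure E) {x : E} {r : ℝ} {η : E → ℝ} {Z : ℝ≥0}
    (hp : 1 < p) (ht : 0 < t) (hε : 0 < ε) (htε : t * p ≤ ε ^ p) {u : E → ℝ} (hu : ∀ y, 0 ≤ u y)
    (g : E → E) (hη : IsCutoff x r η Z) (hA : ∀ y, ‖fderiv ℝ η y‖ ^ p ≤ A * η y ^ (p - 1)) :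
    (∫⁻ y, (‖(1 - t * ((p - 1) * η y * (u y + ε) ^ (-p))) • g y +
          perturbTerm p t ε (u y) • gradient η y‖ₑ ^ p +
          ‖u y + η y * perturbTerm p t ε (u y)‖ₑ ^ p) ∂μ) +
        ENNReal.ofReal t *
          ∫⁻ y, ENNReal.ofReal ((p - 1) * η y) * ‖(u y + ε)⁻¹ • g y‖ₑ ^ p ∂μ ≤
      (∫⁻ y, (‖g y‖ₑ ^ p + ‖u y‖ₑ ^ p) ∂μ) +
        ENNReal.ofReal t * (ENNReal.ofReal ((p - 1) ^ (1 - p) * A + p) * μ univ) := by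
  rw [← lintegral_const_mul' _ _ ENNReal.ofReal_ne_top, ← mul_assoc, ← lintegral_const,
    ← lintegral_add_right _ measurable_const]
  exact (le_lintegral_add _ _).trans (lintegral_mono fun y => enorm_perturb_rpow_add_le hp ht hε
    htε (hu y) (hη.nonneg y) (hη.le_one y) (g y) (by rw [norm_gradient]; exact hA y))

end PerturbEstimate

section Perturbation

variable {n : ℕ} {Ω Γ Γ' : Set (EuclideanSpace ℝ (Fin (n + 1)))} {p q α β : ℝ} {κ : ℝ≥0∞}
  {u u' : EuclideanSpace ℝ (Fin (n + 1)) → ℝ}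
  {g g' : EuclideanSpace ℝ (Fin (n + 1)) → EuclideanSpace ℝ (Fin (n + 1))}
  {τ τ' : EuclideanSpace ℝ (Fin (n + 1)) → ℝ}

lemma IsAlmostMinimizer.energy_le_energy_add (h : IsAlmostMinimizer Ω p q α β κ Γ u g τ)
    (hn : 1 ≤ n) (hΩo : IsOpen Ω) (hΩb : IsBounded Ω) (hΩc : IsConnected Ω)
    (hΩ : HasC1Boundary Ω) (hp : 1 < p) (hq : 0 < q) (h' : HasTrace Ω p u' g' τ')
    (hΓ' : Γ' ⊆ frontier Ω) (hΓ'm : NullMeasurableSet Γ' (bdryMeasure Ω))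
    (hα : ENNReal.ofReal α * bdryMeasure Ω (frontier Ω) ≤ bdryMeasure Ω Γ')
    (hτ'Γ' : ∀ᵐ y ∂(bdryMeasure Ω), y ∈ Γ' → τ' y = 0) (hττ' : ∀ y, ‖τ y‖ₑ ≤ ‖τ' y‖ₑ) :
    ∫⁻ y in Ω, (‖g y‖ₑ ^ p + ‖u y‖ₑ ^ p) ≤ (∫⁻ y in Ω, (‖g' y‖ₑ ^ p + ‖u' y‖ₑ ^ p)) + κ := by
  have hτ' : ¬ τ' =ᵐ[bdryMeasure Ω] 0 := by
    intro h0
    have hzero : ∫⁻ y, ‖τ y‖ₑ ^ q ∂(bdryMeasure Ω) = 0 := by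
      rw [← lintegral_zero (μ := bdryMeasure Ω)]
      refine lintegral_congr_ae ?_
      filter_upwards [h0] with y hy
      have hle := hττ' y
      rw [hy, Pi.zero_apply, enorm_zero, nonpos_iff_eq_zero] at hle
      rw [hle, ENNReal.zero_rpow_of_pos hq]
    simpa [hzero] using h.half_le
  have hmin := ENNReal.mul_le_of_le_div
    (h'.optTraceConst_le (q := q) hn hΩo hΩb hΩc hΩ hp hΓ' hΓ'm hα hτ'Γ' hτ')
  refine h.energy_le.trans (add_le_add_left (le_trans ?_ hmin) κ)
  gcongr with y
  exact hττ' y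

lemma IsAlmostMinimizer.lintegral_cutoff_le {t ε : ℝ}
    (h : IsAlmostMinimizer Ω p q α β (ENNReal.ofReal t) Γ u g τ) (hn : 1 ≤ n) (hΩo : IsOpen Ω)
    (hΩb : IsBounded Ω) (hΩc : IsConnected Ω) (hΩ : HasC1Boundary Ω) (hp : 1 < p) (hq : 0 < q)
    (hα : 0 ≤ α) (hαβ : α ≤ β) (hε : 0 < ε) (ht : 0 < t) (htε : t * p ≤ ε ^ p)
    {x : EuclideanSpace ℝ (Fin (n + 1))} {r : ℝ} {η : EuclideanSpace ℝ (Fin (n + 1)) → ℝ}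
    {Z A : ℝ≥0} (hη : IsCutoff x r η Z) (hA : ∀ y, ‖fderiv ℝ η y‖ ^ p ≤ A * η y ^ (p - 1))
    (hr : bdryMeasure Ω (closedBall x r) ≤
      ENNReal.ofReal (β - α) * bdryMeasure Ω (frontier Ω)) :
    ∫⁻ y in Ω, ENNReal.ofReal ((p - 1) * η y) * ‖(u y + ε)⁻¹ • g y‖ₑ ^ p ≤
      1 + ENNReal.ofReal ((p - 1) ^ (1 - p) * A + p) * volume Ω := by
  have := isFiniteMeasure_bdryMeasure hΩo hΩb hΩ
  have : IsFiniteMeasure (volume.restrict Ω) := isFiniteMeasure_restrict.2 hΩb.measure_lt_top.ne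
  have hfin := h.hasTrace.energy_ne_top (by linarith)
  have hpert := lintegral_perturb_add_le (volume.restrict Ω) hp ht hε htε h.nonneg g hη hA
  have hmin := h.energy_le_energy_add (Γ' := Γ \ closedBall x r) hn hΩo hΩb hΩc hΩ hp hq
    (h.hasTrace.perturb hp.le h.nonneg h.trace_nonneg t hε hη) (sdiff_subset.trans h.subset)
    (h.nullMeasurableSet.diff isClosed_closedBall.measurableSet.nullMeasurableSet)
    (ofReal_mul_le_measure_sdiff hα hαβ h.measure_eq hr) (by
      filter_upwards [h.trace_eq_zero] with y hy hyΓ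
      simp [hy hyΓ.1, hη.eq_zero y fun hyr => hyΓ.2 (ball_subset_closedBall hyr)])
    fun y => by
      have hτy := h.trace_nonneg y
      have hpos := mul_nonneg (hη.nonneg y)
        (perturbTerm_nonneg (p := p) ht.le (add_nonneg hτy hε.le))
      rw [Real.enorm_of_nonneg hτy, Real.enorm_of_nonneg (add_nonneg hτy hpos)]
      exact ENNReal.ofReal_le_ofReal (le_add_of_nonneg_right hpos)
  rw [Measure.restrict_apply_univ] at hpert
  refine (ENNReal.mul_le_mul_iff_right (by simpa using ht) ENNReal.ofReal_ne_top).1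
    ((ENNReal.add_le_add_iff_left hfin).1 ?_)
  refine (add_le_add_left hmin _).trans ?_
  rw [add_right_comm, mul_add, mul_one, add_comm (ENNReal.ofReal t), ← add_assoc]
  exact add_le_add_left hpert _

end Perturbation

section LogGradient

variable {n : ℕ} {Ω : Set (EuclideanSpace ℝ (Fin (n + 1)))} {p q α β : ℝ}

lemma exists_nhds_lintegral_gradient_log_le (hn : 1 ≤ n) (hΩo : IsOpen Ω) (hΩb : IsBounded Ω)
    (hΩc : IsConnected Ω) (hΩ : HasC1Boundary Ω) (hp : 1 < p) (hq : 0 < q) (hα : 0 ≤ α)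
    (hαβ : α < β) (x : EuclideanSpace ℝ (Fin (n + 1))) :
    ∃ V ∈ 𝓝 x, ∃ C : ℝ≥0, ∀ ε > 0, ∀ Γ u g τ,
      IsAlmostMinimizer Ω p q α β (ENNReal.ofReal (ε ^ p / p)) Γ u g τ →
      ∫⁻ y in V ∩ Ω, ‖(u y + ε)⁻¹ • g y‖ₑ ^ p ≤ C := by
  have := isFiniteMeasure_bdryMeasure hΩo hΩb hΩ
  have := nullSingletonClass_bdryMeasure (Ω := Ω) hn
  have hp0 : 0 < p := by linarith
  have hp1 : ENNReal.ofReal (p - 1) ≠ 0 := by simpa using hp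
  have hm : 0 < ENNReal.ofReal (β - α) * bdryMeasure Ω (frontier Ω) :=
    ENNReal.mul_pos (by simpa using hαβ) (bdryMeasure_frontier_pos hΩo hΩb hΩc.nonempty).ne'
  obtain ⟨r, hr0, hr⟩ := exists_measure_closedBall_le (bdryMeasure Ω) x hm
  obtain ⟨η, Z, A, hη, hA⟩ := exists_isCutoff_norm_fderiv_rpow_le x hr0 hp
  have hC : (1 + ENNReal.ofReal ((p - 1) ^ (1 - p) * A + p) * volume Ω) / ENNReal.ofReal (p - 1) ≠
      ⊤ := ENNReal.div_ne_top (ENNReal.add_ne_top.2 ⟨ENNReal.one_ne_top,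
        ENNReal.mul_ne_top ENNReal.ofReal_ne_top hΩb.measure_lt_top.ne⟩) hp1
  refine ⟨ball x (r / 2), ball_mem_nhds x (half_pos hr0), _, fun ε hε Γ u g τ h =>
    le_of_le_of_eq ?_ (ENNReal.coe_toNNReal hC).symm⟩
  rw [ENNReal.le_div_iff_mul_le (.inl hp1) (.inl ENNReal.ofReal_ne_top), mul_comm,
    ← lintegral_const_mul' _ _ ENNReal.ofReal_ne_top]
  refine le_trans ?_ (h.lintegral_cutoff_le hn hΩo hΩb hΩc hΩ hp hq hα hαβ.le hε
    (by positivity) (div_mul_cancel₀ _ hp0.ne').le hη hA hr)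
  refine (setLIntegral_mono' (measurableSet_ball.inter hΩo.measurableSet) fun y hy => ?_).trans
    (lintegral_mono_set inter_subset_right)
  rw [hη.eq_one y hy.1, mul_one]

lemma exists_lintegral_gradient_log_le (hn : 1 ≤ n) (hΩo : IsOpen Ω) (hΩb : IsBounded Ω)
    (hΩc : IsConnected Ω) (hΩ : HasC1Boundary Ω) (hp : 1 < p) (hq : 0 < q) (hα : 0 ≤ α)
    (hαβ : α < β) :
    ∃ C : ℝ≥0, ∀ ε > 0, ∀ Γ u g τ,
      IsAlmostMinimizer Ω p q α β (ENNReal.ofReal (ε ^ p / p)) Γ u g τ →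
      ∫⁻ y in Ω, ‖(u y + ε)⁻¹ • g y‖ₑ ^ p ≤ C := by
  suffices h : ∃ C : ℝ≥0, ∀ ε > 0, ∀ Γ u g τ,
      IsAlmostMinimizer Ω p q α β (ENNReal.ofReal (ε ^ p / p)) Γ u g τ →
      ∫⁻ y in closure Ω ∩ Ω, ‖(u y + ε)⁻¹ • g y‖ₑ ^ p ≤ C by
    simpa only [inter_eq_self_of_subset_right subset_closure] using h
  refine hΩb.isCompact_closure.induction_on
    (p := fun V => ∃ C : ℝ≥0, ∀ ε > 0, ∀ Γ u g τ,
      IsAlmostMinimizer Ω p q α β (ENNReal.ofReal (ε ^ p / p)) Γ u g τ →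
      ∫⁻ y in V ∩ Ω, ‖(u y + ε)⁻¹ • g y‖ₑ ^ p ≤ C)
    ⟨0, fun _ _ _ _ _ _ _ => by simp⟩ ?_ ?_ ?_
  · rintro V W hVW ⟨C, hC⟩
    exact ⟨C, fun ε hε Γ u g τ h =>
      (lintegral_mono_set (inter_subset_inter_left Ω hVW)).trans (hC ε hε Γ u g τ h)⟩
  · rintro V W ⟨C, hC⟩ ⟨D, hD⟩
    refine ⟨C + D, fun ε hε Γ u g τ h => ?_⟩
    rw [union_inter_distrib_right, ENNReal.coe_add]
    exact (lintegral_union_le _ _ _).trans (add_le_add (hC ε hε Γ u g τ h) (hD ε hε Γ u g τ h))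
  · intro x _
    obtain ⟨V, hV, hC⟩ :=
      exists_nhds_lintegral_gradient_log_le hn hΩo hΩb hΩc hΩ hp hq hα hαβ x
    exact ⟨V, mem_nhdsWithin_of_mem_nhds hV, hC⟩

end LogGradient

section LogTrace

lemma hasDerivAt_log_one_add_div {s ε : ℝ} (hε : ε ≠ 0) (hs : s + ε ≠ 0) :
    HasDerivAt (fun s => Real.log (1 + s / ε)) (s + ε)⁻¹ s := by
  have hs' : 1 + s / ε = (s + ε) / ε := by field_simp; ring
  refine ((((hasDerivAt_id s).div_const ε).const_add 1).log ?_).congr_deriv ?_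
  · simpa only [id, hs'] using div_ne_zero hs hε
  · simp only [id, hs']
    field_simp

lemma HasTrace.log_one_add_div {N : ℕ} {Ω : Set (EuclideanSpace ℝ (Fin N))} {p : ℝ}
    {u : EuclideanSpace ℝ (Fin N) → ℝ} {g : EuclideanSpace ℝ (Fin N) → EuclideanSpace ℝ (Fin N)}
    {τ : EuclideanSpace ℝ (Fin N) → ℝ} [IsFiniteMeasure (volume.restrict Ω)]
    [IsFiniteMeasure (bdryMeasure Ω)] (h : HasTrace Ω p u g τ) (hp : 1 ≤ p)
    (hu : ∀ x, 0 ≤ u x) (hτ : ∀ x, 0 ≤ τ x) {ε : ℝ} (hε : 0 < ε) :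
    HasTrace Ω p (fun x => Real.log (1 + u x / ε)) (fun x => (u x + ε)⁻¹ • g x)
      (fun x => Real.log (1 + τ x / ε)) := by
  have hderiv : ∀ s, -(ε / 2) < s →
      HasDerivAt (fun s => Real.log (1 + s / ε)) (s + ε)⁻¹ s := fun s hs =>
    hasDerivAt_log_one_add_div hε.ne' (by linarith)
  have hsmooth : ContDiffOn ℝ ∞ (fun s => Real.log (1 + s / ε)) (Ioi (-(ε / 2))) := by
    refine ContDiffOn.log (by fun_prop) fun s (hs : -(ε / 2) < s) => ?_
    have : 1 + s / ε = (s + ε) / ε := by field_simp; ring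
    exact this ▸ div_ne_zero (by linarith) hε.ne'
  have hlip : LipschitzOnWith ‖(ε / 2)⁻¹‖₊ (fun s => Real.log (1 + s / ε))
      (Ioi (-(ε / 2))) := by
    refine (convex_Ioi _).lipschitzOnWith_of_nnnorm_hasDerivWithin_le
      (fun s hs => (hderiv s hs).hasDerivWithinAt) fun s (hs : -(ε / 2) < s) => ?_
    have hs' : ε / 2 ≤ s + ε := by linarith
    rw [← NNReal.coe_le_coe, coe_nnnorm, coe_nnnorm,
      Real.norm_of_nonneg (inv_nonneg.2 (by linarith)), Real.norm_of_nonneg (by positivity)]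
    gcongr
  have hgrad : ∀ x, deriv (fun s => Real.log (1 + s / ε)) (u x) = (u x + ε)⁻¹ := fun x =>
    (hderiv _ (by linarith [hu x])).deriv
  simpa only [hgrad] using h.comp_of_nonneg hp hu hτ (half_pos hε) hsmooth hlip

variable {n : ℕ} {Ω : Set (EuclideanSpace ℝ (Fin (n + 1)))} {p q α β : ℝ}

lemma exists_lintegral_log_trace_le (hn : 1 ≤ n) (hΩo : IsOpen Ω) (hΩb : IsBounded Ω)
    (hΩc : IsConnected Ω) (hΩ : HasC1Boundary Ω) (hp : 1 < p) (hq : 0 < q) (hα : 0 ≤ α)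
    (hαβ : α < β) :
    ∃ C : ℝ≥0, ∀ ε > 0, ∀ Γ u g τ,
      IsAlmostMinimizer Ω p q α β (ENNReal.ofReal (ε ^ p / p)) Γ u g τ →
      ∫⁻ y, ‖Real.log (1 + τ y / ε)‖ₑ ∂(bdryMeasure Ω) ≤ C := by
  have := isFiniteMeasure_bdryMeasure hΩo hΩb hΩ
  have : IsFiniteMeasure (volume.restrict Ω) := isFiniteMeasure_restrict.2 hΩb.measure_lt_top.ne
  obtain ⟨C₁, h₁⟩ := exists_lintegral_gradient_log_le hn hΩo hΩb hΩc hΩ hp hq hα hαβ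
  obtain ⟨C₂, h₂⟩ := exists_measure_mul_lintegral_trace_le hΩo hΩb hΩc hΩ hp.le
  set m := ENNReal.ofReal β * bdryMeasure Ω (frontier Ω)
  have hm0 : m ≠ 0 := mul_ne_zero (by simpa using hα.trans_lt hαβ)
    (bdryMeasure_frontier_pos hΩo hΩb hΩc.nonempty).ne'
  have hm : m ≠ ⊤ := ENNReal.mul_ne_top ENNReal.ofReal_ne_top (measure_ne_top _ _)
  have hfin : C₂ * (volume Ω + C₁) / m ≠ ⊤ := ENNReal.div_ne_top (ENNReal.mul_ne_top
    ENNReal.coe_ne_top (ENNReal.add_ne_top.2 ⟨hΩb.measure_lt_top.ne, ENNReal.coe_ne_top⟩)) hm0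
  refine ⟨_, fun ε hε Γ u g τ h => le_of_le_of_eq ?_ (ENNReal.coe_toNNReal hfin).symm⟩
  have hpoincare := h₂ _ _ _ Γ (h.hasTrace.log_one_add_div hp.le h.nonneg h.trace_nonneg hε)
    h.nullMeasurableSet (by
      filter_upwards [h.trace_eq_zero] with y hy hyΓ
      simp [hy hyΓ])
  have hL1 : ∫⁻ y in Ω, ‖(u y + ε)⁻¹ • g y‖ₑ ≤ volume Ω + C₁ := by
    have hLp := lintegral_rpow_le_measure_univ_add (volume.restrict Ω)
      (fun y => ‖(u y + ε)⁻¹ • g y‖ₑ) zero_le_one hp.le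
    simp only [ENNReal.rpow_one, Measure.restrict_apply_univ] at hLp
    exact hLp.trans (by gcongr; exact h₁ ε hε Γ u g τ h)
  rw [ENNReal.le_div_iff_mul_le (.inl hm0) (.inl hm), mul_comm]
  rw [h.measure_eq] at hpoincare
  exact hpoincare.trans (by gcongr)

end LogTrace

section LogSmallness

lemma rpow_le_add_log_add_rpow {q s a δ ε R : ℝ} (hq : 0 < q) (hqs : q < s) (ha : 0 ≤ a)
    (hδ : 0 < δ) (hε : 0 < ε) (hR : 0 < R) :
    a ^ q ≤ δ ^ q + R ^ q / Real.log (1 + δ / ε) * Real.log (1 + a / ε) + R ^ (q - s) * a ^ s := by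
  have hlog : 0 < Real.log (1 + δ / ε) := Real.log_pos (lt_add_of_pos_right 1 (by positivity))
  have hloga : 0 ≤ Real.log (1 + a / ε) := Real.log_nonneg (le_add_of_nonneg_right (by positivity))
  have hsmall : 0 ≤ δ ^ q := by positivity
  have hmiddle : 0 ≤ R ^ q / Real.log (1 + δ / ε) * Real.log (1 + a / ε) := by positivity
  have hlarge : 0 ≤ R ^ (q - s) * a ^ s := by positivity
  rcases le_total a δ with haδ | haδ
  · linarith [Real.rpow_le_rpow ha haδ hq.le]
  rcases le_total a R with haR | haR
  · have : R ^ q ≤ R ^ q / Real.log (1 + δ / ε) * Real.log (1 + a / ε) := by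
      rw [div_mul_eq_mul_div, le_div_iff₀ hlog]
      gcongr
    linarith [Real.rpow_le_rpow ha haR hq.le]
  · have : a ^ q ≤ R ^ (q - s) * a ^ s := by
      calc a ^ q = a ^ (q - s) * a ^ s := by
            rw [← Real.rpow_add (hδ.trans_le haδ), sub_add_cancel]
        _ ≤ R ^ (q - s) * a ^ s := by
            gcongr ?_ * _
            exact Real.rpow_le_rpow_of_nonpos hR haR (by linarith)
    linarith

variable {X : Type*} [MeasurableSpace X] {q s : ℝ}

lemma lintegral_rpow_le_add_log_add_rpow (μ : Measure X) {δ ε R : ℝ} (hq : 0 < q) (hqs : q < s)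
    (hδ : 0 < δ) (hε : 0 < ε) (hR : 0 < R) {f : X → ℝ} (hf : AEMeasurable f μ)
    (hf0 : ∀ x, 0 ≤ f x) :
    ∫⁻ x, ‖f x‖ₑ ^ q ∂μ ≤ ENNReal.ofReal (δ ^ q) * μ univ +
      ENNReal.ofReal (R ^ q / Real.log (1 + δ / ε)) * (∫⁻ x, ‖Real.log (1 + f x / ε)‖ₑ ∂μ) +
      ENNReal.ofReal (R ^ (q - s)) * ∫⁻ x, ‖f x‖ₑ ^ s ∂μ := by
  have hlog : 0 ≤ Real.log (1 + δ / ε) := Real.log_nonneg (le_add_of_nonneg_right (by positivity))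
  rw [← lintegral_const_mul' _ _ ENNReal.ofReal_ne_top,
    ← lintegral_const_mul' _ _ ENNReal.ofReal_ne_top, ← lintegral_const,
    ← lintegral_add_left measurable_const,
    ← lintegral_add_right' _ ((hf.enorm.pow_const s).const_mul _)]
  refine lintegral_mono fun x => ?_
  have hx := hf0 x
  have hlogx : 0 ≤ Real.log (1 + f x / ε) :=
    Real.log_nonneg (le_add_of_nonneg_right (by positivity))
  rw [enorm_rpow_eq_ofReal hq.le, enorm_rpow_eq_ofReal (hq.trans hqs).le, Real.norm_of_nonneg hx,
    Real.enorm_of_nonneg hlogx, ← ENNReal.ofReal_mul (by positivity),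
    ← ENNReal.ofReal_mul (by positivity), ← ENNReal.ofReal_add (by positivity) (by positivity),
    ← ENNReal.ofReal_add (by positivity) (by positivity)]
  exact ENNReal.ofReal_le_ofReal (rpow_le_add_log_add_rpow hq hqs hx hδ hε hR)

lemma eventually_ofReal_mul_lt {ι : Type*} {l : Filter ι} {F : ι → ℝ} (hF : Tendsto F l (𝓝 0))
    {m c : ℝ≥0∞} (hm : m ≠ ⊤) (hc : 0 < c) : ∀ᶠ i in l, ENNReal.ofReal (F i) * m < c := by
  have h := ENNReal.Tendsto.mul_const (ENNReal.tendsto_ofReal hF) (.inr hm)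
  rw [ENNReal.ofReal_zero, zero_mul] at h
  exact h.eventually_lt_const hc

lemma tendsto_log_one_add_div {δ : ℝ} (hδ : 0 < δ) :
    Tendsto (fun ε => Real.log (1 + δ / ε)) (𝓝[>] 0) atTop :=
  Real.tendsto_log_atTop.comp
    (tendsto_atTop_add_const_left _ 1 (tendsto_inv_nhdsGT_zero.const_mul_atTop hδ))

lemma exists_lintegral_rpow_lt (μ : Measure X) [IsFiniteMeasure μ] (hq : 0 < q) (hqs : q < s)
    {K C c : ℝ≥0∞} (hK : K ≠ ⊤) (hC : C ≠ ⊤) (hc : 0 < c) :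
    ∃ ε > 0, ∀ f : X → ℝ, AEMeasurable f μ → (∀ x, 0 ≤ f x) → ∫⁻ x, ‖f x‖ₑ ^ s ∂μ ≤ K →
      ∫⁻ x, ‖Real.log (1 + f x / ε)‖ₑ ∂μ ≤ C → ∫⁻ x, ‖f x‖ₑ ^ q ∂μ < c := by
  have hc3 : 0 < c / 3 := ENNReal.div_pos hc.ne' (by norm_num)
  have hδlim : Tendsto (fun δ : ℝ => δ ^ q) (𝓝[>] 0) (𝓝 0) :=
    ((Real.continuous_rpow_const hq.le).tendsto' 0 0 (Real.zero_rpow hq.ne')).mono_left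
      nhdsWithin_le_nhds
  obtain ⟨δ, hδ, hδ0 : 0 < δ⟩ := ((eventually_ofReal_mul_lt hδlim (measure_ne_top μ univ) hc3).and
    self_mem_nhdsWithin).exists
  have hRlim : Tendsto (fun R : ℝ => R ^ (q - s)) atTop (𝓝 0) := by
    simpa only [neg_sub] using tendsto_rpow_neg_atTop (sub_pos.2 hqs)
  obtain ⟨R, hR, hR0⟩ :=
    ((eventually_ofReal_mul_lt hRlim hK hc3).and (eventually_gt_atTop 0)).exists
  obtain ⟨ε, hε, hε0 : 0 < ε⟩ := ((eventually_ofReal_mul_lt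
    ((tendsto_log_one_add_div hδ0).const_div_atTop (R ^ q)) hC hc3).and self_mem_nhdsWithin).exists
  refine ⟨ε, hε0, fun f hf hf0 hfK hfC => ?_⟩
  calc ∫⁻ x, ‖f x‖ₑ ^ q ∂μ ≤ _ :=
        lintegral_rpow_le_add_log_add_rpow μ hq hqs hδ0 hε0 hR0 hf hf0
    _ ≤ ENNReal.ofReal (δ ^ q) * μ univ + ENNReal.ofReal (R ^ q / Real.log (1 + δ / ε)) * C +
        ENNReal.ofReal (R ^ (q - s)) * K := by gcongr
    _ < c / 3 + c / 3 + c / 3 := ENNReal.add_lt_add (ENNReal.add_lt_add hδ hε) hR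
    _ = c := ENNReal.add_thirds c

end LogSmallness

lemma optTraceConst_lt_of_lt {n : ℕ} {Ω : Set (EuclideanSpace ℝ (Fin (n + 1)))} {p q α β : ℝ}
    (hn : 1 ≤ n) (hΩo : IsOpen Ω) (hΩb : IsBounded Ω) (hΩc : IsConnected Ω)
    (hΩ : HasC1Boundary Ω) (hp : 1 < p) (hq : 0 < q) (hsub : SubcriticalTrace (n + 1) p q)
    (hα : 0 ≤ α) (hα1 : α < 1) (hαβ : α < β) :
    optTraceConst Ω p q α < optTraceConst Ω p q β := by
  by_contra! hle
  have := isFiniteMeasure_bdryMeasure hΩo hΩb hΩ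
  have hS := optTraceConst_lt_top hn hΩo hΩb hΩc hΩ hp hq hα hα1
  obtain ⟨s, hs, hqs, hsN⟩ := hsub.exists_exponent (by lia) hp hq
  push_cast at hsN
  obtain ⟨C₁, h₁⟩ := HasTrace.exists_lintegral_trace_le hn hΩo hΩb hΩc hΩ hs hp.le (by linarith)
  obtain ⟨C₂, h₂⟩ := exists_lintegral_log_trace_le hn hΩo hΩb hΩc hΩ hp hq hα hαβ
  have hK : C₁ * (optTraceConst Ω p q α + 1) ^ (s / p) ≠ ⊤ := ENNReal.mul_ne_top
    ENNReal.coe_ne_top (ENNReal.rpow_ne_top_of_nonneg (by positivity)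
      (ENNReal.add_ne_top.2 ⟨hS.ne, ENNReal.one_ne_top⟩))
  obtain ⟨ε, hε, hsmall⟩ := exists_lintegral_rpow_lt (bdryMeasure Ω) hq hqs hK
    (C := C₂) ENNReal.coe_ne_top (ENNReal.inv_pos.2 ENNReal.ofNat_ne_top : (0 : ℝ≥0∞) < 2⁻¹)
  obtain ⟨Γ, u, g, τ, h⟩ := exists_isAlmostMinimizer hn hΩo hΩb hΩc hΩ hp hq hsub hS hle
    (κ := ENNReal.ofReal (ε ^ p / p)) (ENNReal.ofReal_pos.2 (by positivity))
  refine h.half_le.not_gt (hsmall τ h.hasTrace.isTrace.1.1.aemeasurable h.trace_nonneg ?_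
    (h₂ ε hε Γ u g τ h))
  refine (h₁ u g τ h.hasTrace).trans ?_
  gcongr
  exact h.energy_le_add_one

theorem optTraceConst_strictMonoOn_general {N : ℕ} (hN : 2 ≤ N)
    (Ω : Set (EuclideanSpace ℝ (Fin N))) (hΩo : IsOpen Ω) (hΩb : IsBounded Ω)
    (hΩc : IsConnected Ω) (hΩ : HasC1Boundary Ω) (p q : ℝ) (hp : 1 < p) (hq : 0 < q)
    (hsub : SubcriticalTrace N p q) :
    StrictMonoOn (fun α : ℝ => optTraceConst Ω p q α) (Ico 0 1) := by
  obtain ⟨n, rfl⟩ : ∃ n, N = n + 1 := ⟨N - 1, by lia⟩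
  exact fun α hα β _ hαβ =>
    optTraceConst_lt_of_lt (by lia) hΩo hΩb hΩc hΩ hp hq hsub hα.1 hα.2 hαβ

/-- The optimal value `𝒮` is strictly increasing on `(0, 1)`. -/
theorem optTraceConst_strictMonoOn {N : ℕ} (hN : 2 ≤ N) (Ω : Set (EuclideanSpace ℝ (Fin N)))
    (hΩo : IsOpen Ω) (hΩb : IsBounded Ω) (hΩc : IsConnected Ω) (hΩs : HasSmoothBoundary Ω)
    (hΩball : InteriorBallCond Ω)
    (p q : ℝ) (hp : 1 < p) (hq : 1 ≤ q) (hsub : SubcriticalTrace N p q) :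
    StrictMonoOn (fun α : ℝ => optTraceConst Ω p q α) (Ioo 0 1) :=
  (optTraceConst_strictMonoOn_general hN Ω hΩo hΩb hΩc hΩs.hasC1Boundary p q hp
    (zero_lt_one.trans_le hq) hsub).mono Ioo_subset_Ico_self
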